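/- arXiv:1709.05322 — 3 statements merged into one kernel-verified Lean document; each statement's English description precedes it below -/
import Mathlib

section
/- Let T be a contraction on a real Hilbert space H. Then for every x ∈ H, both (1/n)∑_{j=1}^n T^{p_j} x and (1/N)∑_{j=1}^{π(N)} (log p_j) T^{p_j} x converge in norm. -/
open Filter Finset

/-!
By Herglotz's theorem applied to `k ↦ ⟪T ^ |k| x, x⟫`, the vector `x` has a spectral measure `μ` on
the circle with `‖p(T) x‖ ≤ ‖p‖_{L²(μ)}` for every real polynomial `p`. By dominated convergence,
the weighted averages converge in norm as soon as `N⁻¹ ∑_{p ≤ N} (log p) e(pα)` converges for every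
real `α`.

For rational `α` this is the prime number theorem in arithmetic progressions, which follows from the
Wiener–Ikehara theorem and the non-vanishing of Dirichlet `L`-functions on `Re s = 1`.

For irrational `α` the limit is `0`. Write `Λ log = Λ₂ - Λ * Λ` with Selberg's function
`Λ₂ = μ * log²`, whose exponential sums are `o(X log X)`, uniformly over the phases `γ` for which no
small multiple `rγ` is close to an integer. The bilinear sum over `Λ * Λ` is treated by
Cauchy–Schwarz after majorizing `Λ log` by `Λ₂`, which loses no logarithm and leaves sums over `Λ₂`
with the phases `(m - m')α`. Few pairs `(m, m')` of prime powers give an exceptional phase: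
expanding `|∑_{l < L} e(l(m - m')α)|²`, which is large on such pairs, reduces their number to
exponential sums over `Λ₂` with the fixed irrational phases `(l - l')α`.

Finally `π(N) log N ∼ θ(N) ∼ N`, so for bounded sequences weighted and unweighted averages over the
primes have the same limits.
-/

section SpectralMeasure

open MeasureTheory Polynomial
open scoped Topology RealInnerProductSpace

/-- The Fejér mean of order `R` of the Fourier series with coefficients `c`, a trigonometric
polynomial on the circle; it is the density of the measures approximating the spectral measure.
For `R = 0` it is the zero function. -/
noncomputable def fejerMean (c : ℤ → ℝ) (R : ℕ) (t : UnitAddCircle) : ℝ :=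
  (R : ℝ)⁻¹ * ∑ n ∈ range R, ∑ m ∈ range R, c (n - m) * (fourier (n - m : ℤ) t).re

theorem continuous_fejerMean (c : ℤ → ℝ) (R : ℕ) : Continuous (fejerMean c R) := by
  unfold fejerMean
  fun_prop

theorem fourier_sub_re (m n : ℤ) (t : UnitAddCircle) :
    (fourier (n - m) t).re =
      (fourier n t).re * (fourier m t).re + (fourier n t).im * (fourier m t).im := by
  rw [sub_eq_add_neg, fourier_add, fourier_neg]
  simp

theorem fejerMean_nonneg {c : ℤ → ℝ}
    (hpos : ∀ (N : ℕ) (a : ℕ → ℝ), 0 ≤ ∑ n ∈ range N, ∑ m ∈ range N, a n * a m * c (n - m))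
    (R : ℕ) (t : UnitAddCircle) : 0 ≤ fejerMean c R t := by
  have hsplit : ∑ n ∈ range R, ∑ m ∈ range R, c (n - m) * (fourier (n - m : ℤ) t).re =
      (∑ n ∈ range R, ∑ m ∈ range R, (fourier n t).re * (fourier m t).re * c (n - m)) +
        ∑ n ∈ range R, ∑ m ∈ range R, (fourier n t).im * (fourier m t).im * c (n - m) := by
    simp only [← sum_add_distrib, fourier_sub_re]
    exact sum_congr rfl fun n _ => sum_congr rfl fun m _ => by ring
  rw [fejerMean, hsplit]
  exact mul_nonneg (by positivity)
    (add_nonneg (hpos R fun n => (fourier n t).re) (hpos R fun n => (fourier n t).im))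

theorem ofReal_fejerMean {c : ℤ → ℝ} (heven : Function.Even c) (R : ℕ) (t : UnitAddCircle) :
    (fejerMean c R t : ℂ) =
      (R : ℂ)⁻¹ * ∑ n ∈ range R, ∑ m ∈ range R, (c (n - m) : ℂ) * fourier (n - m : ℤ) t := by
  set S : ℂ := ∑ n ∈ range R, ∑ m ∈ range R, (c (n - m) : ℂ) * fourier (n - m : ℤ) t with hS
  have hconj : (starRingEnd ℂ) S = S := by
    simp only [hS, map_sum, map_mul, Complex.conj_ofReal]
    rw [sum_comm]
    refine sum_congr rfl fun n _ => sum_congr rfl fun m _ => ?_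
    rw [← fourier_neg, neg_sub, ← heven, neg_sub]
  rw [← Complex.conj_eq_iff_re.1 hconj, hS]
  simp [fejerMean]

theorem integral_fourier_haarAddCircle (k : ℤ) :
    ∫ t : UnitAddCircle, fourier k t ∂AddCircle.haarAddCircle = if k = 0 then 1 else 0 := by
  have h := congr_fun (fourierCoeff_fourier (T := 1) k) 0
  simp only [fourierCoeff, neg_zero, fourier_zero, one_smul, Pi.single_apply] at h
  simpa only [eq_comm] using h

theorem integral_fourier_mul_fejerMean {c : ℤ → ℝ} (heven : Function.Even c) (R k : ℕ) :
    ∫ t : UnitAddCircle, fourier (k : ℤ) t * fejerMean c R t ∂AddCircle.haarAddCircle =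
      ((R - k : ℕ) / R * c k : ℝ) := by
  have hexpand (t : UnitAddCircle) : fourier (k : ℤ) t * (fejerMean c R t : ℂ) =
      (R : ℂ)⁻¹ * ∑ n ∈ range R, ∑ m ∈ range R, (c (n - m) : ℂ) * fourier (k + (n - m) : ℤ) t := by
    simp only [ofReal_fejerMean heven, mul_sum, fourier_add]
    exact sum_congr rfl fun n _ => sum_congr rfl fun m _ => by ring
  have hcount : ∑ n ∈ range R, ∑ m ∈ range R, (if m = n + k then (1 : ℂ) else 0) =
      (R - k : ℕ) := by
    have hfilter : {n ∈ range R | n + k < R} = range (R - k) := by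
      ext n
      simp only [mem_filter, mem_range]
      lia
    simp only [sum_ite_eq', mem_range]
    rw [← sum_filter, hfilter, sum_const, card_range, nsmul_one]
  have hcont (l : ℤ) (b : ℂ) : Integrable (fun t : UnitAddCircle => b * fourier l t)
      AddCircle.haarAddCircle :=
    (Continuous.integrable_of_hasCompactSupport (by fun_prop)
      (HasCompactSupport.of_compactSpace _))
  have hterm (n m : ℕ) : (c (n - m) : ℂ) * (if (k + (n - m) : ℤ) = 0 then 1 else 0) =
      c k * if m = n + k then 1 else 0 := by
    have hiff : (k + (n - m) : ℤ) = 0 ↔ m = n + k := by lia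
    simp only [hiff]
    split_ifs with h
    · rw [show (n - m : ℤ) = -k by lia, heven]
    · simp
  simp only [hexpand]
  rw [integral_const_mul,
    integral_finsetSum _ fun n _ => integrable_finsetSum _ fun m _ => hcont _ _]
  simp only [integral_finsetSum _ fun _ _ => hcont _ _, integral_const_mul,
    integral_fourier_haarAddCircle, hterm, ← mul_sum, hcount]
  push_cast
  ring

/-- The measure on the circle with density `fejerMean c R` with respect to Haar measure. -/
noncomputable def fejerMeasure (c : ℤ → ℝ) (R : ℕ) : FiniteMeasure UnitAddCircle :=
  ⟨AddCircle.haarAddCircle.withDensity fun t => ENNReal.ofReal (fejerMean c R t),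
    isFiniteMeasure_withDensity_ofReal
      ((continuous_fejerMean c R).integrable_of_hasCompactSupport
        (HasCompactSupport.of_compactSpace _)).2⟩

theorem integral_fejerMeasure {c : ℤ → ℝ}
    (hpos : ∀ (N : ℕ) (a : ℕ → ℝ), 0 ≤ ∑ n ∈ range N, ∑ m ∈ range N, a n * a m * c (n - m))
    (R : ℕ) (g : UnitAddCircle → ℂ) :
    ∫ t, g t ∂(fejerMeasure c R : Measure UnitAddCircle) =
      ∫ t, g t * fejerMean c R t ∂AddCircle.haarAddCircle := by
  change ∫ t, g t ∂(AddCircle.haarAddCircle.withDensity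
    fun t => ((fejerMean c R t).toNNReal : ENNReal)) = _
  rw [integral_withDensity_eq_integral_smul (continuous_fejerMean c R).measurable.real_toNNReal]
  refine integral_congr_ae (Eventually.of_forall fun t => ?_)
  simp only [NNReal.smul_def, Real.coe_toNNReal _ (fejerMean_nonneg hpos R t), Complex.real_smul]
  ring

theorem mass_fejerMeasure_le {c : ℤ → ℝ} (heven : Function.Even c)
    (hpos : ∀ (N : ℕ) (a : ℕ → ℝ), 0 ≤ ∑ n ∈ range N, ∑ m ∈ range N, a n * a m * c (n - m))
    (R : ℕ) : (fejerMeasure c R).mass ≤ (c 0).toNNReal := by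
  have hc0 : 0 ≤ c 0 := by simpa using hpos 1 fun _ => 1
  have hmass : (((fejerMeasure c R).mass : ℝ) : ℂ) = ((R / R * c 0 : ℝ) : ℂ) := by
    have h := integral_fourier_mul_fejerMean heven R 0
    rw [← integral_fejerMeasure hpos] at h
    simp only [Nat.cast_zero, fourier_zero, Nat.sub_zero, integral_const, Complex.real_smul,
      mul_one] at h
    exact h
  rw [← NNReal.coe_le_coe, Complex.ofReal_injective hmass, Real.coe_toNNReal _ hc0]
  exact mul_le_of_le_one_left hc0 (div_self_le_one _)

/-- **Herglotz's theorem** for real sequences. -/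
theorem exists_finiteMeasure_integral_fourier_eq {c : ℤ → ℝ} (heven : Function.Even c)
    (hpos : ∀ (N : ℕ) (a : ℕ → ℝ), 0 ≤ ∑ n ∈ range N, ∑ m ∈ range N, a n * a m * c (n - m)) :
    ∃ μ : FiniteMeasure UnitAddCircle, ∀ k : ℤ,
      ∫ t, fourier k t ∂(μ : Measure UnitAddCircle) = c k := by
  obtain ⟨μ, -, hμ⟩ := (isCompact_setOfPred_finiteMeasure_le_of_isCompact (c 0).toNNReal
    (isCompact_univ (X := UnitAddCircle))).ultrafilter_le_nhds
      ((hyperfilter ℕ).map (fejerMeasure c)) (le_principal_iff.2 <| Filter.mem_map.2 <|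
        univ_mem' fun R => ⟨mass_fejerMeasure_le heven hpos R, by simp⟩)
  suffices hnat : ∀ k : ℕ, ∫ t, fourier (k : ℤ) t ∂(μ : Measure UnitAddCircle) = c k by
    refine ⟨μ, fun k => ?_⟩
    obtain ⟨n, rfl | rfl⟩ := k.eq_nat_or_neg
    · exact hnat n
    · simp only [fourier_neg, heven (n : ℤ), integral_conj, hnat, Complex.conj_ofReal]
  intro k
  have hweak : Tendsto
      (fun R => ∫ t, fourier (k : ℤ) t ∂(fejerMeasure c R : Measure UnitAddCircle))
      (hyperfilter ℕ : Filter ℕ) (𝓝 (∫ t, fourier (k : ℤ) t ∂(μ : Measure UnitAddCircle))) :=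
    FiniteMeasure.tendsto_iff_forall_integral_rclike_tendsto ℂ |>.1 hμ
      (BoundedContinuousFunction.mkOfCompact (fourier k))
  have hfejer : Tendsto (fun R : ℕ => ((R - k : ℕ) / R * c k : ℝ)) atTop (𝓝 (1 * c k)) := by
    refine Tendsto.mul_const _ ?_
    have h : Tendsto (fun R : ℕ => 1 - (k : ℝ) / R) atTop (𝓝 (1 - 0)) :=
      tendsto_const_nhds.sub (tendsto_const_div_atTop_nhds_zero_nat _)
    rw [sub_zero] at h
    refine h.congr' ?_
    filter_upwards [eventually_ge_atTop k, eventually_gt_atTop 0] with R hkR hR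
    have hR' : (R : ℝ) ≠ 0 := by positivity
    rw [Nat.cast_sub hkR, sub_div, div_self hR']
  simp only [integral_fejerMeasure hpos, integral_fourier_mul_fejerMean heven] at hweak
  rw [one_mul] at hfejer
  exact tendsto_nhds_unique hweak <|
    (Complex.continuous_ofReal.tendsto _).comp (hfejer.mono_left Nat.hyperfilter_le_atTop)

variable {H : Type*} [NormedAddCommGroup H] [InnerProductSpace ℝ H]

/-- The sequence `k ↦ ⟪T ^ |k| x, x⟫`; its Fourier transform is the spectral measure of `x` with
respect to the unitary dilation of the contraction `T`. -/
noncomputable def autocorrelation (T : H →L[ℝ] H) (x : H) (k : ℤ) : ℝ :=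
  ⟪(T ^ k.natAbs) x, x⟫

theorem even_autocorrelation (T : H →L[ℝ] H) (x : H) : Function.Even (autocorrelation T x) :=
  fun k => by rw [autocorrelation, autocorrelation, Int.natAbs_neg]

theorem sum_range_succ_mul_mul_autocorrelation (T : H →L[ℝ] H) (x : H) (N : ℕ) (a : ℕ → ℝ) :
    ∑ n ∈ range (N + 1), ∑ m ∈ range (N + 1), a n * a m * autocorrelation T x (n - m) =
      ∑ n ∈ range N, ∑ m ∈ range N, a (n + 1) * a (m + 1) * autocorrelation T x (n - m) +
        2 * (a 0 * ∑ n ∈ range N, a (n + 1) * autocorrelation T x (n + 1)) +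
        a 0 ^ 2 * ‖x‖ ^ 2 := by
  have hzero : autocorrelation T x 0 = ‖x‖ ^ 2 := real_inner_self_eq_norm_sq x
  simp only [sum_range_succ', sum_add_distrib, Nat.cast_add, Nat.cast_one, Nat.cast_zero,
    add_sub_add_right_eq_sub, sub_zero, zero_sub, hzero, even_autocorrelation T x _, two_mul,
    mul_sum]
  ring_nf

theorem norm_sum_smul_pow_sq_le {T : H →L[ℝ] H} (hT : ‖T‖ ≤ 1) (x : H) (N : ℕ) (a : ℕ → ℝ) :
    ‖∑ n ∈ range N, a n • (T ^ n) x‖ ^ 2 ≤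
      ∑ n ∈ range N, ∑ m ∈ range N, a n * a m * autocorrelation T x (n - m) := by
  induction N generalizing a with
  | zero => simp
  | succ N ih =>
    set s := ∑ n ∈ range N, a (n + 1) • (T ^ n) x with hs
    have hTs : T s = ∑ n ∈ range N, a (n + 1) • (T ^ (n + 1)) x := by
      simp only [hs, map_sum, map_smul, pow_succ', mul_apply_eq_comp]
    have hsum : ∑ n ∈ range (N + 1), a n • (T ^ n) x = a 0 • x + T s := by
      rw [sum_range_succ', hTs, add_comm]
      rfl
    have hcross : ∑ n ∈ range N, a (n + 1) * autocorrelation T x (n + 1) = ⟪T s, x⟫ := by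
      rw [hTs, sum_inner]
      exact sum_congr rfl fun n _ => (real_inner_smul_left _ _ _).symm
    have hcontr : ‖T s‖ ^ 2 ≤ ‖s‖ ^ 2 := by
      gcongr
      exact T.le_of_opNorm_le hT s |>.trans_eq (one_mul _)
    calc ‖∑ n ∈ range (N + 1), a n • (T ^ n) x‖ ^ 2
        = ‖T s‖ ^ 2 + 2 * (a 0 * ⟪T s, x⟫) + a 0 ^ 2 * ‖x‖ ^ 2 := by
          rw [hsum, norm_add_sq_real, norm_smul, real_inner_smul_left, real_inner_comm, mul_pow,
            Real.norm_eq_abs, sq_abs]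
          ring
      _ ≤ _ := by
          rw [sum_range_succ_mul_mul_autocorrelation, hcross]
          gcongr
          exact hcontr.trans (ih fun n => a (n + 1))

theorem norm_aeval_toCircle_sq (p : ℝ[X]) (t : UnitAddCircle) :
    ((‖aeval (t.toCircle : ℂ) p‖ ^ 2 : ℝ) : ℂ) = ∑ n ∈ range (p.natDegree + 1),
      ∑ m ∈ range (p.natDegree + 1), (p.coeff n * p.coeff m : ℝ) * fourier (n - m : ℤ) t := by
  have haeval : aeval (t.toCircle : ℂ) p =
      ∑ n ∈ range (p.natDegree + 1), (p.coeff n : ℂ) * fourier (n : ℤ) t := by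
    simp [aeval_eq_sum_range, fourier_apply, AddCircle.toCircle_nsmul]
  rw [Complex.ofReal_pow, ← Complex.mul_conj', haeval, map_sum, sum_mul_sum]
  refine sum_congr rfl fun n _ => sum_congr rfl fun m _ => ?_
  rw [sub_eq_add_neg, fourier_add, fourier_neg, map_mul, Complex.conj_ofReal, Complex.ofReal_mul]
  ring

/-- `μ` is the spectral measure of `x`. -/
theorem exists_finiteMeasure_norm_aeval_sq_le {T : H →L[ℝ] H} (hT : ‖T‖ ≤ 1) (x : H) :
    ∃ μ : FiniteMeasure UnitAddCircle, ∀ p : ℝ[X], ‖aeval T p x‖ ^ 2 ≤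
      ∫ t, ‖aeval (t.toCircle : ℂ) p‖ ^ 2 ∂(μ : Measure UnitAddCircle) := by
  have hform := norm_sum_smul_pow_sq_le hT x
  obtain ⟨μ, hμ⟩ := exists_finiteMeasure_integral_fourier_eq (even_autocorrelation T x)
    fun N a => (sq_nonneg _).trans (hform N a)
  refine ⟨μ, fun p => ?_⟩
  have hint (l : ℤ) (b : ℂ) :
      Integrable (fun t : UnitAddCircle => b * fourier l t) (μ : Measure UnitAddCircle) :=
    (Continuous.integrable_of_hasCompactSupport (by fun_prop)
      (HasCompactSupport.of_compactSpace _))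
  have hL2 : ∫ t, ‖aeval (t.toCircle : ℂ) p‖ ^ 2 ∂(μ : Measure UnitAddCircle) =
      ∑ n ∈ range (p.natDegree + 1), ∑ m ∈ range (p.natDegree + 1),
        p.coeff n * p.coeff m * autocorrelation T x (n - m) := by
    refine Complex.ofReal_injective ?_
    rw [← integral_complex_ofReal]
    simp only [norm_aeval_toCircle_sq]
    rw [integral_finsetSum _ fun n _ => integrable_finsetSum _ fun m _ => hint _ _]
    simp only [integral_finsetSum _ fun _ _ => hint _ _, integral_const_mul, hμ]
    push_cast
    rfl
  rw [hL2, aeval_eq_sum_range, _root_.sum_apply]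
  exact hform _ p.coeff

theorem exists_tendsto_aeval_apply [CompleteSpace H] {T : H →L[ℝ] H} (hT : ‖T‖ ≤ 1) (x : H)
    {p : ℕ → ℝ[X]} {C : ℝ} (hbound : ∀ N (z : Circle), ‖aeval (z : ℂ) (p N)‖ ≤ C)
    {P : Circle → ℂ} (hlim : ∀ z : Circle, Tendsto (fun N => aeval (z : ℂ) (p N)) atTop (𝓝 (P z))) :
    ∃ y : H, Tendsto (fun N => aeval T (p N) x) atTop (𝓝 y) := by
  obtain ⟨μ, hμ⟩ := exists_finiteMeasure_norm_aeval_sq_le hT x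
  set F : ℕ × ℕ → UnitAddCircle → ℝ :=
    fun NM t => ‖aeval (t.toCircle : ℂ) (p NM.1 - p NM.2)‖ ^ 2 with hF
  have hL2 : Tendsto (fun NM => ∫ t, F NM t ∂(μ : Measure UnitAddCircle)) atTop (𝓝 0) := by
    rw [← integral_zero UnitAddCircle ℝ (μ := (μ : Measure UnitAddCircle))]
    refine tendsto_integral_filter_of_dominated_convergence (fun _ => (C + C) ^ 2)
      (Eventually.of_forall fun NM => ?_)
      (Eventually.of_forall fun NM => Eventually.of_forall fun t => ?_)
      (integrable_const _) (Eventually.of_forall fun t => ?_)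
    · have hcont : Continuous fun t : UnitAddCircle => (t.toCircle : ℂ) :=
        continuous_subtype_val.comp AddCircle.continuous_toCircle
      exact (((p NM.1 - p NM.2).continuous_aeval.comp hcont).norm.pow 2).aestronglyMeasurable
    · rw [hF, norm_pow, norm_norm, map_sub]
      gcongr
      exact norm_sub_le_of_le (hbound _ _) (hbound _ _)
    · rw [← prod_atTop_atTop_eq]
      have h := ((((hlim t.toCircle).comp tendsto_fst).sub
        ((hlim t.toCircle).comp tendsto_snd)).norm).pow 2
      simpa [hF] using h
  refine cauchySeq_tendsto_of_complete (cauchySeq_iff_tendsto_dist_atTop_0.2 ?_)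
  refine squeeze_zero (fun _ => dist_nonneg) (fun NM => ?_)
    (by simpa only [Real.sqrt_zero] using (Real.continuous_sqrt.tendsto 0).comp hL2)
  rw [dist_eq_norm, ← sub_apply, ← map_sub]
  exact Real.le_sqrt_of_sq_le (hμ _)

end SpectralMeasure

section FejerKernel

open MeasureTheory

/-- The Fejér kernel `2 (1 - cos v) / v ^ 2` on the real line, the Fourier transform of the triangle
function `1 - |y|` on `[-1, 1]`. At `v = 0` the value is the junk value `0`. -/
noncomputable def fejerKernel (v : ℝ) : ℝ := 2 * (1 - Real.cos v) / v ^ 2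

theorem fejerKernel_nonneg (v : ℝ) : 0 ≤ fejerKernel v :=
  div_nonneg (by linarith [Real.cos_le_one v]) (sq_nonneg _)

theorem measurable_fejerKernel : Measurable fejerKernel := by
  unfold fejerKernel
  fun_prop

theorem fejerKernel_le (v : ℝ) : fejerKernel v ≤ 8 * (1 + v ^ 2)⁻¹ := by
  have hone : fejerKernel v ≤ 1 :=
    div_le_one_of_le₀ (by linarith [Real.one_sub_sq_div_two_le_cos (x := v)]) (sq_nonneg _)
  rw [← div_eq_mul_inv, le_div_iff₀ (by positivity)]
  rcases le_total (v ^ 2) 1 with hv | hv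
  · nlinarith [fejerKernel_nonneg v]
  · have hfour : fejerKernel v * v ^ 2 ≤ 4 := by
      rw [fejerKernel, div_mul_cancel₀ _ (by positivity)]
      linarith [Real.neg_one_le_cos v]
    linarith

theorem integrable_fejerKernel : Integrable fejerKernel := by
  refine (integrable_inv_one_add_sq.const_mul 8).mono'
    measurable_fejerKernel.aestronglyMeasurable (Eventually.of_forall fun v => ?_)
  rw [Real.norm_of_nonneg (fejerKernel_nonneg v)]
  exact fejerKernel_le v

theorem integral_fejerKernel_pos : 0 < ∫ v, fejerKernel v := by
  rw [integral_pos_iff_support_of_nonneg fejerKernel_nonneg integrable_fejerKernel]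
  have hsupport : Set.Ioo (0 : ℝ) 1 ⊆ Function.support fejerKernel := fun v ⟨hv0, hv1⟩ => by
    have hcos : Real.cos v < 1 := by
      simpa using Real.cos_lt_cos_of_nonneg_of_le_pi le_rfl (by linarith [Real.pi_gt_three]) hv0
    exact (div_pos (by linarith) (by positivity)).ne'
  exact lt_of_lt_of_le (by simp) (measure_mono hsupport)

theorem integral_one_sub_mul_cos {v : ℝ} (hv : v ≠ 0) :
    ∫ y in (0 : ℝ)..1, 2 * (1 - y) * Real.cos (v * y) = fejerKernel v := by
  have hderiv (y : ℝ) : HasDerivAt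
      (fun y => 2 * (1 - y) * Real.sin (v * y) / v - 2 * Real.cos (v * y) / v ^ 2)
      (2 * (1 - y) * Real.cos (v * y)) y := by
    have hlin : HasDerivAt (fun y : ℝ => v * y) v y := by
      simpa using (hasDerivAt_id y).const_mul v
    have hfactor : HasDerivAt (fun y : ℝ => 2 * (1 - y)) (-2) y := by
      simpa using ((hasDerivAt_id y).const_sub 1).const_mul 2
    refine (((hfactor.mul hlin.sin).div_const v).sub
      ((hlin.cos.const_mul 2).div_const (v ^ 2))).congr_deriv ?_
    field_simp
    ring
  rw [intervalIntegral.integral_eq_sub_of_hasDerivAt (fun y _ => hderiv y)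
    (Continuous.intervalIntegrable (by fun_prop) _ _)]
  simp only [fejerKernel, sub_self, mul_zero, zero_mul, zero_div, mul_one, zero_sub, sub_zero,
    Real.sin_zero, Real.cos_zero]
  ring

theorem integral_triangle_mul_exp {v : ℝ} (hv : v ≠ 0) :
    ∫ y in Set.Ioc (-1 : ℝ) 1, ((1 - |y| : ℝ) : ℂ) * Complex.exp (v * y * Complex.I) =
      fejerKernel v := by
  rw [← intervalIntegral.integral_of_le (by norm_num)]
  set F : ℝ → ℂ := fun y => ((1 - |y| : ℝ) : ℂ) * Complex.exp (v * y * Complex.I) with hF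
  have hcont : Continuous F := by fun_prop
  have hreflect : ∫ y in (-1 : ℝ)..0, F y = ∫ y in (0 : ℝ)..1, F (-y) := by
    rw [intervalIntegral.integral_comp_neg, neg_zero]
  have hfold : ∫ y in (0 : ℝ)..1, (F (-y) + F y) =
      ∫ y in (0 : ℝ)..1, ((2 * (1 - y) * Real.cos (v * y) : ℝ) : ℂ) := by
    refine intervalIntegral.integral_congr fun y hy => ?_
    rw [Set.uIcc_of_le zero_le_one] at hy
    simp only [hF, abs_neg, abs_of_nonneg hy.1]
    push_cast
    rw [Complex.cos]
    ring_nf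
  rw [← intervalIntegral.integral_add_adjacent_intervals (hcont.intervalIntegrable (-1) 0)
    (hcont.intervalIntegrable 0 1), hreflect, ← intervalIntegral.integral_add
    (Continuous.intervalIntegrable (by fun_prop) _ _) (hcont.intervalIntegrable 0 1), hfold,
    intervalIntegral.integral_ofReal, integral_one_sub_mul_cos hv]

end FejerKernel

section WienerIkehara

open MeasureTheory
open scoped Topology

theorem integrable_mul_exp_neg {g : ℝ → ℝ} {C δ : ℝ} (hgm : Measurable g) (hgC : ∀ t, |g t| ≤ C)
    (hg0 : ∀ t < 0, g t = 0) (hδ : 0 < δ) : Integrable fun t => g t * Real.exp (-(δ * t)) := by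
  have hexp : IntegrableOn (fun t => C * Real.exp (-δ * t)) (Set.Ici 0) :=
    Integrable.const_mul
      ((integrableOn_Ici_iff_integrableOn_Ioi).2 (exp_neg_integrableOn_Ioi 0 hδ)) C
  refine (hexp.integrable_indicator measurableSet_Ici).mono' (by fun_prop)
    (Eventually.of_forall fun t => ?_)
  rcases lt_or_ge t 0 with ht | ht
  · simp [hg0 t ht, ht.not_ge]
  · rw [Set.indicator_of_mem (Set.mem_Ici.2 ht), norm_mul, Real.norm_eq_abs, Real.norm_eq_abs,
      Real.abs_exp, neg_mul]
    gcongr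
    exact hgC t

theorem integral_mul_exp_neg_mul_fejerKernel {g : ℝ → ℝ} {C : ℝ} (hgm : Measurable g)
    (hgC : ∀ t, |g t| ≤ C) (hg0 : ∀ t < 0, g t = 0) {l δ : ℝ} (hl : 0 < l) (hδ : 0 < δ) (u : ℝ) :
    ∫ t, ((g t * Real.exp (-(δ * t)) * fejerKernel (l * (u - t)) : ℝ) : ℂ) =
      ∫ y in Set.Ioc (-1 : ℝ) 1, ((1 - |y| : ℝ) : ℂ) * Complex.exp (l * u * y * Complex.I) *
        ∫ t, (g t : ℂ) * Complex.exp (-((δ + l * y * Complex.I) * t)) := by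
  have htriangle : IntegrableOn (fun y : ℝ => ((1 - |y| : ℝ) : ℂ)) (Set.Ioc (-1) 1) :=
    (Continuous.integrableOn_Icc (by fun_prop)).mono_set Set.Ioc_subset_Icc_self
  have hjoint : Integrable (Function.uncurry fun t y : ℝ =>
      (((g t * Real.exp (-(δ * t)) : ℝ) : ℂ) * ((1 - |y| : ℝ) : ℂ)) *
        Complex.exp (((l * (u - t) * y : ℝ) : ℂ) * Complex.I))
      (volume.prod (volume.restrict (Set.Ioc (-1 : ℝ) 1))) := by
    refine (Integrable.mul_prod (integrable_mul_exp_neg hgm hgC hg0 hδ).ofReal htriangle).mul_bdd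
      (c := 1) (Continuous.aestronglyMeasurable (by fun_prop)) (Eventually.of_forall fun z => ?_)
    rw [Complex.norm_exp_ofReal_mul_I]
  have hkernel : ∫ t, ((g t * Real.exp (-(δ * t)) * fejerKernel (l * (u - t)) : ℝ) : ℂ) =
      ∫ t, ∫ y in Set.Ioc (-1 : ℝ) 1,
        (((g t * Real.exp (-(δ * t)) : ℝ) : ℂ) * ((1 - |y| : ℝ) : ℂ)) *
          Complex.exp (((l * (u - t) * y : ℝ) : ℂ) * Complex.I) := by
    refine integral_congr_ae ?_
    filter_upwards [Measure.ae_ne volume u] with t ht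
    rw [Complex.ofReal_mul,
      ← integral_triangle_mul_exp (mul_ne_zero hl.ne' (sub_ne_zero.2 ht.symm)),
      ← integral_const_mul]
    congr 1 with y
    push_cast
    ring
  rw [hkernel, integral_integral_swap hjoint]
  refine integral_congr_ae (Eventually.of_forall fun y => ?_)
  dsimp only
  rw [← integral_const_mul]
  congr 1 with t
  push_cast
  have hphase : Complex.exp (-(δ * t)) * Complex.exp (l * (u - t) * y * Complex.I) =
      Complex.exp (l * u * y * Complex.I) * Complex.exp (-((δ + l * y * Complex.I) * t)) := by
    rw [← Complex.exp_add, ← Complex.exp_add]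
    ring_nf
  linear_combination (g t : ℂ) * (1 - |y| : ℂ) * hphase

theorem tendsto_integral_mul_exp_neg_mul {g k : ℝ → ℝ} {C : ℝ} (hgm : Measurable g)
    (hgC : ∀ t, |g t| ≤ C) (hg0 : ∀ t < 0, g t = 0) (hk : Integrable k) :
    Tendsto (fun δ : ℝ => ∫ t, g t * Real.exp (-(δ * t)) * k t) (𝓝[>] 0)
      (𝓝 (∫ t, g t * k t)) := by
  refine tendsto_integral_filter_of_dominated_convergence (fun t => C * |k t|)
    (Eventually.of_forall fun δ => ?_) ?_ (hk.abs.const_mul C) (Eventually.of_forall fun t => ?_)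
  · exact (Measurable.aestronglyMeasurable (by fun_prop)).mul hk.aestronglyMeasurable
  · filter_upwards [self_mem_nhdsWithin] with δ (hδ : 0 < δ)
    refine Eventually.of_forall fun t => ?_
    rw [norm_mul, norm_mul, Real.norm_eq_abs, Real.norm_eq_abs, Real.norm_eq_abs, Real.abs_exp]
    refine mul_le_mul_of_nonneg_right ?_ (abs_nonneg _)
    rcases lt_or_ge t 0 with ht | ht
    · simpa [hg0 t ht] using (abs_nonneg _).trans (hgC t)
    · exact (mul_le_of_le_one_right (abs_nonneg _)
        (Real.exp_le_one_iff.2 (neg_nonpos.2 (by positivity)))).trans (hgC t)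
  · have hexp : Tendsto (fun δ => Real.exp (-(δ * t))) (𝓝 0) (𝓝 (Real.exp (-(0 * t)))) :=
      Continuous.tendsto (by fun_prop) 0
    rw [zero_mul, neg_zero, Real.exp_zero] at hexp
    simpa using ((hexp.mono_left nhdsWithin_le_nhds).const_mul (g t)).mul_const (k t)

theorem tendsto_integral_mul_vertical {G : ℂ → ℂ} (hG : ContinuousOn G {w | 0 ≤ w.re})
    {φ : ℝ → ℂ} (hφ : Continuous φ) (l : ℝ) :
    Tendsto (fun δ : ℝ => ∫ y in Set.Ioc (-1 : ℝ) 1, φ y * G (δ + l * y * Complex.I)) (𝓝[>] 0)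
      (𝓝 (∫ y in Set.Ioc (-1 : ℝ) 1, φ y * G (l * y * Complex.I))) := by
  have hcont : ContinuousOn (fun p : ℝ × ℝ => φ p.2 * G (p.1 + l * p.2 * Complex.I))
      (Set.Ici 0 ×ˢ Set.univ) :=
    ContinuousOn.mul (by fun_prop) (hG.comp (by fun_prop) fun p hp => by simpa using hp.1)
  obtain ⟨D, hD⟩ := (isCompact_Icc.prod isCompact_Icc).exists_bound_of_continuousOn
    (hcont.mono (Set.prod_mono (t₁ := Set.Icc (-1) 1) (s₁ := Set.Icc 0 1) Set.Icc_subset_Ici_self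
      (Set.subset_univ _)))
  have hsmall : ∀ᶠ δ : ℝ in 𝓝[>] 0, 0 ≤ δ ∧ δ ≤ 1 := by
    filter_upwards [Ioc_mem_nhdsGT zero_lt_one] with δ hδ using ⟨hδ.1.le, hδ.2⟩
  refine tendsto_integral_filter_of_dominated_convergence (fun _ => D) ?_ ?_
    (integrable_const _) (Eventually.of_forall fun y => ?_)
  · filter_upwards [hsmall] with δ hδ
    exact (hcont.comp_continuous (f := fun y : ℝ => (δ, y)) (by fun_prop)
      fun y => ⟨hδ.1, trivial⟩).aestronglyMeasurable
  · filter_upwards [hsmall] with δ hδ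
    filter_upwards [ae_restrict_mem measurableSet_Ioc] with y hy
    exact hD (δ, y) ⟨hδ, hy.1.le, hy.2⟩
  · have hvertical : ContinuousWithinAt (fun δ : ℝ => φ y * G (δ + l * y * Complex.I))
        (Set.Ici 0) 0 :=
      (hcont.comp (f := fun δ : ℝ => (δ, y)) (by fun_prop) fun δ hδ => ⟨hδ, trivial⟩) 0
        Set.self_mem_Ici
    simpa using hvertical.tendsto.mono_left (nhdsWithin_mono _ Set.Ioi_subset_Ici_self)

theorem integrable_fejerKernel_comp {l : ℝ} (hl : 0 < l) (u : ℝ) :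
    Integrable fun t => fejerKernel (l * (u - t)) :=
  (integrable_fejerKernel.comp_mul_left' hl.ne').comp_sub_left u

theorem integral_mul_fejerKernel {g : ℝ → ℝ} {C : ℝ} (hgm : Measurable g)
    (hgC : ∀ t, |g t| ≤ C) (hg0 : ∀ t < 0, g t = 0) {G : ℂ → ℂ}
    (hGc : ContinuousOn G {w | 0 ≤ w.re})
    (hG : ∀ w : ℂ, 0 < w.re → ∫ t, (g t : ℂ) * Complex.exp (-(w * t)) = G w)
    {l : ℝ} (hl : 0 < l) (u : ℝ) :
    ((∫ t, g t * fejerKernel (l * (u - t)) : ℝ) : ℂ) =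
      ∫ y in Set.Ioc (-1 : ℝ) 1, ((1 - |y| : ℝ) : ℂ) * Complex.exp (l * u * y * Complex.I) *
        G (l * y * Complex.I) := by
  have hdamped := (Complex.continuous_ofReal.tendsto _).comp
    (tendsto_integral_mul_exp_neg_mul hgm hgC hg0 (integrable_fejerKernel_comp hl u))
  have hboundary := tendsto_integral_mul_vertical hGc (l := l)
    (φ := fun y => ((1 - |y| : ℝ) : ℂ) * Complex.exp (l * u * y * Complex.I)) (by fun_prop)
  refine tendsto_nhds_unique (hdamped.congr' ?_) hboundary
  filter_upwards [self_mem_nhdsWithin] with δ (hδ : 0 < δ)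
  rw [Function.comp_apply, ← integral_complex_ofReal,
    integral_mul_exp_neg_mul_fejerKernel hgm hgC hg0 hl hδ]
  refine integral_congr_ae (Eventually.of_forall fun y => ?_)
  dsimp only
  rw [hG _ (by simpa using hδ)]

theorem tendsto_integral_mul_fejerKernel {g : ℝ → ℝ} {C : ℝ} (hgm : Measurable g)
    (hgC : ∀ t, |g t| ≤ C) (hg0 : ∀ t < 0, g t = 0) {G : ℂ → ℂ}
    (hGc : ContinuousOn G {w | 0 ≤ w.re})
    (hG : ∀ w : ℂ, 0 < w.re → ∫ t, (g t : ℂ) * Complex.exp (-(w * t)) = G w)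
    {l : ℝ} (hl : 0 < l) :
    Tendsto (fun u : ℝ => ∫ t, g t * fejerKernel (l * (u - t))) atTop (𝓝 0) := by
  have hriemannLebesgue := Real.tendsto_integral_exp_smul_cocompact
    (Set.indicator (Set.Ioc (-1 : ℝ) 1) fun y : ℝ => ((1 - |y| : ℝ) : ℂ) * G (l * y * Complex.I))
  have hfreq : Tendsto (fun u : ℝ => -(l / (2 * Real.pi) * u)) atTop (cocompact ℝ) :=
    (tendsto_neg_atTop_atBot.comp (tendsto_id.const_mul_atTop (by positivity))).mono_right
      atBot_le_cocompact
  have hcomplex : Tendsto (fun u : ℝ => ((∫ t, g t * fejerKernel (l * (u - t)) : ℝ) : ℂ)) atTop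
      (𝓝 0) := by
    refine (hriemannLebesgue.comp hfreq).congr fun u => ?_
    rw [integral_mul_fejerKernel hgm hgC hg0 hGc hG hl, ← integral_indicator measurableSet_Ioc]
    refine integral_congr_ae (Eventually.of_forall fun y => ?_)
    by_cases hy : y ∈ Set.Ioc (-1 : ℝ) 1
    · have hphase : 2 * Real.pi * -(y * -(l / (2 * Real.pi) * u)) = l * u * y := by field_simp
      simp only [Set.indicator_of_mem hy, Circle.smul_def, Real.fourierChar_apply, smul_eq_mul,
        hphase]
      push_cast
      ring
    · simp only [Set.indicator_of_notMem hy, smul_zero]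
  simpa only [Function.comp_def, Complex.ofReal_re, Complex.zero_re]
    using (Complex.continuous_re.tendsto _).comp hcomplex

theorem integrable_comp_sub_div_mul {B K : ℝ → ℝ} {C : ℝ} (hBm : Measurable B)
    (hB0 : ∀ t, 0 ≤ B t) (hBC : ∀ t, B t ≤ C) (hK : Integrable K) (u l : ℝ) :
    Integrable fun v => B (u - v / l) * K v := by
  refine hK.bdd_mul (c := C) (hBm.comp (by fun_prop)).aestronglyMeasurable
    (Eventually.of_forall fun v => ?_)
  rw [Real.norm_of_nonneg (hB0 _)]
  exact hBC _

theorem integrable_indicator_Ici_comp_mul {K : ℝ → ℝ} (hK : Integrable K) (A u l : ℝ) :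
    Integrable fun v => Set.indicator (Set.Ici 0) (fun _ => A) (u - v / l) * K v :=
  hK.bdd_mul (c := |A|)
    ((measurable_const.indicator measurableSet_Ici).comp (by fun_prop)).aestronglyMeasurable
    (Eventually.of_forall fun _ => norm_indicator_le_norm_self (fun _ => A) _)

theorem tendsto_integral_indicator_Ici_comp_mul {K : ℝ → ℝ} (hK : Integrable K) (A l : ℝ) :
    Tendsto (fun u => ∫ v, Set.indicator (Set.Ici 0) (fun _ => A) (u - v / l) * K v) atTop
      (𝓝 (A * ∫ v, K v)) := by
  rw [← integral_const_mul]
  refine tendsto_integral_filter_of_dominated_convergence (fun v => |A| * |K v|)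
    (Eventually.of_forall fun u =>
      (integrable_indicator_Ici_comp_mul hK A u l).aestronglyMeasurable)
    (Eventually.of_forall fun u => Eventually.of_forall fun v => ?_)
    (hK.abs.const_mul _) (Eventually.of_forall fun v => ?_)
  · rw [norm_mul]
    exact mul_le_mul_of_nonneg_right (norm_indicator_le_norm_self (fun _ => A) _) (abs_nonneg _)
  · refine tendsto_const_nhds.congr' ?_
    filter_upwards [eventually_ge_atTop (v / l)] with u hu
    rw [Set.indicator_of_mem (Set.mem_Ici.2 (sub_nonneg.2 hu))]

theorem integral_mul_comp_mul_sub (g K : ℝ → ℝ) {l : ℝ} (hl : 0 < l) (u : ℝ) :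
    l * ∫ t, g t * K (l * (u - t)) = ∫ v, g (u - v / l) * K v := by
  have hscale := Measure.integral_comp_mul_left (fun v => g (u - v / l) * K v) l
  rw [abs_of_pos (inv_pos.2 hl), smul_eq_mul, eq_inv_mul_iff_mul_eq₀ hl.ne'] at hscale
  rw [← hscale, ← integral_sub_left_eq_self _ _ u]
  simp only [mul_div_cancel_left₀ _ hl.ne', sub_sub_cancel]

theorem tendsto_integral_comp_mul_fejerKernel {B : ℝ → ℝ} {A C : ℝ} (hBm : Measurable B)
    (hB0 : ∀ t, 0 ≤ B t) (hBC : ∀ t, B t ≤ C) (hBneg : ∀ t < 0, B t = 0) {G : ℂ → ℂ}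
    (hGc : ContinuousOn G {w | 0 ≤ w.re})
    (hG : ∀ w : ℂ, 0 < w.re →
      ∫ t, ((B t - Set.indicator (Set.Ici 0) (fun _ => A) t : ℝ) : ℂ) * Complex.exp (-(w * t)) =
        G w)
    {l : ℝ} (hl : 0 < l) :
    Tendsto (fun u => ∫ v, B (u - v / l) * fejerKernel v) atTop
      (𝓝 (A * ∫ v, fejerKernel v)) := by
  have hdiff := (tendsto_integral_mul_fejerKernel (C := C + |A|)
    (hBm.sub (measurable_const.indicator measurableSet_Ici))
    (fun t => (abs_sub _ _).trans (add_le_add ((abs_of_nonneg (hB0 t)).trans_le (hBC t))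
      (norm_indicator_le_norm_self (fun _ => A) t)))
    (fun t ht => by simp [hBneg t ht, ht.not_ge]) hGc hG hl).const_mul l
  have hstep := tendsto_integral_indicator_Ici_comp_mul integrable_fejerKernel A l
  rw [mul_zero] at hdiff
  refine (zero_add (A * ∫ v, fejerKernel v) ▸ hdiff.add hstep).congr fun u => ?_
  rw [integral_mul_comp_mul_sub _ _ hl, ← integral_add _ (integrable_indicator_Ici_comp_mul
    integrable_fejerKernel A u l)]
  · simp only [Pi.sub_apply, ← add_mul, sub_add_cancel]
  · simp only [Pi.sub_apply, sub_mul]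
    exact (integrable_comp_sub_div_mul hBm hB0 hBC integrable_fejerKernel u l).sub
      (integrable_indicator_Ici_comp_mul integrable_fejerKernel A u l)

section SlowlyDecreasing

variable {B K : ℝ → ℝ} {C : ℝ}

theorem le_mul_exp_of_monotone (hB0 : ∀ t, 0 ≤ B t)
    (hmono : Monotone fun t => B t * Real.exp t) {s t h : ℝ} (hst : s ≤ t) (hts : t ≤ s + h) :
    B s ≤ B t * Real.exp h := by
  refine le_of_mul_le_mul_right ((hmono hst).trans ?_) (Real.exp_pos s)
  rw [mul_assoc, ← Real.exp_add]
  exact mul_le_mul_of_nonneg_left (Real.exp_le_exp.2 (by linarith)) (hB0 t)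

theorem div_sq_mem_Icc {R v : ℝ} (hR : 0 < R) (hv : v ∈ Set.Icc (-R) R) :
    v / R ^ 2 ∈ Set.Icc (-R⁻¹) R⁻¹ := by
  have hsq : R⁻¹ * R ^ 2 = R := by field_simp
  constructor
  · rw [le_div_iff₀ (by positivity), neg_mul, hsq]
    exact hv.1
  · rw [div_le_iff₀ (by positivity), hsq]
    exact hv.2

theorem mul_setIntegral_le_exp_mul_integral (hBm : Measurable B) (hB0 : ∀ t, 0 ≤ B t)
    (hBC : ∀ t, B t ≤ C) (hmono : Monotone fun t => B t * Real.exp t) (hK : Integrable K)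
    (hK0 : ∀ v, 0 ≤ K v) {R : ℝ} (hR : 0 < R) (u : ℝ) :
    B (u - R⁻¹) * ∫ v in Set.Icc (-R) R, K v ≤
      Real.exp (2 * R⁻¹) * ∫ v, B (u - v / R ^ 2) * K v := by
  have hint := integrable_comp_sub_div_mul hBm hB0 hBC hK u (R ^ 2)
  rw [← integral_const_mul, ← integral_const_mul]
  calc ∫ v in Set.Icc (-R) R, B (u - R⁻¹) * K v
      ≤ ∫ v in Set.Icc (-R) R, Real.exp (2 * R⁻¹) * (B (u - v / R ^ 2) * K v) := by
        refine setIntegral_mono_on (hK.integrableOn.const_mul _) (hint.integrableOn.const_mul _)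
          measurableSet_Icc fun v hv => ?_
        obtain ⟨hlow, hupp⟩ := div_sq_mem_Icc hR hv
        rw [← mul_assoc, mul_comm (Real.exp _)]
        exact mul_le_mul_of_nonneg_right
          (le_mul_exp_of_monotone hB0 hmono (by linarith) (by linarith)) (hK0 v)
    _ ≤ ∫ v, Real.exp (2 * R⁻¹) * (B (u - v / R ^ 2) * K v) :=
        setIntegral_le_integral (hint.const_mul _) (Eventually.of_forall fun v =>
          mul_nonneg (Real.exp_pos _).le (mul_nonneg (hB0 _) (hK0 v)))

theorem integral_le_mul_setIntegral_add (hBm : Measurable B) (hB0 : ∀ t, 0 ≤ B t)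
    (hBC : ∀ t, B t ≤ C) (hmono : Monotone fun t => B t * Real.exp t) (hK : Integrable K)
    (hK0 : ∀ v, 0 ≤ K v) {R : ℝ} (hR : 0 < R) (u : ℝ) :
    ∫ v, B (u - v / R ^ 2) * K v ≤ B (u + R⁻¹) * Real.exp (2 * R⁻¹) * (∫ v in Set.Icc (-R) R, K v) +
      C * ((∫ v, K v) - ∫ v in Set.Icc (-R) R, K v) := by
  have hint := integrable_comp_sub_div_mul hBm hB0 hBC hK u (R ^ 2)
  rw [← integral_add_compl measurableSet_Icc hint (s := Set.Icc (-R) R),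
    ← setIntegral_compl measurableSet_Icc hK, ← integral_const_mul, ← integral_const_mul]
  refine add_le_add ?_ ?_
  · refine setIntegral_mono_on hint.integrableOn (hK.integrableOn.const_mul _) measurableSet_Icc
      fun v hv => ?_
    obtain ⟨hlow, hupp⟩ := div_sq_mem_Icc hR hv
    exact mul_le_mul_of_nonneg_right
      (le_mul_exp_of_monotone hB0 hmono (by linarith) (by linarith)) (hK0 v)
  · exact setIntegral_mono hint.integrableOn (hK.integrableOn.const_mul _)
      fun v => mul_le_mul_of_nonneg_right (hBC _) (hK0 v)

theorem tendsto_of_tendsto_integral_comp_mul (hBm : Measurable B) (hB0 : ∀ t, 0 ≤ B t)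
    (hBC : ∀ t, B t ≤ C) (hmono : Monotone fun t => B t * Real.exp t) (hK : Integrable K)
    (hK0 : ∀ v, 0 ≤ K v) (hKpos : 0 < ∫ v, K v) {A : ℝ}
    (hlim : ∀ l > 0, Tendsto (fun u => ∫ v, B (u - v / l) * K v) atTop (𝓝 (A * ∫ v, K v))) :
    Tendsto B atTop (𝓝 A) := by
  have hmass : Tendsto (fun R : ℝ => ∫ v in Set.Icc (-R) R, K v) atTop (𝓝 (∫ v, K v)) :=
    (aecover_Icc tendsto_neg_atTop_atBot tendsto_id).integral_tendsto_of_countably_generated hK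
  have hmass0 (R : ℝ) : 0 ≤ ∫ v in Set.Icc (-R) R, K v := integral_nonneg hK0
  have hexp : Tendsto (fun R : ℝ => Real.exp (2 * R⁻¹)) atTop (𝓝 1) := by
    simpa [Function.comp_def] using
      (Real.continuous_exp.tendsto _).comp (tendsto_inv_atTop_zero.const_mul (2 : ℝ))
  refine tendsto_order.2 ⟨fun b hb => ?_, fun b hb => ?_⟩
  · have hbound := ((hexp.const_mul b).mul hmass).add ((hmass.const_sub (∫ v, K v)).const_mul C)
    rw [mul_one, sub_self, mul_zero, add_zero] at hbound
    obtain ⟨R, hRlt, hR⟩ := ((hbound.eventually_lt_const (mul_lt_mul_of_pos_right hb hKpos)).and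
      (eventually_gt_atTop 0)).exists
    filter_upwards [(tendsto_atTop_add_const_right _ (-R⁻¹) tendsto_id).eventually
      ((hlim (R ^ 2) (by positivity)).eventually_const_lt hRlt)] with u hu
    by_contra! hle
    have hupper := integral_le_mul_setIntegral_add hBm hB0 hBC hmono hK hK0 hR (u + -R⁻¹)
    rw [neg_add_cancel_right] at hupper
    have := mul_le_mul_of_nonneg_right (mul_le_mul_of_nonneg_right hle
      (Real.exp_pos (2 * R⁻¹)).le) (hmass0 R)
    exact (hu.trans_le hupper).not_ge (by linarith)
  · have hbound := (hexp.mul_const (A * ∫ v, K v)).sub (hmass.const_mul b)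
    rw [one_mul, ← sub_mul] at hbound
    obtain ⟨R, hRlt, hR⟩ := ((hbound.eventually_lt_const
      (mul_neg_of_neg_of_pos (sub_neg.2 hb) hKpos)).and (eventually_gt_atTop 0)).exists
    filter_upwards [(tendsto_atTop_add_const_right _ R⁻¹ tendsto_id).eventually
      (((hlim (R ^ 2) (by positivity)).const_mul (Real.exp (2 * R⁻¹))).eventually_lt_const
        (sub_neg.1 hRlt))] with u hu
    have hlower := mul_setIntegral_le_exp_mul_integral hBm hB0 hBC hmono hK hK0 hR (u + R⁻¹)
    rw [add_sub_cancel_right] at hlower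
    exact lt_of_mul_lt_mul_right (hlower.trans_lt hu) (hmass0 R)

end SlowlyDecreasing

/-- The normalized summatory function `x⁻¹ ∑_{1 ≤ k ≤ x} f k` in the logarithmic variable
`t = log x`; its Laplace transform at `w` is `LSeries f (1 + w) / (1 + w)`. -/
noncomputable def logScaleMean (f : ℕ → ℝ) (t : ℝ) : ℝ :=
  (∑ k ∈ Icc 1 ⌊Real.exp t⌋₊, f k) * Real.exp (-t)

theorem logScaleMean_of_neg (f : ℕ → ℝ) {t : ℝ} (ht : t < 0) : logScaleMean f t = 0 := by
  simp [logScaleMean, Nat.floor_eq_zero.2 (Real.exp_lt_one_iff.2 ht)]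

theorem logScaleMean_log (f : ℕ → ℝ) {N : ℕ} (hN : 0 < N) :
    logScaleMean f (Real.log N) = (∑ k ∈ Icc 1 N, f k) / N := by
  have hpos : (0 : ℝ) < N := by exact_mod_cast hN
  rw [logScaleMean, Real.exp_neg, Real.exp_log hpos, Nat.floor_natCast, div_eq_mul_inv]

theorem logScaleMean_mul_exp (f : ℕ → ℝ) (t : ℝ) :
    logScaleMean f t * Real.exp t = ∑ k ∈ Icc 1 ⌊Real.exp t⌋₊, f k := by
  rw [logScaleMean, mul_assoc, ← Real.exp_add, neg_add_cancel, Real.exp_zero, mul_one]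

section NonnegCoefficients

variable {f : ℕ → ℝ} (hf0 : ∀ n, 0 ≤ f n)
include hf0

theorem logScaleMean_nonneg (t : ℝ) : 0 ≤ logScaleMean f t :=
  mul_nonneg (sum_nonneg fun k _ => hf0 k) (Real.exp_pos _).le

theorem monotone_logScaleMean_mul_exp : Monotone fun t => logScaleMean f t * Real.exp t := by
  simp only [logScaleMean_mul_exp]
  exact fun s t hst => sum_le_sum_of_subset_of_nonneg
    (Icc_subset_Icc_right (Nat.floor_mono (Real.exp_le_exp.2 hst))) fun k _ _ => hf0 k

theorem measurable_logScaleMean : Measurable (logScaleMean f) := by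
  have heq : logScaleMean f = fun t => logScaleMean f t * Real.exp t * Real.exp (-t) := by
    simp only [logScaleMean_mul_exp]
    rfl
  rw [heq]
  exact (monotone_logScaleMean_mul_exp hf0).measurable.mul (by fun_prop)

variable {C : ℝ} (hC : ∀ n : ℕ, ∑ k ∈ Icc 1 n, f k ≤ C * n)
include hC

theorem logScaleMean_le (t : ℝ) : logScaleMean f t ≤ C := by
  have hC0 : 0 ≤ C := by simpa using (sum_nonneg fun k _ => hf0 k).trans (hC 1)
  refine le_of_mul_le_mul_right ?_ (Real.exp_pos t)
  rw [logScaleMean_mul_exp]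
  exact (hC _).trans (mul_le_mul_of_nonneg_left (Nat.floor_le (Real.exp_pos t).le) hC0)

theorem LSeries_one_add_eq_mul_integral_logScaleMean {w : ℂ} (hw : 0 < w.re) :
    LSeries (fun n => (f n : ℂ)) (1 + w) =
      (1 + w) * ∫ t in Set.Ioi 0, (logScaleMean f t : ℂ) * Complex.exp (-w * t) := by
  have hO : (fun n : ℕ => ∑ k ∈ Icc 1 n, f k) =O[atTop] fun n => (n : ℝ) ^ (1 : ℝ) := by
    refine Asymptotics.IsBigO.of_bound C (Eventually.of_forall fun n => ?_)
    rw [Real.norm_of_nonneg (sum_nonneg fun k _ => hf0 k), Real.rpow_one, Real.norm_natCast]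
    exact hC n
  have himage : Real.exp '' Set.Ioi 0 = Set.Ioi 1 := by
    ext y
    exact ⟨fun ⟨t, ht, hty⟩ => hty ▸ Real.one_lt_exp_iff.2 ht, fun hy =>
      ⟨Real.log y, Real.log_pos hy, Real.exp_log (zero_lt_one.trans hy)⟩⟩
  rw [LSeries_eq_mul_integral_of_nonneg f zero_le_one (by simpa using hw) hO hf0, ← himage,
    integral_image_eq_integral_abs_deriv_smul measurableSet_Ioi
      (fun t _ => (Real.hasDerivAt_exp t).hasDerivWithinAt) Real.exp_injective.injOn]
  congr 1
  refine setIntegral_congr_fun measurableSet_Ioi fun t _ => ?_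
  have hcpow : (Real.exp t : ℂ) ^ (-(1 + w + 1)) = Complex.exp (t * (-(1 + w + 1))) := by
    rw [Complex.cpow_def_of_ne_zero (by exact_mod_cast (Real.exp_pos t).ne'),
      ← Complex.ofReal_log (Real.exp_pos _).le, Real.log_exp]
  have hexp : Complex.exp t * Complex.exp (t * (-(1 + w + 1))) * Complex.exp t =
      Complex.exp (-w * t) := by
    rw [← Complex.exp_add, ← Complex.exp_add]
    ring_nf
  rw [hcpow, ← hexp, ← Complex.ofReal_sum, ← logScaleMean_mul_exp, abs_of_pos (Real.exp_pos t),
    Complex.real_smul]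
  push_cast
  ring

theorem integral_logScaleMean_sub_indicator (A : ℝ) {w : ℂ} (hw : 0 < w.re) :
    ∫ t, ((logScaleMean f t - Set.indicator (Set.Ici 0) (fun _ => A) t : ℝ) : ℂ) *
        Complex.exp (-(w * t)) =
      (LSeries (fun n => (f n : ℂ)) (1 + w) - A / w - A) / (1 + w) := by
  have hexp : IntegrableOn (fun t : ℝ => Complex.exp (-w * t)) (Set.Ioi 0) :=
    integrableOn_exp_mul_complex_Ioi (by simpa using hw) 0
  have hmean : IntegrableOn (fun t : ℝ => (logScaleMean f t : ℂ) * Complex.exp (-w * t))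
      (Set.Ioi 0) := by
    refine Integrable.bdd_mul (c := C) hexp (Complex.measurable_ofReal.comp
      (measurable_logScaleMean hf0)).aestronglyMeasurable (Eventually.of_forall fun t => ?_)
    rw [Complex.norm_real, Real.norm_of_nonneg (logScaleMean_nonneg hf0 t)]
    exact logScaleMean_le hf0 hC t
  have hhalfline : ∫ t, ((logScaleMean f t - Set.indicator (Set.Ici 0) (fun _ => A) t : ℝ) : ℂ) *
        Complex.exp (-(w * t)) =
      ∫ t in Set.Ioi 0, ((logScaleMean f t : ℂ) * Complex.exp (-w * t) -
        A * Complex.exp (-w * t)) := by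
    rw [← integral_Ici_eq_integral_Ioi, ← integral_indicator measurableSet_Ici]
    refine integral_congr_ae (Eventually.of_forall fun t => ?_)
    rcases lt_or_ge t 0 with ht | ht
    · simp [logScaleMean_of_neg f ht, ht.not_ge]
    · simp only [Set.indicator_of_mem (Set.mem_Ici.2 ht)]
      push_cast
      ring_nf
  have hw0 : w ≠ 0 := by
    rintro rfl
    simp at hw
  have hw1 : 1 + w ≠ 0 := fun h => by
    have := congrArg Complex.re h
    simp only [Complex.add_re, Complex.one_re, Complex.zero_re] at this
    linarith
  rw [hhalfline, integral_sub hmean (hexp.const_mul _), integral_const_mul,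
    integral_exp_mul_complex_Ioi (by simpa using hw),
    LSeries_one_add_eq_mul_integral_logScaleMean hf0 hC hw]
  simp only [Complex.ofReal_zero, mul_zero, Complex.exp_zero]
  field_simp
  ring

/-- The Wiener–Ikehara theorem, for coefficients satisfying a Chebyshev bound. -/
theorem tendsto_sum_div_of_continuousOn_LSeries_sub {A : ℝ} {F : ℂ → ℂ}
    (hFc : ContinuousOn F {s | 1 ≤ s.re})
    (hF : ∀ s : ℂ, 1 < s.re → F s = LSeries (fun n => (f n : ℂ)) s - A / (s - 1)) :
    Tendsto (fun N : ℕ => (∑ k ∈ Icc 1 N, f k) / N) atTop (𝓝 A) := by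
  have hGc : ContinuousOn (fun w => (F (1 + w) - A) / (1 + w)) {w | 0 ≤ w.re} := by
    refine ContinuousOn.div ((hFc.comp (by fun_prop) fun w hw => by simpa using hw).sub
      continuousOn_const) (by fun_prop) fun w (hw : 0 ≤ w.re) h => ?_
    have := congrArg Complex.re h
    simp only [Complex.add_re, Complex.one_re, Complex.zero_re] at this
    linarith
  have hlaplace (w : ℂ) (hw : 0 < w.re) :
      ∫ t, ((logScaleMean f t - Set.indicator (Set.Ici 0) (fun _ => A) t : ℝ) : ℂ) *
        Complex.exp (-(w * t)) = (F (1 + w) - A) / (1 + w) := by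
    rw [integral_logScaleMean_sub_indicator hf0 hC A hw, hF _ (by simpa using hw),
      add_sub_cancel_left]
  have hmean : Tendsto (logScaleMean f) atTop (𝓝 A) :=
    tendsto_of_tendsto_integral_comp_mul (measurable_logScaleMean hf0) (logScaleMean_nonneg hf0)
      (logScaleMean_le hf0 hC) (monotone_logScaleMean_mul_exp hf0) integrable_fejerKernel
      fejerKernel_nonneg integral_fejerKernel_pos fun l hl =>
        tendsto_integral_comp_mul_fejerKernel (measurable_logScaleMean hf0)
          (logScaleMean_nonneg hf0) (logScaleMean_le hf0 hC)
          (fun t ht => logScaleMean_of_neg f ht) hGc hlaplace hl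
  refine (hmean.comp (Real.tendsto_log_atTop.comp tendsto_natCast_atTop_atTop)).congr' ?_
  filter_upwards [eventually_gt_atTop 0] with N hN using logScaleMean_log f hN

end NonnegCoefficients

end WienerIkehara

section PrimesInProgressions

open scoped Topology ArithmeticFunction.vonMangoldt

/-- The constant in Chebyshev's upper bound `ψ(N) ≤ (log 4 + 4) N`. -/
noncomputable def chebyshevConst : ℝ := Real.log 4 + 4

theorem chebyshevConst_pos : 0 < chebyshevConst :=
  add_pos (Real.log_pos (by norm_num)) (by norm_num)

theorem sum_vonMangoldt_le (N : ℕ) : ∑ k ∈ Ioc 0 N, Λ k ≤ chebyshevConst * N := by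
  simpa only [Chebyshev.psi, Nat.floor_natCast, chebyshevConst] using
    Chebyshev.psi_le_const_mul_self (Nat.cast_nonneg N : (0 : ℝ) ≤ N)

theorem tendsto_sum_residueClass_div {q : ℕ} [NeZero q] {a : ZMod q} (ha : IsUnit a) :
    Tendsto (fun N : ℕ => (∑ k ∈ Ioc 0 N, ArithmeticFunction.vonMangoldt.residueClass a k) / N)
      atTop (𝓝 ((q.totient : ℝ)⁻¹)) := by
  simp only [← Icc_add_one_left_eq_Ioc, zero_add]
  refine tendsto_sum_div_of_continuousOn_LSeries_sub
    (ArithmeticFunction.vonMangoldt.residueClass_nonneg a)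
    (fun n => (sum_le_sum fun k _ => ArithmeticFunction.vonMangoldt.residueClass_le a k).trans
      (sum_vonMangoldt_le n))
    (ArithmeticFunction.vonMangoldt.continuousOn_LFunctionResidueClassAux a) fun s hs => ?_
  simpa using ArithmeticFunction.vonMangoldt.eqOn_LFunctionResidueClassAux ha hs

end PrimesInProgressions

section SelbergFunction

open ArithmeticFunction
open scoped ArithmeticFunction.Moebius ArithmeticFunction.zeta

theorem sum_Ioc_sum_divisorsAntidiagonal {E : Type*} [AddCommMonoid E] (F : ℕ → ℕ → E) (N : ℕ) :
    ∑ n ∈ Ioc 0 N, ∑ x ∈ n.divisorsAntidiagonal, F x.1 x.2 =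
      ∑ d ∈ Ioc 0 N, ∑ m ∈ Ioc 0 (N / d), F d m := by
  rw [sum_sigma', sum_sigma']
  refine sum_bij' (fun a _ => ⟨a.2.1, a.2.2⟩) (fun b _ => ⟨b.1 * b.2, (b.1, b.2)⟩) ?_ ?_ ?_
    (fun _ _ => rfl) (fun _ _ => rfl)
  · rintro ⟨n, d, m⟩ h
    obtain ⟨⟨hn, hnN⟩, rfl, -⟩ : (0 < n ∧ n ≤ N) ∧ d * m = n ∧ n ≠ 0 := by simpa using h
    have hd := Nat.pos_of_mul_pos_right hn
    simp only [mem_sigma, mem_Ioc, Nat.le_div_iff_mul_le hd]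
    exact ⟨⟨hd, (Nat.le_mul_of_pos_right d (Nat.pos_of_mul_pos_left hn)).trans hnN⟩,
      Nat.pos_of_mul_pos_left hn, by rwa [mul_comm]⟩
  · rintro ⟨d, m⟩ h
    simp only [mem_sigma, mem_Ioc, Nat.mem_divisorsAntidiagonal] at h ⊢
    obtain ⟨⟨hd, -⟩, hm, hmN⟩ := h
    rw [Nat.le_div_iff_mul_le hd, mul_comm] at hmN
    exact ⟨⟨Nat.mul_pos hd hm, hmN⟩, trivial, (Nat.mul_pos hd hm).ne'⟩
  · rintro ⟨n, d, m⟩ h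
    obtain ⟨-, rfl, -⟩ : (0 < n ∧ n ≤ N) ∧ d * m = n ∧ n ≠ 0 := by simpa using h
    rfl

/-- Selberg's function `Λ₂ = Λ log + Λ * Λ`. -/
noncomputable def selbergLambda : ArithmeticFunction ℝ :=
  pmul Λ log + Λ * Λ

theorem pmul_log_mul (f g : ArithmeticFunction ℝ) :
    pmul log (f * g) = pmul log f * g + f * pmul log g := by
  ext n
  simp only [pmul_apply, mul_apply, ArithmeticFunction.add_apply, mul_sum, ← sum_add_distrib]
  refine sum_congr rfl fun x hx => ?_
  obtain ⟨rfl, hn⟩ := Nat.mem_divisorsAntidiagonal.1 hx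
  obtain ⟨h1, h2⟩ := mul_ne_zero_iff.1 hn
  rw [log_apply, log_apply, log_apply, Nat.cast_mul,
    Real.log_mul (Nat.cast_ne_zero.2 h1) (Nat.cast_ne_zero.2 h2)]
  ring

theorem selbergLambda_mul_zeta : selbergLambda * ζ = pmul log log :=
  calc selbergLambda * ζ = pmul log Λ * ζ + Λ * (Λ * ζ) := by
        rw [selbergLambda, add_mul, mul_assoc, pmul_comm]
    _ = pmul log (Λ * ζ) := by
        rw [pmul_log_mul, pmul_zeta, vonMangoldt_mul_zeta]
    _ = pmul log log := by rw [vonMangoldt_mul_zeta]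

theorem selbergLambda_eq_moebius_mul :
    selbergLambda = (μ : ArithmeticFunction ℝ) * pmul log log := by
  rw [← selbergLambda_mul_zeta, mul_comm selbergLambda, ← mul_assoc, coe_moebius_mul_coe_zeta,
    one_mul]

theorem selbergLambda_apply (n : ℕ) :
    selbergLambda n = Λ n * Real.log n + ∑ x ∈ n.divisorsAntidiagonal, Λ x.1 * Λ x.2 := by
  simp only [selbergLambda, ArithmeticFunction.add_apply, pmul_apply, mul_apply, log_apply]

theorem vonMangoldt_mul_log_le_selbergLambda (n : ℕ) : Λ n * Real.log n ≤ selbergLambda n := by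
  rw [selbergLambda_apply]
  exact le_add_of_nonneg_right
    (sum_nonneg fun x _ => mul_nonneg vonMangoldt_nonneg vonMangoldt_nonneg)

theorem selbergLambda_nonneg (n : ℕ) : 0 ≤ selbergLambda n :=
  (mul_nonneg vonMangoldt_nonneg (Real.log_natCast_nonneg n)).trans
    (vonMangoldt_mul_log_le_selbergLambda n)

theorem log_natCast_le_log_natCast {m n : ℕ} (h : m ≤ n) : Real.log m ≤ Real.log n := by
  rcases m.eq_zero_or_pos with rfl | hm
  · simpa using Real.log_natCast_nonneg n
  · exact Real.log_le_log (Nat.cast_pos.2 hm) (Nat.cast_le.2 h)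

-- Compare `∑ Λ(k) ⌊n/k⌋ = ∑ log k ≤ n log n` with `n ∑ Λ(k)/k`.
theorem sum_vonMangoldt_div_le (n : ℕ) :
    ∑ k ∈ Ioc 0 n, Λ k / k ≤ Real.log n + chebyshevConst := by
  rcases n.eq_zero_or_pos with rfl | hn
  · simp [chebyshevConst_pos.le]
  have hlog : ∑ k ∈ Ioc 0 n, Λ k * ((n / k : ℕ) : ℝ) ≤ n * Real.log n := by
    rw [← sum_Ioc_mul_zeta_eq_sum, vonMangoldt_mul_zeta]
    simpa using sum_le_card_nsmul (Ioc 0 n) (fun k => log k) (Real.log n) fun k hk =>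
      log_natCast_le_log_natCast (mem_Ioc.1 hk).2
  have hfloor (k : ℕ) : n * (Λ k / k) ≤ Λ k * ((n / k : ℕ) : ℝ) + Λ k := by
    have : (n : ℝ) / k ≤ ((n / k : ℕ) : ℝ) + 1 := by
      rw [← Nat.floor_div_eq_div (K := ℝ)]
      exact (Nat.lt_floor_add_one _).le
    calc n * (Λ k / k) = Λ k * ((n : ℝ) / k) := by ring
      _ ≤ Λ k * (((n / k : ℕ) : ℝ) + 1) := mul_le_mul_of_nonneg_left this vonMangoldt_nonneg
      _ = _ := by ring
  refine le_of_mul_le_mul_left ?_ (Nat.cast_pos.2 hn : (0 : ℝ) < n)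
  calc n * ∑ k ∈ Ioc 0 n, Λ k / k ≤ ∑ k ∈ Ioc 0 n, (Λ k * ((n / k : ℕ) : ℝ) + Λ k) := by
        rw [mul_sum]
        exact sum_le_sum fun k _ => hfloor k
    _ ≤ n * Real.log n + chebyshevConst * n := by
        rw [sum_add_distrib]
        exact add_le_add hlog (sum_vonMangoldt_le n)
    _ = n * (Real.log n + chebyshevConst) := by ring

/-- The constant in the Selberg-type upper bound `∑_{k ≤ n} Λ₂(k) ≤ C n (1 + log n)`. -/
noncomputable def selbergConst : ℝ := 2 * chebyshevConst + chebyshevConst ^ 2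

theorem selbergConst_pos : 0 < selbergConst :=
  add_pos (mul_pos two_pos chebyshevConst_pos) (pow_pos chebyshevConst_pos 2)

theorem sum_vonMangoldt_mul_vonMangoldt_le (n : ℕ) :
    ∑ k ∈ Ioc 0 n, (Λ * Λ) k ≤ chebyshevConst * n * (Real.log n + chebyshevConst) := by
  have hc := chebyshevConst_pos
  rw [sum_Ioc_mul_eq_sum_sum]
  calc ∑ k ∈ Ioc 0 n, Λ k * ∑ m ∈ Ioc 0 (n / k), Λ m
      ≤ ∑ k ∈ Ioc 0 n, Λ k * (chebyshevConst * ((n : ℝ) / k)) := by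
        gcongr with k
        exact (sum_vonMangoldt_le (n / k)).trans (by gcongr; exact Nat.cast_div_le)
    _ = chebyshevConst * n * ∑ k ∈ Ioc 0 n, Λ k / k := by
        rw [mul_sum]
        exact sum_congr rfl fun k _ => by ring
    _ ≤ _ := mul_le_mul_of_nonneg_left (sum_vonMangoldt_div_le n) (by positivity)

theorem sum_selbergLambda_le (n : ℕ) :
    ∑ k ∈ Ioc 0 n, selbergLambda k ≤ selbergConst * (n * (1 + Real.log n)) := by
  have hc := chebyshevConst_pos
  have hlog := Real.log_natCast_nonneg n
  have hΛlog : ∑ k ∈ Ioc 0 n, (pmul Λ log) k ≤ chebyshevConst * n * Real.log n := by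
    refine le_trans ?_ (mul_le_mul_of_nonneg_right (sum_vonMangoldt_le n) hlog)
    rw [sum_mul]
    exact sum_le_sum fun k hk => mul_le_mul_of_nonneg_left
      (log_natCast_le_log_natCast (mem_Ioc.1 hk).2) vonMangoldt_nonneg
  have hn : 0 ≤ chebyshevConst * n := by positivity
  have hnlog : 0 ≤ chebyshevConst ^ 2 * n * Real.log n := by positivity
  simp only [selbergLambda, ArithmeticFunction.add_apply, sum_add_distrib, selbergConst]
  linarith [sum_vonMangoldt_mul_vonMangoldt_le n]

end SelbergFunction

section FourierChar

open Complex
open scoped FourierTransform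

theorem fourierChar_intCast (n : ℤ) : (𝐞 (n : ℝ) : ℂ) = 1 := by
  rw [Real.fourierChar_apply, Complex.exp_eq_one_iff]
  exact ⟨n, by push_cast; ring⟩

theorem fourierChar_add (s t : ℝ) : (𝐞 (s + t) : ℂ) = 𝐞 s * 𝐞 t := by
  rw [AddChar.map_add_eq_mul, Circle.coe_mul]

theorem fourierChar_natCast_mul (n : ℕ) (t : ℝ) : (𝐞 (n * t) : ℂ) = (𝐞 t : ℂ) ^ n := by
  rw [← nsmul_eq_mul, AddChar.map_nsmul_eq_pow, Circle.coe_pow]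

theorem conj_fourierChar (t : ℝ) : (starRingEnd ℂ) (𝐞 t) = 𝐞 (-t) := by
  rw [AddChar.map_neg_eq_inv, Circle.coe_inv_eq_conj]

theorem norm_fourierChar_sub_one (t : ℝ) : ‖(𝐞 t : ℂ) - 1‖ = 2 * |Real.sin (Real.pi * t)| := by
  rw [Real.fourierChar_apply, mul_comm, norm_exp_I_mul_ofReal_sub_one, norm_mul, Real.norm_eq_abs,
    Real.norm_eq_abs, abs_two]
  ring_nf

theorem norm_fourierChar_sub_le (s t : ℝ) : ‖(𝐞 s : ℂ) - 𝐞 t‖ ≤ 2 * Real.pi * |s - t| := by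
  have hfactor : (𝐞 s : ℂ) - 𝐞 t = 𝐞 t * (𝐞 (s - t) - 1) := by
    rw [mul_sub, ← fourierChar_add, add_sub_cancel, mul_one]
  rw [hfactor, norm_mul, Circle.norm_coe, one_mul, norm_fourierChar_sub_one, mul_assoc]
  gcongr
  simpa [abs_mul, abs_of_pos Real.pi_pos] using Real.abs_sin_le_abs (x := Real.pi * (s - t))

theorem four_mul_abs_le_norm_fourierChar_sub_one {t : ℝ} (ht : |t| ≤ 1 / 2) :
    4 * |t| ≤ ‖(𝐞 t : ℂ) - 1‖ := by
  have hsin := Real.mul_abs_le_abs_sin (x := Real.pi * t) (by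
    rw [abs_mul, abs_of_pos Real.pi_pos]
    nlinarith [Real.pi_pos])
  rw [abs_mul, abs_of_pos Real.pi_pos, ← mul_assoc, div_mul_cancel₀ _ Real.pi_ne_zero] at hsin
  rw [norm_fourierChar_sub_one]
  linarith

theorem norm_sub_one_mul_sum_le {w : ℕ → ℝ} (hw : Monotone w) (hw0 : 0 ≤ w 0) {z : ℂ}
    (hz : ‖z‖ = 1) (Y : ℕ) :
    ‖(z - 1) * ∑ m ∈ Ioc 0 Y, (w m : ℂ) * z ^ m‖ ≤ 2 * w Y := by
  have hnorm {c : ℝ} (hc : 0 ≤ c) (m : ℕ) : ‖(c : ℂ) * z ^ m‖ = c := by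
    rw [norm_mul, norm_pow, hz, one_pow, mul_one, Complex.norm_of_nonneg hc]
  have htail : ‖w Y * z ^ (Y + 1) - (z - 1) * ∑ m ∈ Ioc 0 Y, (w m : ℂ) * z ^ m‖ ≤ w Y := by
    induction Y with
    | zero => simp [hz, abs_of_nonneg hw0]
    | succ Y ih =>
      have hstep : 0 ≤ w (Y + 1) - w Y := sub_nonneg.2 (hw Y.le_succ)
      calc _ = ‖(w Y * z ^ (Y + 1) - (z - 1) * ∑ m ∈ Ioc 0 Y, (w m : ℂ) * z ^ m) +
              ((w (Y + 1) - w Y : ℝ) : ℂ) * z ^ (Y + 1)‖ := by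
            rw [Finset.sum_Ioc_succ_top Y.zero_le]
            push_cast
            ring_nf
        _ ≤ w Y + (w (Y + 1) - w Y) := norm_add_le_of_le ih (hnorm hstep _).le
        _ = w (Y + 1) := by ring
  calc _ ≤ ‖w Y * z ^ (Y + 1)‖ +
        ‖w Y * z ^ (Y + 1) - (z - 1) * ∑ m ∈ Ioc 0 Y, (w m : ℂ) * z ^ m‖ := by
        simpa using norm_sub_le (w Y * z ^ (Y + 1))
          (w Y * z ^ (Y + 1) - (z - 1) * ∑ m ∈ Ioc 0 Y, (w m : ℂ) * z ^ m)
    _ ≤ w Y + w Y := add_le_add (hnorm (hw0.trans (hw Y.zero_le)) _).le htail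
    _ = 2 * w Y := (two_mul _).symm

theorem sum_inv_natCast_le (n : ℕ) : ∑ k ∈ Ioc 0 n, (k : ℝ)⁻¹ ≤ 1 + Real.log n := by
  have h := harmonic_le_one_add_log n
  rw [harmonic_eq_sum_Icc] at h
  push_cast at h
  exact h

end FourierChar

section LatticeSums

open scoped FourierTransform

variable {q : ℕ} [NeZero q]

theorem toCircle_intCast_eq_fourierChar (j : ℤ) :
    (ZMod.toCircle (j : ZMod q) : ℂ) = 𝐞 ((j : ℝ) / q) := by
  rw [ZMod.toCircle_intCast, Real.fourierChar_apply]
  push_cast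
  ring_nf

theorem norm_toCircle_sub_one_inv_le (x : ZMod q) :
    ‖(ZMod.toCircle x : ℂ) - 1‖⁻¹ ≤ q / 4 * |(x.valMinAbs : ℝ)|⁻¹ := by
  rcases eq_or_ne x 0 with rfl | hx
  · simp
  have hq : (0 : ℝ) < q := Nat.cast_pos.2 (NeZero.pos q)
  have hx' : (0 : ℝ) < |(x.valMinAbs : ℝ)| := by
    rwa [abs_pos, Int.cast_ne_zero, ne_eq, ZMod.valMinAbs_eq_zero]
  have hhalf : |(x.valMinAbs : ℝ) / q| ≤ 1 / 2 := by
    rw [abs_div, abs_of_pos hq, div_le_div_iff₀ hq two_pos, one_mul, ← Int.cast_abs,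
      ← Nat.cast_natAbs]
    exact_mod_cast (Nat.mul_le_mul_right 2 x.natAbs_valMinAbs_le).trans (Nat.div_mul_le_self q 2)
  have hlow := four_mul_abs_le_norm_fourierChar_sub_one hhalf
  rw [← toCircle_intCast_eq_fourierChar, ZMod.coe_valMinAbs, abs_div, abs_of_pos hq] at hlow
  calc _ ≤ (4 * (|(x.valMinAbs : ℝ)| / q))⁻¹ := inv_anti₀ (by positivity) hlow
    _ = _ := by field_simp

theorem four_div_le_norm_fourierChar_sub_one {b : ℤ} (hb : ¬(q : ℤ) ∣ b) :
    4 / (q : ℝ) ≤ ‖(𝐞 ((b : ℝ) / q) : ℂ) - 1‖ := by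
  have hx : (b : ZMod q) ≠ 0 := fun h => hb ((ZMod.intCast_zmod_eq_zero_iff_dvd b q).1 h)
  have hq : (0 : ℝ) < q := Nat.cast_pos.2 (NeZero.pos q)
  have hpos : 0 < ‖(ZMod.toCircle (b : ZMod q) : ℂ) - 1‖ := by
    rw [norm_pos_iff, sub_ne_zero, ne_eq, Circle.coe_eq_one]
    exact fun h => hx (ZMod.injective_toCircle (h.trans (AddChar.map_zero_eq_one _).symm))
  have habs : |((b : ZMod q).valMinAbs : ℝ)|⁻¹ ≤ 1 := by
    refine inv_le_one_of_one_le₀ ?_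
    exact_mod_cast Int.one_le_abs (mt (ZMod.valMinAbs_eq_zero _).1 hx)
  have hinv : ‖(ZMod.toCircle (b : ZMod q) : ℂ) - 1‖⁻¹ ≤ q / 4 :=
    (norm_toCircle_sub_one_inv_le _).trans (mul_le_of_le_one_right (by positivity) habs)
  rw [← toCircle_intCast_eq_fourierChar, ← inv_div]
  exact inv_le_of_inv_le₀ hpos hinv

theorem sum_norm_toCircle_sub_one_inv_le :
    ∑ x : ZMod q, ‖(ZMod.toCircle x : ℂ) - 1‖⁻¹ ≤ q * (1 + Real.log q) := by
  have hsub : univ.image (ZMod.valMinAbs : ZMod q → ℤ) ⊆ Icc (-(q : ℤ)) q := by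
    refine image_subset_iff.2 fun x _ => mem_Icc.2 (abs_le.1 ?_)
    rw [Int.abs_eq_natAbs]
    exact_mod_cast x.natAbs_valMinAbs_le.trans (Nat.div_le_self q 2)
  calc ∑ x : ZMod q, ‖(ZMod.toCircle x : ℂ) - 1‖⁻¹
      ≤ ∑ x : ZMod q, q / 4 * |(x.valMinAbs : ℝ)|⁻¹ :=
        sum_le_sum fun x _ => norm_toCircle_sub_one_inv_le x
    _ = q / 4 * ∑ j ∈ univ.image (ZMod.valMinAbs : ZMod q → ℤ), |(j : ℝ)|⁻¹ := by
        rw [← mul_sum, sum_image (ZMod.injective_valMinAbs.injOn)]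
    _ ≤ q / 4 * ∑ j ∈ Icc (-(q : ℤ)) q, |(j : ℝ)|⁻¹ := by
        gcongr
    _ = q / 2 * ∑ j ∈ Ioc 0 q, (j : ℝ)⁻¹ := by
        rw [sum_Icc_of_even_eq_range fun j => by simp, range_eq_Ico,
          sum_eq_sum_Ico_succ_bot q.succ_pos]
        simp only [← Ico_add_one_add_one_eq_Ioc]
        simp
        ring
    _ ≤ q / 2 * (1 + Real.log q) := by
        gcongr
        exact sum_inv_natCast_le q
    _ ≤ q * (1 + Real.log q) := by
        have := Real.log_natCast_nonneg q
        gcongr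
        exact half_le_self q.cast_nonneg

theorem card_filter_natCast_eq_le (D : ℕ) (x : ZMod q) :
    (#{j ∈ Ioc 0 D | ((j : ℕ) : ZMod q) = x} : ℝ) ≤ D / q + 1 := by
  have hq : (0 : ℚ) < q := Nat.cast_pos.2 (NeZero.pos q)
  have hcard := Nat.Ioc_filter_modEq_card 0 D (NeZero.pos q) x.val
  have hbound : ((#{j ∈ Ioc 0 D | j ≡ x.val [MOD q]} : ℤ) : ℚ) ≤ D / q + 1 := by
    rw [hcard, Int.cast_max, Int.cast_sub, Int.cast_zero]
    refine max_le ?_ (by positivity)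
    have h1 := Int.floor_le (((D : ℚ) - x.val) / q)
    have h2 := Int.lt_floor_add_one ((((0 : ℕ) : ℚ) - x.val) / q)
    rw [sub_div] at h1 h2
    simp only [Nat.cast_zero, zero_div] at h2 ⊢
    rw [sub_div, sub_div, zero_div]
    linarith
  have hfilter : {j ∈ Ioc 0 D | ((j : ℕ) : ZMod q) = x} = {j ∈ Ioc 0 D | j ≡ x.val [MOD q]} :=
    filter_congr fun j _ => by rw [← ZMod.natCast_eq_natCast_iff, ZMod.natCast_zmod_val]
  rw [hfilter]
  have hbound' := (Rat.cast_le (K := ℝ)).2 hbound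
  push_cast at hbound'
  exact hbound'

theorem sum_norm_fourierChar_sub_one_inv_le {a : ℤ} (ha : IsCoprime a (q : ℤ)) (D : ℕ) :
    ∑ j ∈ Ioc 0 D, ‖(𝐞 ((j : ℝ) * a / q) : ℂ) - 1‖⁻¹ ≤ (D / q + 1) * (q * (1 + Real.log q)) := by
  obtain ⟨u, hu⟩ := (ZMod.coe_int_isUnit_iff_isCoprime a q).2 ha.symm
  have hchar (j : ℕ) : (𝐞 ((j : ℝ) * a / q) : ℂ) = ZMod.toCircle ((j : ZMod q) * (u : ZMod q)) := by
    have hmul : (j : ZMod q) * (u : ZMod q) = ((j * a : ℤ) : ZMod q) := by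
      rw [hu, Int.cast_mul, Int.cast_natCast]
    rw [hmul, toCircle_intCast_eq_fourierChar, Int.cast_mul, Int.cast_natCast]
  calc ∑ j ∈ Ioc 0 D, ‖(𝐞 ((j : ℝ) * a / q) : ℂ) - 1‖⁻¹
      = ∑ x : ZMod q, ∑ j ∈ Ioc 0 D with ((j : ℕ) : ZMod q) = x,
          ‖(ZMod.toCircle (x * (u : ZMod q)) : ℂ) - 1‖⁻¹ := by
        rw [sum_fiberwise' _ _ fun x : ZMod q => ‖(ZMod.toCircle (x * (u : ZMod q)) : ℂ) - 1‖⁻¹]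
        simp only [hchar]
    _ ≤ ∑ x : ZMod q, (D / q + 1) * ‖(ZMod.toCircle (x * (u : ZMod q)) : ℂ) - 1‖⁻¹ := by
        gcongr with x
        rw [sum_const, nsmul_eq_mul]
        gcongr
        exact card_filter_natCast_eq_le D x
    _ = (D / q + 1) * ∑ x : ZMod q, ‖(ZMod.toCircle x : ℂ) - 1‖⁻¹ := by
        rw [← mul_sum]
        congr 1
        exact Fintype.sum_equiv (Units.mulRight u) _ _ fun x => rfl
    _ ≤ _ := by
        gcongr
        exact sum_norm_toCircle_sub_one_inv_le

end LatticeSums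

section CoprimeMoebius

open ArithmeticFunction
open scoped ArithmeticFunction.Moebius ArithmeticFunction.zeta FourierTransform Topology

/-- The Möbius function restricted to the integers coprime to `q`; it carries the dependence on `e`
of `μ (q * e)`. -/
noncomputable def coprimeMoebius (q : ℕ) : ArithmeticFunction ℝ :=
  ⟨fun n => if n.Coprime q then (μ n : ℝ) else 0, by simp⟩

theorem coprimeMoebius_apply (q n : ℕ) :
    coprimeMoebius q n = if n.Coprime q then (μ n : ℝ) else 0 := rfl

theorem moebius_mul_eq_mul_coprimeMoebius (q n : ℕ) :
    (μ (q * n) : ℝ) = μ q * coprimeMoebius q n := by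
  rw [coprimeMoebius_apply]
  split_ifs with h
  · rw [isMultiplicative_moebius.map_mul_of_coprime h.symm, Int.cast_mul]
  · rw [moebius_eq_zero_of_not_squarefree fun hs => h (Nat.squarefree_mul_iff.1 hs).1.symm,
      Int.cast_zero, mul_zero]

theorem isMultiplicative_coprimeMoebius (q : ℕ) : (coprimeMoebius q).IsMultiplicative := by
  refine ⟨by simp [coprimeMoebius_apply], fun {m n} hmn => ?_⟩
  simp only [coprimeMoebius_apply, Nat.coprime_mul_iff_left,
    isMultiplicative_moebius.map_mul_of_coprime hmn]
  split_ifs <;> simp_all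

theorem coprimeMoebius_mul_zeta_prime_pow {q p k : ℕ} (hp : p.Prime) (hk : 0 < k) :
    (coprimeMoebius q * ζ) (p ^ k) = if p ∣ q then 1 else 0 := by
  obtain ⟨k, rfl⟩ := Nat.exists_eq_succ_of_ne_zero hk.ne'
  rw [coe_mul_zeta_apply, Nat.sum_divisors_prime_pow hp, sum_range_succ', sum_eq_single 0]
  · by_cases h : p ∣ q <;>
      simp [coprimeMoebius_apply, hp.coprime_iff_not_dvd, h, moebius_apply_prime hp]
  · intro i _ hi
    simp [coprimeMoebius_apply, moebius_apply_prime_pow hp, hi]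
  · simp

theorem coprimeMoebius_mul_zeta_apply {q : ℕ} (hq : q ≠ 0) (n : ℕ) :
    (coprimeMoebius q * ζ) n = (Nat.factoredNumbers q.primeFactors).indicator 1 n := by
  classical
  induction n using Nat.recOnPosPrimePosCoprime with
  | zero => simp [Set.indicator, Nat.mem_factoredNumbers]
  | one => simp [Set.indicator, Nat.mem_factoredNumbers, coprimeMoebius_apply]
  | prime_pow p k hp hk =>
    simp [coprimeMoebius_mul_zeta_prime_pow hp hk, Set.indicator_apply,
      Nat.mem_factoredNumbers_iff_primeFactors_subset, hp.ne_zero, hk.ne', hp, hq,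
      Nat.primeFactors_prime_pow hk.ne' hp]
  | coprime a b ha hb hab iha ihb =>
    rw [((isMultiplicative_coprimeMoebius q).mul isMultiplicative_zeta.natCast
      ).map_mul_of_coprime hab, iha, ihb]
    simp [Set.indicator_apply, Nat.mem_factoredNumbers_iff_primeFactors_subset, ← ite_and,
      hab.primeFactors_mul, union_subset_iff, (zero_lt_one.trans ha).ne',
      (zero_lt_one.trans hb).ne', and_comm]

theorem coprimeMoebius_mul_zeta_nonneg {q : ℕ} (hq : q ≠ 0) (n : ℕ) :
    0 ≤ (coprimeMoebius q * ζ) n := by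
  rw [coprimeMoebius_mul_zeta_apply hq]
  exact Set.indicator_nonneg (fun _ _ => zero_le_one) n

theorem prod_primeFactors_one_sub_inv_inv {q : ℕ} (hq : q ≠ 0) :
    ∏ p ∈ q.primeFactors, (1 - (p : ℝ)⁻¹)⁻¹ = q / q.totient := by
  have h : (q.totient : ℝ) = q * ∏ p ∈ q.primeFactors, (1 - (p : ℝ)⁻¹) := by
    have h := congrArg (Rat.cast (K := ℝ)) (Nat.totient_eq_mul_prod_factors q)
    push_cast at h
    exact h
  rw [h, prod_inv_distrib, ← div_div, div_self (Nat.cast_ne_zero.2 hq), one_div]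

theorem sum_coprimeMoebius_mul_zeta_div_le {q : ℕ} (hq : q ≠ 0) (Y : ℕ) :
    ∑ k ∈ Ioc 0 Y, (coprimeMoebius q * ζ) k / k ≤ q / q.totient := by
  let inv : ℕ →* ℝ := (invMonoidHom : ℝ →* ℝ).comp (Nat.castRingHom ℝ).toMonoidHom
  have hsum : HasSum ((Nat.factoredNumbers q.primeFactors).indicator inv) (q / q.totient) := by
    rw [← prod_primeFactors_one_sub_inv_inv hq, ← hasSum_subtype_iff_indicator]
    have h := (EulerProduct.summable_and_hasSum_factoredNumbers_prod_filter_prime_geometric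
      (f := inv) (fun {p} hp => by
        simpa [inv] using inv_lt_one_of_one_lt₀ (Nat.one_lt_cast.2 hp.one_lt)) q.primeFactors).2
    rwa [filter_true_of_mem fun p => Nat.prime_of_mem_primeFactors] at h
  have hnonneg : ∀ k, 0 ≤ (Nat.factoredNumbers q.primeFactors).indicator inv k :=
    Set.indicator_nonneg fun k _ => inv_nonneg.2 k.cast_nonneg
  calc _ = ∑ k ∈ Ioc 0 Y, (Nat.factoredNumbers q.primeFactors).indicator inv k := by
        refine sum_congr rfl fun k _ => ?_
        classical
        rw [coprimeMoebius_mul_zeta_apply hq, Set.indicator_apply, Set.indicator_apply]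
        split_ifs <;> simp [inv]
    _ ≤ _ := sum_le_hasSum _ (fun k _ => hnonneg k) hsum

theorem prod_one_sub_inv_inv_le_card_add_one {s : Finset ℕ} (hs : ∀ p ∈ s, 2 ≤ p) :
    ∏ p ∈ s, (1 - (p : ℝ)⁻¹)⁻¹ ≤ #s + 1 := by
  induction s using Finset.induction_on_max with
  | empty => simp
  | insert a s ha ih =>
    have hs' : ∀ p ∈ s, 2 ≤ p := fun p hp => hs p (mem_insert_of_mem hp)
    have hcard : #s + 2 ≤ a := by
      have hsub : s ⊆ Ico 2 a := fun p hp => mem_Ico.2 ⟨hs' p hp, ha p hp⟩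
      have := card_le_card hsub
      rw [Nat.card_Ico] at this
      have := hs a (mem_insert_self a s)
      omega
    have hcard' : (#s : ℝ) + 2 ≤ a := by exact_mod_cast hcard
    have hfactor : (1 - (a : ℝ)⁻¹)⁻¹ ≤ (#s + 2) / (#s + 1) := by
      have ha0 : (0 : ℝ) < a := by linarith [(#s).cast_nonneg (α := ℝ)]
      rw [← inv_div]
      apply inv_anti₀ (by positivity)
      rw [div_le_iff₀ (by positivity), sub_mul, ← div_eq_inv_mul]
      have : ((#s : ℝ) + 2) / a ≤ 1 := (div_le_one ha0).2 hcard'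
      linarith
    have hmem : a ∉ s := fun h => lt_irrefl a (ha a h)
    rw [prod_insert hmem, card_insert_of_notMem hmem]
    calc _ ≤ ((#s : ℝ) + 2) / (#s + 1) * (#s + 1) :=
          mul_le_mul hfactor (ih hs') (prod_nonneg fun p _ =>
            inv_nonneg.2 (sub_nonneg.2 p.cast_inv_le_one)) (by positivity)
      _ = _ := by
          rw [div_mul_cancel₀ _ (by positivity)]
          push_cast
          ring

theorem card_primeFactors_le_log_div_log_two {q : ℕ} (hq : q ≠ 0) :
    (#q.primeFactors : ℝ) ≤ Real.log q / Real.log 2 := by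
  rw [le_div_iff₀ (Real.log_pos one_lt_two), ← Real.log_pow]
  have h : 2 ^ #q.primeFactors ≤ q :=
    (pow_card_le_prod _ _ _ fun p hp => (Nat.prime_of_mem_primeFactors hp).two_le).trans
      (Nat.le_of_dvd (Nat.pos_of_ne_zero hq) (Nat.prod_primeFactors_dvd q))
  exact Real.log_le_log (by positivity) (by exact_mod_cast h)

theorem tendsto_inv_totient_atTop : Tendsto (fun q : ℕ => (q.totient : ℝ)⁻¹) atTop (𝓝 0) := by
  have hlog : Tendsto (fun q : ℕ => Real.log q / q) atTop (𝓝 0) :=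
    Real.isLittleO_log_id_atTop.tendsto_div_nhds_zero.comp tendsto_natCast_atTop_atTop
  have hbound : Tendsto (fun q : ℕ => (Real.log q / Real.log 2 + 1) / q) atTop (𝓝 0) := by
    have h := (hlog.div_const (Real.log 2)).add (tendsto_one_div_atTop_nhds_zero_nat (𝕜 := ℝ))
    rw [zero_div, zero_add] at h
    exact h.congr fun q => by ring
  refine squeeze_zero' (.of_forall fun q => by positivity) ?_ hbound
  filter_upwards [eventually_ne_atTop 0] with q hq
  have hq' : (0 : ℝ) < q := Nat.cast_pos.2 (Nat.pos_of_ne_zero hq)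
  rw [le_div_iff₀ hq', inv_mul_eq_div, ← prod_primeFactors_one_sub_inv_inv hq]
  exact (prod_one_sub_inv_inv_le_card_add_one fun p hp =>
    (Nat.prime_of_mem_primeFactors hp).two_le).trans
      (by gcongr; exact card_primeFactors_le_log_div_log_two hq)

end CoprimeMoebius

section TypeI

open ArithmeticFunction
open scoped ArithmeticFunction.Moebius ArithmeticFunction.zeta FourierTransform Topology

/-- The exponential sum `∑_{m ≤ Y} (log m)² e(mθ)`, the inner sum of the divisor expansion of
`∑ selbergLambda n * e(nγ)`. -/
noncomputable def logSqExpSum (Y : ℕ) (θ : ℝ) : ℂ :=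
  ∑ m ∈ Ioc 0 Y, ((Real.log m ^ 2 : ℝ) : ℂ) * (𝐞 θ : ℂ) ^ m

theorem sum_mul_pmul_log_mul_fourierChar (f : ArithmeticFunction ℝ) (Y : ℕ) (θ : ℝ) :
    ∑ n ∈ Ioc 0 Y, ((f * pmul log log) n : ℂ) * 𝐞 (n * θ) =
      ∑ d ∈ Ioc 0 Y, (f d : ℂ) * logSqExpSum (Y / d) (d * θ) := by
  simp only [logSqExpSum, mul_sum]
  rw [← sum_Ioc_sum_divisorsAntidiagonal
    fun d m => (f d : ℂ) * (((Real.log m ^ 2 : ℝ) : ℂ) * (𝐞 (d * θ) : ℂ) ^ m)]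
  refine sum_congr rfl fun n _ => ?_
  rw [ArithmeticFunction.mul_apply, Complex.ofReal_sum, sum_mul]
  refine sum_congr rfl fun x hx => ?_
  rw [← (Nat.mem_divisorsAntidiagonal.1 hx).1, ← fourierChar_natCast_mul, pmul_apply, log_apply,
    ← sq, Complex.ofReal_mul, mul_assoc, Nat.cast_mul, mul_left_comm (x.2 : ℝ), mul_assoc]

theorem log_natCast_sq_monotone : Monotone fun m : ℕ => Real.log m ^ 2 := fun _ _ h =>
  pow_le_pow_left₀ (Real.log_natCast_nonneg _) (log_natCast_le_log_natCast h) 2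

theorem norm_fourierChar_sub_one_mul_norm_logSqExpSum_le (Y : ℕ) (θ : ℝ) :
    ‖(𝐞 θ : ℂ) - 1‖ * ‖logSqExpSum Y θ‖ ≤ 2 * Real.log Y ^ 2 := by
  rw [← norm_mul]
  exact norm_sub_one_mul_sum_le log_natCast_sq_monotone (by simp) (Circle.norm_coe _) Y

theorem norm_logSqExpSum_le (Y : ℕ) (θ : ℝ) : ‖logSqExpSum Y θ‖ ≤ Y * Real.log Y ^ 2 := by
  calc _ ≤ ∑ m ∈ Ioc 0 Y, Real.log Y ^ 2 := by
        refine norm_sum_le_of_le _ fun m hm => ?_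
        rw [norm_mul, norm_pow, Circle.norm_coe, one_pow, mul_one,
          Complex.norm_of_nonneg (by positivity)]
        exact log_natCast_sq_monotone (mem_Ioc.1 hm).2
    _ = _ := by rw [sum_const, Nat.card_Ioc, nsmul_eq_mul, Nat.sub_zero]

theorem sum_Ioc_filter_dvd {E : Type*} [AddCommMonoid E] {q : ℕ} (hq : 0 < q) (X : ℕ)
    (f : ℕ → E) : ∑ d ∈ Ioc 0 X with q ∣ d, f d = ∑ e ∈ Ioc 0 (X / q), f (q * e) := by
  symm
  refine sum_nbij' (q * ·) (· / q) ?_ ?_ (fun e _ => Nat.mul_div_cancel_left e hq)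
    (fun d hd => Nat.mul_div_cancel' (mem_filter.1 hd).2) fun _ _ => rfl
  · intro e he
    rw [mem_Ioc, Nat.le_div_iff_mul_le hq, mul_comm] at he
    exact mem_filter.2 ⟨mem_Ioc.2 ⟨Nat.mul_pos hq he.1, he.2⟩, dvd_mul_right q e⟩
  · intro d hd
    rw [mem_filter, mem_Ioc] at hd
    exact mem_Ioc.2 ⟨Nat.div_pos (Nat.le_of_dvd hd.1.1 hd.2) hq, Nat.div_le_div_right hd.1.2⟩

theorem coprimeMoebius_mul_pmul_log (q : ℕ) :
    coprimeMoebius q * pmul log log = coprimeMoebius q * ζ * selbergLambda := by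
  rw [← selbergLambda_mul_zeta, mul_assoc, mul_comm selbergLambda]

theorem coprimeMoebius_mul_pmul_log_nonneg {q : ℕ} (hq : q ≠ 0) (n : ℕ) :
    0 ≤ (coprimeMoebius q * pmul log log) n := by
  rw [coprimeMoebius_mul_pmul_log, ArithmeticFunction.mul_apply]
  exact sum_nonneg fun x _ =>
    mul_nonneg (coprimeMoebius_mul_zeta_nonneg hq _) (selbergLambda_nonneg _)

theorem sum_coprimeMoebius_mul_pmul_log_le {q : ℕ} (hq : q ≠ 0) (X : ℕ) :
    ∑ n ∈ Ioc 0 (X / q), (coprimeMoebius q * pmul log log) n ≤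
      selbergConst * (X * (1 + Real.log X)) * (q.totient : ℝ)⁻¹ := by
  have hC := selbergConst_pos
  have := Real.log_natCast_nonneg X
  have : (0 : ℝ) < q := Nat.cast_pos.2 (Nat.pos_of_ne_zero hq)
  have hinner (k : ℕ) : ∑ m ∈ Ioc 0 (X / q / k), selbergLambda m ≤
      selbergConst * (X / q * (1 + Real.log X)) / k := by
    calc _ ≤ selbergConst * ((X / q / k : ℕ) * (1 + Real.log (X / q / k : ℕ))) :=
          sum_selbergLambda_le _
      _ ≤ selbergConst * ((X / q / k : ℝ) * (1 + Real.log X)) := by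
          have hdiv : ((X / q / k : ℕ) : ℝ) ≤ X / q / k :=
            Nat.cast_div_le.trans (by gcongr; exact Nat.cast_div_le)
          have := Real.log_natCast_nonneg (X / q / k)
          have := log_natCast_le_log_natCast
            ((Nat.div_le_self (X / q) k).trans (Nat.div_le_self X q))
          gcongr
      _ = _ := by ring
  calc _ = ∑ k ∈ Ioc 0 (X / q),
        (coprimeMoebius q * ζ) k * ∑ m ∈ Ioc 0 (X / q / k), selbergLambda m := by
        rw [coprimeMoebius_mul_pmul_log, sum_Ioc_mul_eq_sum_sum]
    _ ≤ ∑ k ∈ Ioc 0 (X / q),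
        (coprimeMoebius q * ζ) k * (selbergConst * (X / q * (1 + Real.log X)) / k) :=
        sum_le_sum fun k _ =>
          mul_le_mul_of_nonneg_left (hinner k) (coprimeMoebius_mul_zeta_nonneg hq k)
    _ = selbergConst * (X / q * (1 + Real.log X)) *
        ∑ k ∈ Ioc 0 (X / q), (coprimeMoebius q * ζ) k / k := by
        rw [mul_sum]
        exact sum_congr rfl fun k _ => by ring
    _ ≤ selbergConst * (X / q * (1 + Real.log X)) * (q / q.totient) :=
        mul_le_mul_of_nonneg_left (sum_coprimeMoebius_mul_zeta_div_le hq _) (by positivity)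
    _ = _ := by field_simp

theorem norm_moebius_le_one (n : ℕ) : ‖((μ n : ℤ) : ℂ)‖ ≤ 1 := by
  rw [Complex.norm_intCast]
  exact_mod_cast abs_moebius_le_one

theorem norm_sum_moebius_mul_logSqExpSum_dvd_le {q : ℕ} (hq : q ≠ 0) (X : ℕ) (γ : ℝ) :
    ‖∑ d ∈ Ioc 0 X with q ∣ d, (μ d : ℂ) * logSqExpSum (X / d) (d * γ)‖ ≤
      selbergConst * (X * (1 + Real.log X)) * (q.totient : ℝ)⁻¹ := by
  have hfactor : ∑ d ∈ Ioc 0 X with q ∣ d, (μ d : ℂ) * logSqExpSum (X / d) (d * γ) =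
      μ q * ∑ n ∈ Ioc 0 (X / q),
        ((coprimeMoebius q * pmul log log) n : ℂ) * 𝐞 (n * (q * γ)) := by
    rw [sum_Ioc_filter_dvd (Nat.pos_of_ne_zero hq), sum_mul_pmul_log_mul_fourierChar, mul_sum]
    refine sum_congr rfl fun e _ => ?_
    have hμ := congrArg Complex.ofReal (moebius_mul_eq_mul_coprimeMoebius q e)
    push_cast at hμ
    rw [hμ, mul_assoc, Nat.div_div_eq_div_mul, Nat.cast_mul, mul_left_comm (e : ℝ),
      ← mul_assoc (q : ℝ)]
  calc _ ≤ ‖∑ n ∈ Ioc 0 (X / q),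
        ((coprimeMoebius q * pmul log log) n : ℂ) * 𝐞 (n * (q * γ))‖ := by
        rw [hfactor, norm_mul]
        exact mul_le_of_le_one_left (norm_nonneg _) (norm_moebius_le_one q)
    _ ≤ ∑ n ∈ Ioc 0 (X / q), (coprimeMoebius q * pmul log log) n :=
        norm_sum_le_of_le _ fun n _ => by
          rw [norm_mul, Circle.norm_coe, mul_one,
            Complex.norm_of_nonneg (coprimeMoebius_mul_pmul_log_nonneg hq n)]
    _ ≤ _ := sum_coprimeMoebius_mul_pmul_log_le hq X

theorem four_div_le_norm_fourierChar_mul_sub_one {q d : ℕ} [NeZero q] {a : ℤ}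
    (ha : IsCoprime a (q : ℤ)) (hqd : ¬q ∣ d) :
    4 / (q : ℝ) ≤ ‖(𝐞 ((d : ℝ) * a / q) : ℂ) - 1‖ := by
  have h : ¬(q : ℤ) ∣ d * a := fun h =>
    hqd (Int.natCast_dvd_natCast.1 (ha.symm.dvd_of_dvd_mul_right h))
  simpa using four_div_le_norm_fourierChar_sub_one h

theorem norm_fourierChar_rat_sub_one_le {q D d : ℕ} [NeZero q] {a : ℤ} {γ : ℝ}
    (ha : IsCoprime a (q : ℤ)) (hγ : |γ - a / q| ≤ 1 / ((4 * D + 1) * q)) (hdD : d ≤ D)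
    (hqd : ¬q ∣ d) :
    ‖(𝐞 ((d : ℝ) * a / q) : ℂ) - 1‖ ≤ 2 * ‖(𝐞 (d * γ) : ℂ) - 1‖ := by
  have hlow := four_div_le_norm_fourierChar_mul_sub_one ha hqd
  have hclose : ‖(𝐞 ((d : ℝ) * a / q) : ℂ) - 𝐞 (d * γ)‖ ≤ 2 / q := by
    have hq : (0 : ℝ) < q := Nat.cast_pos.2 (NeZero.pos q)
    have hd : (d : ℝ) ≤ D := Nat.cast_le.2 hdD
    calc _ ≤ 2 * Real.pi * (d * |γ - a / q|) := by
          refine (norm_fourierChar_sub_le _ _).trans_eq ?_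
          rw [abs_sub_comm, mul_div_assoc, ← mul_sub, abs_mul, Nat.abs_cast]
      _ ≤ 2 * Real.pi * (D * (1 / ((4 * D + 1) * q))) := by gcongr
      _ = (2 / q) * (Real.pi * D / (4 * D + 1)) := by field_simp
      _ ≤ 2 / q := by
          refine mul_le_of_le_one_right (by positivity) ((div_le_one (by positivity)).2 ?_)
          nlinarith [Real.pi_lt_four, D.cast_nonneg (α := ℝ)]
  have htri := norm_sub_le_norm_sub_add_norm_sub (𝐞 ((d : ℝ) * a / q) : ℂ) (𝐞 (d * γ)) 1
  have : 4 / (q : ℝ) = 2 * (2 / q) := by ring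
  linarith

theorem sum_norm_logSqExpSum_not_dvd_le {q D : ℕ} [NeZero q] {a : ℤ} {γ : ℝ}
    (ha : IsCoprime a (q : ℤ)) (hγ : |γ - a / q| ≤ 1 / ((4 * D + 1) * q)) (X : ℕ) :
    ∑ d ∈ Ioc 0 D with ¬q ∣ d, ‖logSqExpSum (X / d) (d * γ)‖ ≤
      4 * Real.log X ^ 2 * ((D + q) * (1 + Real.log q)) := by
  have hterm (d : ℕ) (hdD : d ≤ D) (hqd : ¬q ∣ d) : ‖logSqExpSum (X / d) (d * γ)‖ ≤
      4 * Real.log X ^ 2 * ‖(𝐞 ((d : ℝ) * a / q) : ℂ) - 1‖⁻¹ := by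
    have hpos : 0 < ‖(𝐞 ((d : ℝ) * a / q) : ℂ) - 1‖ :=
      (div_pos four_pos (Nat.cast_pos.2 (NeZero.pos q))).trans_le
        (four_div_le_norm_fourierChar_mul_sub_one ha hqd)
    rw [← div_eq_mul_inv, le_div_iff₀' hpos]
    calc _ ≤ 2 * ‖(𝐞 (d * γ) : ℂ) - 1‖ * ‖logSqExpSum (X / d) (d * γ)‖ := by
          gcongr
          exact norm_fourierChar_rat_sub_one_le ha hγ hdD hqd
      _ ≤ 2 * (2 * Real.log (X / d : ℕ) ^ 2) := by
          rw [mul_assoc]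
          refine mul_le_mul_of_nonneg_left ?_ zero_le_two
          exact norm_fourierChar_sub_one_mul_norm_logSqExpSum_le _ _
      _ ≤ 2 * (2 * Real.log X ^ 2) := by
          gcongr 2 * (2 * ?_)
          exact log_natCast_sq_monotone (Nat.div_le_self X d)
      _ = _ := by ring
  calc _ ≤ ∑ d ∈ Ioc 0 D with ¬q ∣ d,
        4 * Real.log X ^ 2 * ‖(𝐞 ((d : ℝ) * a / q) : ℂ) - 1‖⁻¹ :=
        sum_le_sum fun d hd => hterm d (mem_Ioc.1 (mem_filter.1 hd).1).2 (mem_filter.1 hd).2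
    _ ≤ ∑ d ∈ Ioc 0 D, 4 * Real.log X ^ 2 * ‖(𝐞 ((d : ℝ) * a / q) : ℂ) - 1‖⁻¹ :=
        sum_le_sum_of_subset_of_nonneg (filter_subset _ _) fun _ _ _ => by positivity
    _ ≤ 4 * Real.log X ^ 2 * ((D / q + 1) * (q * (1 + Real.log q))) := by
        rw [← mul_sum]
        gcongr
        exact sum_norm_fourierChar_sub_one_inv_le ha D
    _ = _ := by
        have hq : (q : ℝ) ≠ 0 := Nat.cast_ne_zero.2 (NeZero.ne q)
        field_simp

theorem sum_Ioc_inv_natCast_le {K X : ℕ} (hK : 0 < K) (hX : 0 < X) :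
    ∑ d ∈ Ioc (X / K) X, (d : ℝ)⁻¹ ≤ 1 + Real.log K := by
  have hsplit := sum_Ioc_consecutive (fun d : ℕ => (d : ℝ)⁻¹) (Nat.zero_le (X / K))
    (Nat.div_le_self X K)
  have hupper := sum_inv_natCast_le X
  have hlower : Real.log (X / K + 1 : ℕ) ≤ ∑ d ∈ Ioc 0 (X / K), (d : ℝ)⁻¹ := by
    have h := log_add_one_le_harmonic (X / K)
    rw [harmonic_eq_sum_Icc] at h
    push_cast at h ⊢
    exact h
  have hlog : Real.log X - Real.log K ≤ Real.log (X / K + 1 : ℕ) := by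
    have hX' : (0 : ℝ) < X := Nat.cast_pos.2 hX
    have hK' : (0 : ℝ) < K := Nat.cast_pos.2 hK
    rw [← Real.log_div hX'.ne' hK'.ne']
    refine Real.log_le_log (by positivity) ((div_le_iff₀' hK').2 ?_)
    exact_mod_cast (Nat.lt_mul_div_succ X hK).le
  linarith

theorem sum_norm_logSqExpSum_Ioc_le {K X : ℕ} (hK : 0 < K) (hX : 0 < X) (γ : ℝ) :
    ∑ d ∈ Ioc (X / K) X, ‖logSqExpSum (X / d) (d * γ)‖ ≤
      X * (Real.log K ^ 2 * (1 + Real.log K)) := by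
  calc _ ≤ ∑ d ∈ Ioc (X / K) X, X * Real.log K ^ 2 * (d : ℝ)⁻¹ := by
        refine sum_le_sum fun d hd => (norm_logSqExpSum_le _ _).trans ?_
        have hXd : X / d ≤ K :=
          Nat.div_le_of_le_mul ((Nat.lt_mul_div_succ X hK).le.trans
            ((Nat.mul_le_mul_left K (mem_Ioc.1 hd).1).trans_eq (mul_comm K d)))
        calc _ ≤ ((X : ℝ) / d) * Real.log K ^ 2 :=
              mul_le_mul Nat.cast_div_le (log_natCast_sq_monotone hXd) (sq_nonneg _) (by positivity)
          _ = _ := by ring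
    _ ≤ X * Real.log K ^ 2 * (1 + Real.log K) := by
        rw [← mul_sum]
        gcongr
        exact sum_Ioc_inv_natCast_le hK hX
    _ = _ := mul_assoc _ _ _

theorem norm_sum_selbergLambda_mul_fourierChar_le {q K X : ℕ} [NeZero q] {a : ℤ} {γ : ℝ}
    (ha : IsCoprime a (q : ℤ)) (hK : 0 < K) (hX : 0 < X)
    (hγ : |γ - a / q| ≤ 1 / ((4 * (X / K : ℕ) + 1) * q)) :
    ‖∑ n ∈ Ioc 0 X, (selbergLambda n : ℂ) * 𝐞 (n * γ)‖ ≤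
      selbergConst * (X * (1 + Real.log X)) * (q.totient : ℝ)⁻¹ +
        4 * Real.log X ^ 2 * (((X / K : ℕ) + q) * (1 + Real.log q)) +
        X * (Real.log K ^ 2 * (1 + Real.log K)) := by
  let W (d : ℕ) : ℂ := logSqExpSum (X / d) (d * γ)
  have hexpand : ∑ n ∈ Ioc 0 X, (selbergLambda n : ℂ) * 𝐞 (n * γ) =
      (∑ d ∈ Ioc 0 X with q ∣ d, (μ d : ℂ) * W d) + ∑ d ∈ Ioc 0 X with ¬q ∣ d, (μ d : ℂ) * W d := by
    rw [sum_filter_add_sum_filter_not, selbergLambda_eq_moebius_mul,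
      sum_mul_pmul_log_mul_fourierChar]
    simp [W]
  have hsub : {d ∈ Ioc 0 X | ¬q ∣ d} ⊆ {d ∈ Ioc 0 (X / K) | ¬q ∣ d} ∪ Ioc (X / K) X := by
    intro d hd
    simp only [mem_union, mem_filter, mem_Ioc] at hd ⊢
    by_cases h : d ≤ X / K
    · exact .inl ⟨⟨hd.1.1, h⟩, hd.2⟩
    · exact .inr ⟨not_le.1 h, hd.1.2⟩
  have hndvd : ‖∑ d ∈ Ioc 0 X with ¬q ∣ d, (μ d : ℂ) * W d‖ ≤
      ∑ d ∈ Ioc 0 (X / K) with ¬q ∣ d, ‖W d‖ + ∑ d ∈ Ioc (X / K) X, ‖W d‖ := by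
    calc _ ≤ ∑ d ∈ Ioc 0 X with ¬q ∣ d, ‖W d‖ := norm_sum_le_of_le _ fun d _ => by
          rw [norm_mul]
          exact mul_le_of_le_one_left (norm_nonneg _) (norm_moebius_le_one d)
      _ ≤ ∑ d ∈ {d ∈ Ioc 0 (X / K) | ¬q ∣ d} ∪ Ioc (X / K) X, ‖W d‖ :=
          sum_le_sum_of_subset_of_nonneg hsub fun _ _ _ => norm_nonneg _
      _ ≤ _ := by
          rw [← sum_union_inter]
          exact le_add_of_nonneg_right (sum_nonneg fun _ _ => norm_nonneg _)
  have hdvd := norm_sum_moebius_mul_logSqExpSum_dvd_le (NeZero.ne q) X γ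
  have hlow := sum_norm_logSqExpSum_not_dvd_le ha hγ X
  have hhigh := sum_norm_logSqExpSum_Ioc_le hK hX γ
  rw [hexpand]
  linarith [norm_add_le (∑ d ∈ Ioc 0 X with q ∣ d, (μ d : ℂ) * W d)
    (∑ d ∈ Ioc 0 X with ¬q ∣ d, (μ d : ℂ) * W d)]

theorem tendsto_log_natCast_atTop : Tendsto (fun n : ℕ => Real.log n) atTop atTop :=
  Real.tendsto_log_atTop.comp tendsto_natCast_atTop_atTop

-- The cutoff is `K = ⌈(log X)³⌉`.
theorem eventually_exists_cutoff {ε : ℝ} (hε : 0 < ε) (B : ℕ) :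
    ∀ᶠ X : ℕ in atTop, ∃ K : ℕ, 4 ≤ K ∧ B * K ≤ X ∧ 1 ≤ Real.log X ∧
      20 * (1 + Real.log X) * Real.log X ≤ ε * K ∧
      Real.log K ^ 2 * (1 + Real.log K) ≤ ε * Real.log X := by
  have hlog := tendsto_log_natCast_atTop
  have hpow : ∀ᶠ X : ℕ in atTop, B * Real.log X ^ 4 ≤ X := by
    have h := ((Real.isLittleO_pow_log_id_atTop (n := 4)).const_mul_left (B : ℝ)).bound one_pos
    filter_upwards [tendsto_natCast_atTop_atTop.eventually h] with X hX
    simpa using (le_abs_self _).trans hX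
  have hloglog : ∀ᶠ L : ℝ in atTop, 80 * Real.log L ^ 3 ≤ ε * L := by
    have h := ((Real.isLittleO_pow_log_id_atTop (n := 3)).const_mul_left 80).bound hε
    filter_upwards [h, eventually_ge_atTop 0] with L hL hL0
    simpa [abs_of_nonneg hL0] using (le_abs_self _).trans hL
  filter_upwards [hpow, hlog.eventually hloglog, hlog.eventually_ge_atTop 4,
    hlog.eventually_ge_atTop (40 / ε),
    hlog.eventually (Real.tendsto_log_atTop.eventually_ge_atTop 1)] with X hX hL3 hL4 hLε hLL
  set L := Real.log X
  have hlower : L ^ 3 ≤ (⌈L ^ 3⌉₊ : ℝ) := Nat.le_ceil _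
  have hupper : (⌈L ^ 3⌉₊ : ℝ) ≤ L ^ 4 := by
    have := (Nat.ceil_lt_add_one (a := L ^ 3) (by positivity)).le
    nlinarith [one_le_pow₀ (by linarith : 1 ≤ L) (n := 3)]
  have hL3' : 4 ≤ L ^ 3 := hL4.trans (le_self_pow₀ (by linarith) (by norm_num))
  refine ⟨⌈L ^ 3⌉₊, by exact_mod_cast hL3'.trans hlower, ?_, by linarith, ?_, ?_⟩
  · have : (B : ℝ) * ⌈L ^ 3⌉₊ ≤ X := le_trans (by gcongr) hX
    exact_mod_cast this
  · have hLε' : 40 ≤ ε * L := (div_le_iff₀' hε).1 hLε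
    calc 20 * (1 + L) * L ≤ 40 * L * L := by nlinarith
      _ ≤ ε * L * L * L := by gcongr
      _ = ε * L ^ 3 := by ring
      _ ≤ _ := by gcongr
  · have hlogK : Real.log ⌈L ^ 3⌉₊ ≤ 4 * Real.log L := by
      have h := Real.log_le_log (by linarith) hupper
      rwa [Real.log_pow] at h
    have := Real.log_natCast_nonneg ⌈L ^ 3⌉₊
    calc _ ≤ (4 * Real.log L) ^ 2 * (5 * Real.log L) := by
          gcongr
          linarith
      _ = 80 * Real.log L ^ 3 := by ring
      _ ≤ _ := hL3

theorem norm_fourierChar_mul_den_sub_one_le {q n : ℕ} [NeZero q] {a : ℤ} {γ : ℝ}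
    (hγ : |γ - a / q| ≤ 1 / ((n + 1) * q)) :
    ‖(𝐞 (q * γ) : ℂ) - 1‖ ≤ 2 * Real.pi / (n + 1) := by
  have hq : (0 : ℝ) < q := Nat.cast_pos.2 (NeZero.pos q)
  calc _ = ‖(𝐞 (q * γ) : ℂ) - 𝐞 (a : ℝ)‖ := by rw [fourierChar_intCast]
    _ ≤ 2 * Real.pi * (q * |γ - a / q|) := by
        refine (norm_fourierChar_sub_le _ _).trans_eq ?_
        rw [← Nat.abs_cast q, ← abs_mul, Nat.abs_cast, mul_sub, mul_div_cancel₀ _ hq.ne']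
    _ ≤ 2 * Real.pi * (q * (1 / ((n + 1) * q))) := by gcongr
    _ = _ := by field_simp

theorem four_mul_log_sq_mul_le {ε : ℝ} {q K X : ℕ} (hε : 0 ≤ ε) (hqX : q ≤ X)
    (hq : q ≤ 4 * (X / K)) (hK : 20 * (1 + Real.log X) * Real.log X ≤ ε * K) :
    4 * Real.log X ^ 2 * (((X / K : ℕ) + q) * (1 + Real.log q)) ≤ ε * (X * Real.log X) := by
  have hq' : (q : ℝ) ≤ 4 * (X / K : ℕ) := by exact_mod_cast hq
  have hKX : ((X / K : ℕ) : ℝ) * K ≤ X := by exact_mod_cast Nat.div_mul_le_self X K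
  have := Real.log_natCast_nonneg X
  have := Real.log_natCast_nonneg q
  have hlogq := log_natCast_le_log_natCast hqX
  calc _ ≤ 4 * Real.log X ^ 2 * (((X / K : ℕ) + 4 * (X / K : ℕ)) * (1 + Real.log X)) := by gcongr
    _ = (X / K : ℕ) * Real.log X * (20 * (1 + Real.log X) * Real.log X) := by ring
    _ ≤ (X / K : ℕ) * Real.log X * (ε * K) := by gcongr
    _ = ε * (((X / K : ℕ) * K) * Real.log X) := by ring
    _ ≤ _ := by gcongr

-- By Dirichlet `γ` is close to a fraction whose denominator `q` is at most `4 (X / K)`. Either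
-- `q < R`, excluded by assumption, or `(φ q)⁻¹` makes the main term of the previous bound small.
theorem exists_eventually_norm_sum_selbergLambda_mul_fourierChar_le {ε : ℝ} (hε : 0 < ε) :
    ∃ R : ℕ, ∀ η > 0, ∀ᶠ X : ℕ in atTop, ∀ γ : ℝ,
      (∀ r : ℕ, 0 < r → r < R → η < ‖(𝐞 (r * γ) : ℂ) - 1‖) →
      ‖∑ n ∈ Ioc 0 X, (selbergLambda n : ℂ) * 𝐞 (n * γ)‖ ≤ ε * (X * Real.log X) := by
  have hC := selbergConst_pos
  have htotient := tendsto_inv_totient_atTop.eventually_le_const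
    (show 0 < ε / (6 * selbergConst) by positivity)
  obtain ⟨R, hR⟩ := eventually_atTop.1 htotient
  refine ⟨R, fun η hη => ?_⟩
  obtain ⟨B, hB⟩ := exists_nat_ge (2 * Real.pi / η)
  filter_upwards [eventually_exists_cutoff (div_pos hε three_pos) (B + 1),
    eventually_gt_atTop 0] with X ⟨K, hK4, hBK, hL, hlogX, hlogK⟩ hX γ hγ
  have hK : 0 < K := by omega
  have hD : B + 1 ≤ X / K := (Nat.le_div_iff_mul_le hK).2 hBK
  obtain ⟨r, hrγ, hrden⟩ :=
    Real.exists_rat_abs_sub_le_and_den_le γ (n := 4 * (X / K)) (by omega)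
  rw [Rat.cast_def] at hrγ
  have : NeZero r.den := ⟨r.den_ne_zero⟩
  have hRden : R ≤ r.den := by
    by_contra! hlt
    refine (hγ r.den r.den_pos hlt).not_ge ((norm_fourierChar_mul_den_sub_one_le hrγ).trans ?_)
    have hDB : (B : ℝ) + 1 ≤ (X / K : ℕ) := by exact_mod_cast hD
    rw [div_le_comm₀ (by positivity) hη]
    push_cast at hDB ⊢
    linarith
  have hdenX : r.den ≤ X :=
    hrden.trans ((Nat.mul_le_mul_right _ hK4).trans (Nat.mul_div_le X K))
  push_cast at hrγ
  have hbound := norm_sum_selbergLambda_mul_fourierChar_le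
    (Int.isCoprime_iff_gcd_eq_one.2 r.reduced) hK hX hrγ
  have hmain : selbergConst * (X * (1 + Real.log X)) * (r.den.totient : ℝ)⁻¹ ≤
      ε / 3 * (X * Real.log X) :=
    calc _ ≤ selbergConst * (X * (Real.log X + Real.log X)) * (ε / (6 * selbergConst)) := by
          gcongr
          exact hR _ hRden
      _ = _ := by field_simp; ring
  have hlarge : X * (Real.log K ^ 2 * (1 + Real.log K)) ≤ ε / 3 * (X * Real.log X) :=
    (mul_le_mul_of_nonneg_left hlogK X.cast_nonneg).trans_eq (by ring)
  linarith [four_mul_log_sq_mul_le (by positivity) hdenX hrden hlogX]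

end TypeI

section NearCoincidences

open scoped FourierTransform Topology ComplexConjugate
open ArithmeticFunction

theorem fourierChar_ne_one_of_irrational {t : ℝ} (ht : Irrational t) : (𝐞 t : ℂ) ≠ 1 := by
  intro h
  have hsin : Real.sin (Real.pi * t) = 0 := by
    have := norm_fourierChar_sub_one t
    rw [h, sub_self, norm_zero] at this
    simpa using this.symm
  obtain ⟨n, hn⟩ := Real.sin_eq_zero_iff.1 hsin
  rw [mul_comm] at hn
  exact ht.ne_int n (mul_left_cancel₀ Real.pi_ne_zero hn).symm

theorem eventually_norm_sum_selbergLambda_mul_fourierChar_le {α ε : ℝ} (hα : Irrational α)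
    (hε : 0 < ε) : ∀ᶠ X : ℕ in atTop,
      ‖∑ n ∈ Ioc 0 X, (selbergLambda n : ℂ) * 𝐞 (n * α)‖ ≤ ε * (X * Real.log X) := by
  obtain ⟨R, hR⟩ := exists_eventually_norm_sum_selbergLambda_mul_fourierChar_le hε
  have hfar : ∀ᶠ η : ℝ in 𝓝[>] 0, ∀ r ∈ Ioo 0 R, η < ‖(𝐞 ((r : ℕ) * α) : ℂ) - 1‖ := by
    rw [eventually_all_finset]
    intro r hr
    have hpos : 0 < ‖(𝐞 ((r : ℕ) * α) : ℂ) - 1‖ := norm_pos_iff.2 <| sub_ne_zero.2 <|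
      fourierChar_ne_one_of_irrational (hα.natCast_mul (mem_Ioo.1 hr).1.ne')
    exact (eventually_lt_nhds hpos).filter_mono nhdsWithin_le_nhds
  obtain ⟨η, hη, hη0⟩ := (hfar.and self_mem_nhdsWithin).exists
  filter_upwards [hR η hη0] with X hX
  exact hX α fun r h0 hr => hη r (mem_Ioo.2 ⟨h0, hr⟩)

theorem log_two_mul_natCast_le {M : ℕ} (hM : 0 < M) : Real.log (2 * M) ≤ 1 + Real.log M := by
  rw [Real.log_mul two_ne_zero (by positivity)]
  linarith [Real.log_two_lt_d9]

theorem eventually_norm_sum_Ioc_selbergLambda_mul_fourierChar_le {α ε : ℝ} (hα : Irrational α)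
    (hε : 0 < ε) : ∀ᶠ M : ℕ in atTop,
      ‖∑ m ∈ Ioc M (2 * M), (selbergLambda m : ℂ) * 𝐞 (m * α)‖ ≤ ε * (5 * (M * Real.log M)) := by
  have h := eventually_norm_sum_selbergLambda_mul_fourierChar_le hα hε
  have hdouble : Tendsto (fun M : ℕ => 2 * M) atTop atTop :=
    tendsto_id.const_mul_atTop' two_pos
  filter_upwards [h, hdouble.eventually h, tendsto_log_natCast_atTop.eventually_ge_atTop 1,
    eventually_gt_atTop 0] with M hM h2M hlog hpos
  rw [← sum_Ioc_consecutive _ M.zero_le (by omega : M ≤ 2 * M)] at h2M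
  have hlog2 := log_two_mul_natCast_le hpos
  push_cast at h2M
  calc _ ≤ ε * (2 * M * Real.log (2 * M)) + ε * (M * Real.log M) :=
        (norm_le_add_norm_add' (∑ n ∈ Ioc 0 M, (selbergLambda n : ℂ) * 𝐞 (n * α)) _).trans
          (add_le_add h2M hM)
    _ ≤ ε * (2 * M * (2 * Real.log M)) + ε * (M * Real.log M) := by
        gcongr
        linarith
    _ = _ := by ring

theorem norm_fourierChar_natCast_mul_sub_one_le (n : ℕ) (t : ℝ) :
    ‖(𝐞 (n * t) : ℂ) - 1‖ ≤ n * ‖(𝐞 t : ℂ) - 1‖ := by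
  rw [fourierChar_natCast_mul]
  induction n with
  | zero => simp
  | succ n ih =>
    calc ‖(𝐞 t : ℂ) ^ (n + 1) - 1‖ = ‖(𝐞 t : ℂ) * ((𝐞 t : ℂ) ^ n - 1) + (𝐞 t - 1)‖ := by ring_nf
      _ ≤ ‖(𝐞 t : ℂ) ^ n - 1‖ + ‖(𝐞 t : ℂ) - 1‖ := by
          refine (norm_add_le _ _).trans_eq ?_
          rw [norm_mul, Circle.norm_coe, one_mul]
      _ ≤ _ := by push_cast; linarith

theorem half_le_norm_sum_fourierChar {L : ℕ} {t : ℝ} (ht : L * ‖(𝐞 t : ℂ) - 1‖ ≤ 1 / 2) :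
    (L : ℝ) / 2 ≤ ‖∑ l ∈ range L, (𝐞 (l * t) : ℂ)‖ := by
  have hdist : ‖∑ l ∈ range L, ((𝐞 (l * t) : ℂ) - 1)‖ ≤ L / 2 := by
    refine (norm_sum_le_of_le (n := fun _ => 1 / 2) _ fun l hl => ?_).trans_eq (by simp; rfl)
    refine (norm_fourierChar_natCast_mul_sub_one_le l t).trans (le_trans ?_ ht)
    have : (l : ℝ) ≤ L := by exact_mod_cast (mem_range.1 hl).le
    gcongr
  rw [sum_sub_distrib, sum_const, card_range, nsmul_eq_mul, mul_one] at hdist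
  have := norm_le_norm_add_norm_sub (∑ l ∈ range L, (𝐞 (l * t) : ℂ)) (L : ℂ)
  rw [Complex.norm_natCast] at this
  linarith

theorem ofReal_norm_sum_sq {ι : Type*} (s : Finset ι) (f : ι → ℂ) :
    ((‖∑ i ∈ s, f i‖ ^ 2 : ℝ) : ℂ) = ∑ i ∈ s, ∑ j ∈ s, f i * conj (f j) := by
  rw [Complex.ofReal_pow, ← Complex.mul_conj', map_sum, sum_mul_sum]

-- Both sides are the sum of `w m * w m' * e((m - m')(l - l')α)` over all `m, m', l, l'`.
theorem sum_sum_mul_norm_sum_fourierChar_sq (s : Finset ℕ) (w : ℕ → ℝ) (α : ℝ) (L : ℕ) :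
    ∑ m ∈ s, ∑ m' ∈ s, w m * w m' *
        ‖∑ l ∈ range L, (𝐞 (l * (((m : ℝ) - m') * α)) : ℂ)‖ ^ 2 =
      ∑ l ∈ range L, ∑ l' ∈ range L,
        ‖∑ m ∈ s, (w m : ℂ) * 𝐞 (m * (((l : ℝ) - l') * α))‖ ^ 2 := by
  apply Complex.ofReal_injective
  push_cast [-Complex.ofReal_pow]
  simp only [ofReal_norm_sum_sq, mul_sum]
  have hterm (m m' l l' : ℕ) :
      (w m : ℂ) * w m' * (𝐞 (l * (((m : ℝ) - m') * α)) * conj (𝐞 (l' * (((m : ℝ) - m') * α)) : ℂ)) =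
        w m * 𝐞 (m * (((l : ℝ) - l') * α)) * conj (w m' * 𝐞 (m' * (((l : ℝ) - l') * α)) : ℂ) := by
    have hphase : (𝐞 (l * (((m : ℝ) - m') * α)) * 𝐞 (-(l' * (((m : ℝ) - m') * α))) : ℂ) =
        𝐞 (m * (((l : ℝ) - l') * α)) * 𝐞 (-(m' * (((l : ℝ) - l') * α))) := by
      rw [← fourierChar_add, ← fourierChar_add]
      ring_nf
    rw [map_mul (starRingEnd ℂ), Complex.conj_ofReal, conj_fourierChar, conj_fourierChar]
    linear_combination (w m : ℂ) * w m' * hphase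
  simp only [hterm]
  rw [sum_congr rfl fun m _ => sum_comm, sum_comm]
  refine sum_congr rfl fun l _ => ?_
  rw [sum_congr rfl fun m _ => sum_comm, sum_comm]

/-- The total `w ⊗ w`-mass of the pairs `(m, n)` in `s × s` whose difference lies in `S`. -/
noncomputable def differenceMass (s : Finset ℕ) (w : ℕ → ℝ) (S : Set ℝ) : ℝ :=
  ∑ m ∈ s, ∑ n ∈ s, w m * w n * S.indicator 1 ((m : ℝ) - n)

/-- The Bohr set of all `t` for which `e(tα)` is `η`-close to `1`. -/
def bohrSet (α η : ℝ) : Set ℝ := {t | ‖(𝐞 (t * α) : ℂ) - 1‖ ≤ η}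

theorem indicator_one_nonneg (S : Set ℝ) (t : ℝ) : 0 ≤ S.indicator (1 : ℝ → ℝ) t :=
  Set.indicator_nonneg (fun _ _ => zero_le_one) t

theorem differenceMass_biUnion_le {ι : Type*} (s : Finset ℕ) {w : ℕ → ℝ} (hw : ∀ m, 0 ≤ w m)
    (I : Finset ι) (S : ι → Set ℝ) :
    differenceMass s w (⋃ i ∈ I, S i) ≤ ∑ i ∈ I, differenceMass s w (S i) := by
  have hunion (t : ℝ) : (⋃ i ∈ I, S i).indicator (1 : ℝ → ℝ) t ≤ ∑ i ∈ I, (S i).indicator 1 t := by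
    refine Set.indicator_apply_le' (fun ht => ?_)
      fun _ => sum_nonneg fun i _ => indicator_one_nonneg (S i) t
    obtain ⟨i, hi, hti⟩ := Set.mem_iUnion₂.1 ht
    calc (1 : ℝ) = (S i).indicator 1 t := by simp [hti]
      _ ≤ _ := single_le_sum (f := fun i => (S i).indicator (1 : ℝ → ℝ) t)
          (fun i _ => indicator_one_nonneg (S i) t) hi
  simp only [differenceMass]
  rw [sum_comm (s := I)]
  refine sum_le_sum fun m _ => ?_
  rw [sum_comm (s := I)]
  refine sum_le_sum fun m' _ => ?_
  rw [← mul_sum]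
  exact mul_le_mul_of_nonneg_left (hunion _) (mul_nonneg (hw m) (hw m'))

theorem differenceMass_bohrSet_le (s : Finset ℕ) {w : ℕ → ℝ} (hw : ∀ m, 0 ≤ w m) (α : ℝ) {L : ℕ}
    (hL : 0 < L) : differenceMass s w (bohrSet α (1 / (2 * L))) ≤ 4 / (L : ℝ) ^ 2 *
      ∑ l ∈ range L, ∑ l' ∈ range L, ‖∑ m ∈ s, (w m : ℂ) * 𝐞 (m * (((l : ℝ) - l') * α))‖ ^ 2 := by
  have hindicator (t : ℝ) : (bohrSet α (1 / (2 * L))).indicator 1 t ≤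
      4 / (L : ℝ) ^ 2 * ‖∑ l ∈ range L, (𝐞 (l * (t * α)) : ℂ)‖ ^ 2 := by
    refine Set.indicator_apply_le' (fun ht => ?_) fun _ => by positivity
    have hclose : L * ‖(𝐞 (t * α) : ℂ) - 1‖ ≤ 1 / 2 :=
      (mul_le_mul_of_nonneg_left ht L.cast_nonneg).trans_eq (by field_simp)
    calc (1 : ℝ) = 4 / (L : ℝ) ^ 2 * (L / 2) ^ 2 := by field_simp; norm_num
      _ ≤ _ := by
          gcongr
          exact half_le_norm_sum_fourierChar hclose
  rw [← sum_sum_mul_norm_sum_fourierChar_sq, mul_sum, differenceMass]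
  refine sum_le_sum fun m _ => ?_
  rw [mul_sum]
  refine sum_le_sum fun m' _ => ?_
  rw [mul_left_comm]
  exact mul_le_mul_of_nonneg_left (hindicator _) (mul_nonneg (hw m) (hw m'))

theorem log_sq_mul_differenceMass_vonMangoldt_le (M N : ℕ) (S : Set ℝ) :
    Real.log M ^ 2 * differenceMass (Ioc M N) Λ S ≤ differenceMass (Ioc M N) selbergLambda S := by
  have hweight : ∀ m ∈ Ioc M N, Λ m * Real.log M ≤ selbergLambda m := fun m hm =>
    (mul_le_mul_of_nonneg_left (log_natCast_le_log_natCast (mem_Ioc.1 hm).1.le)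
      vonMangoldt_nonneg).trans (vonMangoldt_mul_log_le_selbergLambda m)
  simp only [differenceMass, mul_sum]
  refine sum_le_sum fun m hm => sum_le_sum fun m' hm' => ?_
  calc _ = Λ m * Real.log M * (Λ m' * Real.log M) * S.indicator 1 ((m : ℝ) - m') := by ring
    _ ≤ _ := mul_le_mul_of_nonneg_right (mul_le_mul (hweight m hm) (hweight m' hm')
        (mul_nonneg vonMangoldt_nonneg (Real.log_natCast_nonneg M)) (selbergLambda_nonneg m))
        (indicator_one_nonneg S _)

theorem sum_Ioc_selbergLambda_le {M : ℕ} (hM : 2 ≤ Real.log M) :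
    ∑ m ∈ Ioc M (2 * M), selbergLambda m ≤ 4 * selbergConst * (M * Real.log M) := by
  have hpos : 0 < M := Nat.pos_of_ne_zero fun h => by norm_num [h] at hM
  have := selbergConst_pos
  calc _ ≤ ∑ m ∈ Ioc 0 (2 * M), selbergLambda m :=
        sum_le_sum_of_subset_of_nonneg (Ioc_subset_Ioc_left M.zero_le)
          fun m _ _ => selbergLambda_nonneg m
    _ ≤ selbergConst * (2 * M * (1 + Real.log (2 * M))) := by
        exact_mod_cast sum_selbergLambda_le (2 * M)
    _ ≤ selbergConst * (2 * M * (2 * Real.log M)) := by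
        gcongr
        linarith [log_two_mul_natCast_le hpos]
    _ = _ := by ring

theorem sum_range_sum_range_le_of_diagonal {L : ℕ} {f : ℕ → ℕ → ℝ} {A B : ℝ} (hB : 0 ≤ B)
    (hdiag : ∀ l ∈ range L, f l l ≤ A)
    (hoff : ∀ l ∈ range L, ∀ l' ∈ range L, l ≠ l' → f l l' ≤ B) :
    ∑ l ∈ range L, ∑ l' ∈ range L, f l l' ≤ L * A + L ^ 2 * B := by
  have hrow : ∀ l ∈ range L, ∑ l' ∈ range L, f l l' ≤ A + L * B := fun l hl => by
    rw [← add_sum_erase _ _ hl]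
    refine add_le_add (hdiag l hl) ((sum_le_card_nsmul _ _ B fun l' hl' =>
      hoff l hl l' (mem_of_mem_erase hl') (ne_of_mem_erase hl').symm).trans ?_)
    rw [nsmul_eq_mul]
    gcongr
    exact (card_erase_le).trans_eq (card_range L)
  refine (sum_le_card_nsmul _ _ _ hrow).trans_eq ?_
  rw [card_range, nsmul_eq_mul]
  ring

theorem eventually_norm_sum_Ioc_selbergLambda_mul_fourierChar_sub_mul_le {α ε : ℝ}
    (hα : Irrational α) (hε : 0 < ε) (L : ℕ) : ∀ᶠ M : ℕ in atTop,
      ∀ l ∈ range L, ∀ l' ∈ range L, l ≠ l' →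
        ‖∑ m ∈ Ioc M (2 * M), (selbergLambda m : ℂ) * 𝐞 (m * (((l : ℝ) - l') * α))‖ ≤
          ε * (5 * (M * Real.log M)) := by
  simp only [eventually_all_finset, eventually_imp_distrib_left]
  intro l _ l' _ hll'
  have hirr : Irrational (((l : ℝ) - l') * α) := by
    exact_mod_cast hα.intCast_mul (m := (l : ℤ) - l') (by omega)
  exact eventually_norm_sum_Ioc_selbergLambda_mul_fourierChar_le hirr hε

theorem exists_eventually_differenceMass_vonMangoldt_bohrSet_le {ε : ℝ} (hε : 0 < ε) :
    ∃ η > 0, ∀ α : ℝ, Irrational α → ∀ᶠ M : ℕ in atTop,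
      differenceMass (Ioc M (2 * M)) Λ (bohrSet α η) ≤ ε * M ^ 2 := by
  have hC := selbergConst_pos
  obtain ⟨L, hL⟩ := exists_nat_gt (128 * selbergConst ^ 2 / ε)
  have hL0 : (0 : ℝ) < L := lt_trans (by positivity) hL
  refine ⟨1 / (2 * L), by positivity, fun α hα => ?_⟩
  have hδ : 0 < √(ε / 200) := by positivity
  filter_upwards [eventually_norm_sum_Ioc_selbergLambda_mul_fourierChar_sub_mul_le hα hδ L,
    tendsto_log_natCast_atTop.eventually_ge_atTop 2] with M hoff hlog
  have hdiag : ∀ l ∈ range L,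
      ‖∑ m ∈ Ioc M (2 * M), (selbergLambda m : ℂ) * 𝐞 (m * (((l : ℝ) - l) * α))‖ ^ 2 ≤
        (4 * selbergConst * (M * Real.log M)) ^ 2 := fun l _ => by
    refine pow_le_pow_left₀ (norm_nonneg _) (le_trans ?_ (sum_Ioc_selbergLambda_le hlog)) 2
    refine norm_sum_le_of_le _ fun m _ => ?_
    simp [abs_of_nonneg (selbergLambda_nonneg m)]
  have hsum := sum_range_sum_range_le_of_diagonal (by positivity) hdiag
    fun l hl l' hl' hll' => pow_le_pow_left₀ (norm_nonneg _) (hoff l hl l' hl' hll') 2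
  have hlogsq : 0 < Real.log M ^ 2 := by positivity
  refine le_of_mul_le_mul_left ?_ hlogsq
  calc _ ≤ differenceMass (Ioc M (2 * M)) selbergLambda (bohrSet α (1 / (2 * L))) :=
        log_sq_mul_differenceMass_vonMangoldt_le _ _ _
    _ ≤ 4 / (L : ℝ) ^ 2 * (L * (4 * selbergConst * (M * Real.log M)) ^ 2 +
          L ^ 2 * (√(ε / 200) * (5 * (M * Real.log M))) ^ 2) :=
        (differenceMass_bohrSet_le _ selbergLambda_nonneg α (by exact_mod_cast hL0)).trans
          (by gcongr)
    _ = (64 * selbergConst ^ 2 / L + ε / 2) * (M * Real.log M) ^ 2 := by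
        simp only [mul_pow, Real.sq_sqrt (show 0 ≤ ε / 200 by positivity)]
        field_simp
        ring
    _ ≤ (ε / 2 + ε / 2) * (M * Real.log M) ^ 2 := by
        have hdiv : 64 * selbergConst ^ 2 / L ≤ ε / 2 := by
          rw [div_lt_iff₀ hε] at hL
          rw [div_le_iff₀ hL0]
          linarith
        gcongr
    _ = _ := by ring

theorem exists_eventually_differenceMass_vonMangoldt_biUnion_bohrSet_le {α ε : ℝ}
    (hα : Irrational α) (hε : 0 < ε) (R : ℕ) : ∃ η > 0, ∀ᶠ M : ℕ in atTop,
      differenceMass (Ioc M (2 * M)) Λ (⋃ r ∈ Ioo 0 R, bohrSet (r * α) η) ≤ ε * M ^ 2 := by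
  obtain ⟨η, hη, h⟩ :=
    exists_eventually_differenceMass_vonMangoldt_bohrSet_le (show 0 < ε / (R + 1) by positivity)
  refine ⟨η, hη, ?_⟩
  have hall : ∀ᶠ M : ℕ in atTop, ∀ r ∈ Ioo 0 R,
      differenceMass (Ioc M (2 * M)) Λ (bohrSet ((r : ℕ) * α) η) ≤ ε / (R + 1) * M ^ 2 :=
    (eventually_all_finset _).2 fun r hr => h _ (hα.natCast_mul (mem_Ioo.1 hr).1.ne')
  filter_upwards [hall] with M hM
  refine (differenceMass_biUnion_le _ (fun _ => vonMangoldt_nonneg) _ _).trans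
    ((sum_le_card_nsmul _ _ _ hM).trans ?_)
  have hcard : ((Ioo 0 R).card : ℝ) ≤ R + 1 := by
    rw [Nat.card_Ioo]
    exact_mod_cast (show R - 0 - 1 ≤ R + 1 by omega)
  rw [nsmul_eq_mul]
  calc _ ≤ ((R : ℝ) + 1) * (ε / (R + 1) * M ^ 2) := by gcongr
    _ = _ := by field_simp

end NearCoincidences

section BilinearSums

open ArithmeticFunction
open scoped FourierTransform ComplexConjugate

theorem norm_ofReal_mul_fourierChar {r : ℝ} (hr : 0 ≤ r) (t : ℝ) : ‖(r : ℂ) * 𝐞 t‖ = r := by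
  rw [norm_mul, Circle.norm_coe, mul_one, Complex.norm_of_nonneg hr]

/-- The terms with first factor `m` in the bilinear sum `∑_{m n ≤ N} Λ(m) Λ(n) e(mnα)`. -/
noncomputable def bilinearSlice (α : ℝ) (N m : ℕ) : ℂ :=
  ∑ n ∈ Ioc 0 (N / m), (Λ m : ℂ) * (Λ n * 𝐞 (n * (m * α)))

/-- The coefficient of `Λ(n)` in the part of the bilinear sum `∑_{m n ≤ N} Λ(m) Λ(n) e(mnα)`
where `M < m ≤ 2M`. -/
noncomputable def dyadicCoeff (α : ℝ) (N M n : ℕ) : ℂ :=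
  ∑ m ∈ Ioc M (2 * M) with m * n ≤ N, (Λ m : ℂ) * 𝐞 (n * (m * α))

theorem sum_Ioc_two_mul_vonMangoldt_le (M : ℕ) :
    ∑ m ∈ Ioc M (2 * M), Λ m ≤ 2 * chebyshevConst * M := by
  calc _ ≤ ∑ m ∈ Ioc 0 (2 * M), Λ m :=
        sum_le_sum_of_subset_of_nonneg (Ioc_subset_Ioc_left M.zero_le)
          fun _ _ _ => vonMangoldt_nonneg
    _ ≤ _ := sum_vonMangoldt_le _
    _ = _ := by push_cast; ring

theorem filter_mul_le_Ioc_div {M m : ℕ} (N : ℕ) (hM : 0 < M) (hm : M < m) :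
    {n ∈ Ioc 0 (N / M) | m * n ≤ N} = Ioc 0 (N / m) := by
  ext n
  simp only [mem_filter, mem_Ioc, Nat.le_div_iff_mul_le hM, Nat.le_div_iff_mul_le (hM.trans hm),
    mul_comm m]
  exact ⟨fun h => ⟨h.1.1, h.2⟩,
    fun h => ⟨⟨h.1, (Nat.mul_le_mul_left n hm.le).trans h.2⟩, h.2⟩⟩

theorem sum_bilinearSlice (α : ℝ) (N : ℕ) {M : ℕ} (hM : 0 < M) :
    ∑ m ∈ Ioc M (2 * M), bilinearSlice α N m =
      ∑ n ∈ Ioc 0 (N / M), (Λ n : ℂ) * dyadicCoeff α N M n := by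
  simp only [dyadicCoeff, sum_filter, mul_sum]
  rw [sum_comm]
  refine sum_congr rfl fun m hm => ?_
  rw [bilinearSlice, ← filter_mul_le_Ioc_div N hM (mem_Ioc.1 hm).1, sum_filter]
  refine sum_congr rfl fun n _ => ?_
  rw [mul_ite, mul_zero, mul_left_comm]

theorem norm_dyadicCoeff_le (α : ℝ) (N M n : ℕ) :
    ‖dyadicCoeff α N M n‖ ≤ 2 * chebyshevConst * M := by
  calc _ ≤ ∑ m ∈ Ioc M (2 * M) with m * n ≤ N, Λ m :=
        norm_sum_le_of_le _ fun _ _ => (norm_ofReal_mul_fourierChar vonMangoldt_nonneg _).le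
    _ ≤ ∑ m ∈ Ioc M (2 * M), Λ m :=
        sum_le_sum_of_subset_of_nonneg (filter_subset _ _) fun _ _ _ => vonMangoldt_nonneg
    _ ≤ _ := sum_Ioc_two_mul_vonMangoldt_le M

theorem ofReal_sum_selbergLambda_mul_norm_dyadicCoeff_sq (α : ℝ) (N : ℕ) {M : ℕ} (hM : 0 < M) :
    ((∑ n ∈ Ioc 0 (N / M), selbergLambda n * ‖dyadicCoeff α N M n‖ ^ 2 : ℝ) : ℂ) =
      ∑ m ∈ Ioc M (2 * M), ∑ m' ∈ Ioc M (2 * M), (Λ m : ℂ) * Λ m' *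
        ∑ n ∈ Ioc 0 (min (N / m) (N / m')),
          (selbergLambda n : ℂ) * 𝐞 (n * (((m : ℝ) - m') * α)) := by
  push_cast [-Complex.ofReal_pow]
  simp only [dyadicCoeff, sum_filter, ofReal_norm_sum_sq, mul_sum]
  rw [sum_comm]
  refine sum_congr rfl fun m hm => ?_
  rw [sum_comm]
  refine sum_congr rfl fun m' hm' => ?_
  have hrange : Ioc 0 (min (N / m) (N / m')) = {n ∈ Ioc 0 (N / M) | m * n ≤ N ∧ m' * n ≤ N} := by
    rw [filter_and, filter_mul_le_Ioc_div N hM (mem_Ioc.1 hm).1,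
      filter_mul_le_Ioc_div N hM (mem_Ioc.1 hm').1, Ioc_inter_Ioc, max_self]
  rw [hrange, sum_filter]
  refine sum_congr rfl fun n _ => ?_
  have hphase : (𝐞 (n * (((m : ℝ) - m') * α)) : ℂ) =
      𝐞 (n * (m * α)) * 𝐞 (-(n * (m' * α))) := by
    rw [← fourierChar_add]
    ring_nf
  by_cases hm : m * n ≤ N <;> by_cases hm' : m' * n ≤ N
  · simp only [hm, hm', and_self, if_true, map_mul (starRingEnd ℂ), Complex.conj_ofReal,
      conj_fourierChar, hphase]
    ring
  all_goals simp [hm, hm']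

theorem sum_selbergLambda_mul_norm_dyadicCoeff_sq_le {α A B : ℝ} {N M : ℕ} {S : Set ℝ}
    (hM : 0 < M) (hA : 0 ≤ A)
    (h : ∀ m ∈ Ioc M (2 * M), ∀ m' ∈ Ioc M (2 * M),
      ‖∑ n ∈ Ioc 0 (min (N / m) (N / m')),
        (selbergLambda n : ℂ) * 𝐞 (n * (((m : ℝ) - m') * α))‖ ≤
          A + B * S.indicator 1 ((m : ℝ) - m')) :
    ∑ n ∈ Ioc 0 (N / M), selbergLambda n * ‖dyadicCoeff α N M n‖ ^ 2 ≤
      A * (2 * chebyshevConst * M) ^ 2 + B * differenceMass (Ioc M (2 * M)) Λ S := by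
  calc _ ≤ ‖((∑ n ∈ Ioc 0 (N / M), selbergLambda n * ‖dyadicCoeff α N M n‖ ^ 2 : ℝ) : ℂ)‖ :=
        (le_abs_self _).trans_eq (Complex.norm_real _).symm
    _ ≤ ∑ m ∈ Ioc M (2 * M), ∑ m' ∈ Ioc M (2 * M),
          Λ m * Λ m' * (A + B * S.indicator 1 ((m : ℝ) - m')) := by
        rw [ofReal_sum_selbergLambda_mul_norm_dyadicCoeff_sq α N hM]
        refine norm_sum_le_of_le _ fun m hm => norm_sum_le_of_le _ fun m' hm' => ?_
        rw [norm_mul, norm_mul, Complex.norm_of_nonneg vonMangoldt_nonneg,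
          Complex.norm_of_nonneg vonMangoldt_nonneg]
        exact mul_le_mul_of_nonneg_left (h m hm m' hm')
          (mul_nonneg vonMangoldt_nonneg vonMangoldt_nonneg)
    _ = A * (∑ m ∈ Ioc M (2 * M), Λ m) ^ 2 + B * differenceMass (Ioc M (2 * M)) Λ S := by
        rw [differenceMass, sq, sum_mul_sum]
        simp only [mul_sum, ← sum_add_distrib]
        refine sum_congr rfl fun m _ => sum_congr rfl fun m' _ => ?_
        ring
    _ ≤ _ := by
        have : 0 ≤ ∑ m ∈ Ioc M (2 * M), Λ m := sum_nonneg fun _ _ => vonMangoldt_nonneg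
        gcongr
        exact sum_Ioc_two_mul_vonMangoldt_le M

theorem norm_sum_selbergLambda_mul_fourierChar_le_of_le {Z X : ℕ} (hZX : Z ≤ X) (γ : ℝ) :
    ‖∑ n ∈ Ioc 0 Z, (selbergLambda n : ℂ) * 𝐞 (n * γ)‖ ≤
      selbergConst * (X * (1 + Real.log X)) := by
  calc _ ≤ ∑ n ∈ Ioc 0 Z, selbergLambda n :=
        norm_sum_le_of_le _ fun n _ => (norm_ofReal_mul_fourierChar (selbergLambda_nonneg n) _).le
    _ ≤ ∑ n ∈ Ioc 0 X, selbergLambda n :=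
        sum_le_sum_of_subset_of_nonneg (Ioc_subset_Ioc_right hZX)
          fun n _ _ => selbergLambda_nonneg n
    _ ≤ _ := sum_selbergLambda_le X

theorem norm_sum_selbergLambda_mul_fourierChar_le_add_indicator {α δ η : ℝ} {R Z X : ℕ}
    (hδ : 0 ≤ δ) (hZX : Z ≤ X)
    (hfar : ∀ γ : ℝ, (∀ r : ℕ, 0 < r → r < R → η < ‖(𝐞 (r * γ) : ℂ) - 1‖) →
      ‖∑ n ∈ Ioc 0 Z, (selbergLambda n : ℂ) * 𝐞 (n * γ)‖ ≤ δ * (Z * Real.log Z)) (t : ℝ) :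
    ‖∑ n ∈ Ioc 0 Z, (selbergLambda n : ℂ) * 𝐞 (n * (t * α))‖ ≤
      δ * (X * Real.log X) + selbergConst * (X * (1 + Real.log X)) *
        (⋃ r ∈ Ioo 0 R, bohrSet (r * α) η).indicator 1 t := by
  have := Real.log_natCast_nonneg X
  by_cases hmem : t ∈ ⋃ r ∈ Ioo 0 R, bohrSet (r * α) η
  · rw [Set.indicator_of_mem hmem, Pi.one_apply, mul_one]
    exact (norm_sum_selbergLambda_mul_fourierChar_le_of_le hZX _).trans
      (le_add_of_nonneg_left (by positivity))
  · rw [Set.indicator_of_notMem hmem, mul_zero, add_zero]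
    have hlog := log_natCast_le_log_natCast hZX
    refine (hfar _ fun r hr0 hrR => ?_).trans (by gcongr)
    contrapose! hmem
    refine Set.mem_iUnion₂.2 ⟨r, mem_Ioo.2 ⟨hr0, hrR⟩, ?_⟩
    rwa [bohrSet, Set.mem_ofPred_eq, mul_left_comm]

theorem one_le_log_natCast {n : ℕ} (hn : 3 ≤ n) : 1 ≤ Real.log n := by
  have hn' : (3 : ℝ) ≤ n := by exact_mod_cast hn
  rw [Real.le_log_iff_exp_le (by linarith)]
  linarith [Real.exp_one_lt_d9]

theorem le_div_of_mem_Ioc_two_mul {K M N m : ℕ} (hN : 2 * K * M ≤ N) (hm : m ∈ Ioc M (2 * M)) :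
    K ≤ N / m := by
  rw [mem_Ioc] at hm
  exact (Nat.le_div_iff_mul_le (by omega)).2 (le_trans (by nlinarith) hN)

theorem eventually_sum_selbergLambda_mul_norm_dyadicCoeff_sq_le {α ε : ℝ} (hα : Irrational α)
    (hε : 0 < ε) : ∀ᶠ K : ℕ in atTop, ∀ M N : ℕ, K ≤ M → 2 * K * M ≤ N →
      ∑ n ∈ Ioc 0 (N / M), selbergLambda n * ‖dyadicCoeff α N M n‖ ^ 2 ≤
        ε * ((N / M : ℕ) * Real.log (N / M : ℕ)) * M ^ 2 := by
  have hc := chebyshevConst_pos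
  have hC := selbergConst_pos
  set δ := ε / (4 * chebyshevConst ^ 2 + 2 * selbergConst) with hδ
  have hδ0 : 0 < δ := by positivity
  obtain ⟨R, hR⟩ := exists_eventually_norm_sum_selbergLambda_mul_fourierChar_le hδ0
  obtain ⟨η, hη, hmass⟩ :=
    exists_eventually_differenceMass_vonMangoldt_biUnion_bohrSet_le hα hδ0 R
  filter_upwards [eventually_forall_ge_atTop.2 (hR η hη), eventually_forall_ge_atTop.2 hmass,
    eventually_ge_atTop 3] with K hfar hmass hK M N hM hN
  have hM0 : 0 < M := by omega
  have hX : 3 ≤ N / M := (Nat.le_div_iff_mul_le hM0).2 (le_trans (by gcongr; omega) hN)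
  set X := N / M
  have hlog := one_le_log_natCast hX
  have hpairs : ∀ m ∈ Ioc M (2 * M), ∀ m' ∈ Ioc M (2 * M),
      ‖∑ n ∈ Ioc 0 (min (N / m) (N / m')),
        (selbergLambda n : ℂ) * 𝐞 (n * (((m : ℝ) - m') * α))‖ ≤
          δ * (X * Real.log X) + selbergConst * (X * (1 + Real.log X)) *
            (⋃ r ∈ Ioo 0 R, bohrSet (r * α) η).indicator 1 ((m : ℝ) - m') := by
    intro m hm m' hm'
    have hZX : min (N / m) (N / m') ≤ X :=
      (min_le_left _ _).trans (Nat.div_le_div_left (mem_Ioc.1 hm).1.le hM0)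
    exact norm_sum_selbergLambda_mul_fourierChar_le_add_indicator hδ0.le hZX
      (hfar _ (le_min (le_div_of_mem_Ioc_two_mul hN hm) (le_div_of_mem_Ioc_two_mul hN hm'))) _
  calc _ ≤ δ * (X * Real.log X) * (2 * chebyshevConst * M) ^ 2 +
          selbergConst * (X * (1 + Real.log X)) * _ :=
        sum_selbergLambda_mul_norm_dyadicCoeff_sq_le hM0 (by positivity) hpairs
    _ ≤ δ * (X * Real.log X) * (2 * chebyshevConst * M) ^ 2 +
          selbergConst * (X * (1 + Real.log X)) * (δ * M ^ 2) := by
        gcongr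
        exact hmass M hM
    _ ≤ δ * (X * Real.log X) * (2 * chebyshevConst * M) ^ 2 +
          selbergConst * (X * (Real.log X + Real.log X)) * (δ * M ^ 2) := by gcongr
    _ = ε * (X * Real.log X) * M ^ 2 := by
        rw [hδ]
        field_simp
        ring

theorem norm_sum_vonMangoldt_mul_le {f : ℕ → ℂ} {B : ℝ} (hB : 0 ≤ B) (hf : ∀ n, ‖f n‖ ≤ B)
    (Y : ℕ) : ‖∑ n ∈ Ioc 0 Y, (Λ n : ℂ) * f n‖ ≤ chebyshevConst * Y * B := by
  calc _ ≤ ∑ n ∈ Ioc 0 Y, Λ n * B := by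
        refine norm_sum_le_of_le _ fun n _ => ?_
        rw [norm_mul, Complex.norm_of_nonneg vonMangoldt_nonneg]
        exact mul_le_mul_of_nonneg_left (hf n) vonMangoldt_nonneg
    _ ≤ _ := by
        rw [← sum_mul]
        exact mul_le_mul_of_nonneg_right (sum_vonMangoldt_le Y) hB

theorem log_natCast_le_two_mul_log_of_sqrt_lt {X n : ℕ} (hn : X.sqrt < n) :
    Real.log X ≤ 2 * Real.log n := by
  have hlt : X ≤ n ^ 2 := (Nat.sqrt_lt'.1 hn).le
  calc _ ≤ Real.log (n ^ 2 : ℕ) := log_natCast_le_log_natCast hlt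
    _ = _ := by push_cast; exact Real.log_pow n 2

theorem norm_sum_vonMangoldt_mul_sq_le (s : Finset ℕ) (f : ℕ → ℂ) :
    ‖∑ n ∈ s, (Λ n : ℂ) * f n‖ ^ 2 ≤ (∑ n ∈ s, Λ n) * ∑ n ∈ s, Λ n * ‖f n‖ ^ 2 := by
  have hnorm : ‖∑ n ∈ s, (Λ n : ℂ) * f n‖ ≤ ∑ n ∈ s, √(Λ n) * (√(Λ n) * ‖f n‖) := by
    refine norm_sum_le_of_le _ fun n _ => ?_
    rw [norm_mul, Complex.norm_of_nonneg vonMangoldt_nonneg, ← mul_assoc,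
      Real.mul_self_sqrt vonMangoldt_nonneg]
  refine (pow_le_pow_left₀ (norm_nonneg _) hnorm 2).trans
    ((sum_mul_sq_le_sq_mul_sq _ _ _).trans_eq ?_)
  simp only [mul_pow, Real.sq_sqrt vonMangoldt_nonneg]

theorem log_mul_norm_sum_vonMangoldt_mul_sq_le (f : ℕ → ℂ) (X : ℕ) :
    Real.log X * ‖∑ n ∈ Ioc X.sqrt X, (Λ n : ℂ) * f n‖ ^ 2 ≤
      2 * chebyshevConst * X * ∑ n ∈ Ioc 0 X, selbergLambda n * ‖f n‖ ^ 2 := by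
  have hc := chebyshevConst_pos
  have hsubset : Ioc X.sqrt X ⊆ Ioc 0 X := Ioc_subset_Ioc_left (Nat.zero_le _)
  have hlarge : ∀ n ∈ Ioc X.sqrt X,
      Real.log X * (Λ n * ‖f n‖ ^ 2) ≤ 2 * (selbergLambda n * ‖f n‖ ^ 2) := fun n hn => by
    have hlog := log_natCast_le_two_mul_log_of_sqrt_lt (mem_Ioc.1 hn).1
    have : 0 ≤ Λ n := vonMangoldt_nonneg
    calc _ ≤ 2 * Real.log n * (Λ n * ‖f n‖ ^ 2) := by gcongr
      _ = 2 * (Λ n * Real.log n * ‖f n‖ ^ 2) := by ring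
      _ ≤ _ := by
          gcongr
          exact vonMangoldt_mul_log_le_selbergLambda n
  have hmass : ∑ n ∈ Ioc X.sqrt X, Λ n ≤ chebyshevConst * X :=
    (sum_le_sum_of_subset_of_nonneg hsubset fun _ _ _ => vonMangoldt_nonneg).trans
      (sum_vonMangoldt_le X)
  calc _ ≤ Real.log X * ((∑ n ∈ Ioc X.sqrt X, Λ n) * ∑ n ∈ Ioc X.sqrt X, Λ n * ‖f n‖ ^ 2) :=
        mul_le_mul_of_nonneg_left (norm_sum_vonMangoldt_mul_sq_le _ f)
          (Real.log_natCast_nonneg X)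
    _ = (∑ n ∈ Ioc X.sqrt X, Λ n) * ∑ n ∈ Ioc X.sqrt X, Real.log X * (Λ n * ‖f n‖ ^ 2) := by
        rw [mul_left_comm, mul_sum]
    _ ≤ chebyshevConst * X * ∑ n ∈ Ioc 0 X, 2 * (selbergLambda n * ‖f n‖ ^ 2) := by
        have hterm (n : ℕ) : 0 ≤ 2 * (selbergLambda n * ‖f n‖ ^ 2) := by
          have := selbergLambda_nonneg n
          positivity
        refine mul_le_mul hmass ((sum_le_sum hlarge).trans
          (sum_le_sum_of_subset_of_nonneg hsubset fun n _ _ => hterm n)) ?_ (by positivity)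
        refine sum_nonneg fun n _ => mul_nonneg (Real.log_natCast_nonneg X) ?_
        exact mul_nonneg vonMangoldt_nonneg (by positivity)
    _ = _ := by rw [← mul_sum]; ring

theorem eventually_norm_sum_bilinearSlice_le {α ε : ℝ} (hα : Irrational α) (hε : 0 < ε) :
    ∀ᶠ K : ℕ in atTop, ∀ M N : ℕ, K ≤ M → 2 * K * M ≤ N →
      ‖∑ m ∈ Ioc M (2 * M), bilinearSlice α N m‖ ≤ ε * N := by
  have hc := chebyshevConst_pos
  obtain ⟨y, hy⟩ := exists_nat_ge (4 * chebyshevConst ^ 2 / ε)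
  have hmoment := eventually_sum_selbergLambda_mul_norm_dyadicCoeff_sq_le hα
    (show 0 < ε ^ 2 / (8 * chebyshevConst) by positivity)
  filter_upwards [hmoment, eventually_ge_atTop (y ^ 2), eventually_ge_atTop 3]
    with K hmoment hKy hK M N hM hN
  have hM0 : 0 < M := by omega
  have hX : 2 * K ≤ N / M := (Nat.le_div_iff_mul_le hM0).2 hN
  specialize hmoment M N hM hN
  rw [sum_bilinearSlice α N hM0]
  have hXM : ((N / M : ℕ) : ℝ) * M ≤ N := by exact_mod_cast Nat.div_mul_le_self N M
  set X := N / M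
  have hlog := one_le_log_natCast (show 3 ≤ X by omega)
  have hsmall : ‖∑ n ∈ Ioc 0 X.sqrt, (Λ n : ℂ) * dyadicCoeff α N M n‖ ≤ ε / 2 * N := by
    have hyX : (y : ℝ) ≤ X.sqrt := by
      exact_mod_cast Nat.le_sqrt'.2 (by omega : y ^ 2 ≤ X)
    have hsqrt : (X.sqrt : ℝ) * X.sqrt ≤ X := by exact_mod_cast Nat.sqrt_le X
    have hconst : 4 * chebyshevConst ^ 2 ≤ ε * X.sqrt := (div_le_iff₀' hε).1 (hy.trans hyX)
    calc _ ≤ chebyshevConst * X.sqrt * (2 * chebyshevConst * M) :=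
          norm_sum_vonMangoldt_mul_le (by positivity) (norm_dyadicCoeff_le α N M) _
      _ = 4 * chebyshevConst ^ 2 * (X.sqrt * M) / 2 := by ring
      _ ≤ ε * X.sqrt * (X.sqrt * M) / 2 := by gcongr
      _ = ε / 2 * (X.sqrt * X.sqrt * M) := by ring
      _ ≤ ε / 2 * (X * M) := by gcongr
      _ ≤ _ := by gcongr
  have hlarge : ‖∑ n ∈ Ioc X.sqrt X, (Λ n : ℂ) * dyadicCoeff α N M n‖ ≤ ε / 2 * N := by
    refine le_trans (le_of_sq_le_sq ?_ (by positivity)) (show ε / 2 * (X * M) ≤ _ by gcongr)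
    refine le_of_mul_le_mul_left ?_ (zero_lt_one.trans_le hlog)
    calc _ ≤ 2 * chebyshevConst * X *
            (ε ^ 2 / (8 * chebyshevConst) * (X * Real.log X) * M ^ 2) :=
          (log_mul_norm_sum_vonMangoldt_mul_sq_le _ X).trans (by gcongr)
      _ = _ := by field_simp; ring
  rw [← sum_Ioc_consecutive _ (Nat.zero_le _) (Nat.sqrt_le_self X)]
  refine (norm_add_le _ _).trans ((add_le_add hsmall hlarge).trans_eq ?_)
  ring

end BilinearSums

section IrrationalPhase

open ArithmeticFunction
open scoped FourierTransform

theorem sum_Ioc_sum_vonMangoldt_mul_le (K N : ℕ) :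
    ∑ m ∈ Ioc 0 K, ∑ n ∈ Ioc 0 (N / m), Λ m * Λ n ≤
      chebyshevConst * N * (Real.log K + chebyshevConst) := by
  have hc := chebyshevConst_pos
  calc _ ≤ ∑ m ∈ Ioc 0 K, chebyshevConst * N * (Λ m / m) := by
        refine sum_le_sum fun m _ => ?_
        have : 0 ≤ Λ m := vonMangoldt_nonneg
        rw [← mul_sum]
        calc _ ≤ Λ m * (chebyshevConst * (N / m : ℕ)) := by
              gcongr
              exact sum_vonMangoldt_le _
          _ ≤ Λ m * (chebyshevConst * (N / m)) := by
              gcongr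
              exact Nat.cast_div_le
          _ = _ := by ring
    _ ≤ _ := by
        rw [← mul_sum]
        gcongr
        exact sum_vonMangoldt_div_le K

theorem norm_bilinearSlice_le (α : ℝ) (N m : ℕ) :
    ‖bilinearSlice α N m‖ ≤ ∑ n ∈ Ioc 0 (N / m), Λ m * Λ n := by
  refine norm_sum_le_of_le _ fun n _ => ?_
  rw [norm_mul, norm_ofReal_mul_fourierChar vonMangoldt_nonneg,
    Complex.norm_of_nonneg vonMangoldt_nonneg]

theorem norm_sum_Ioc_zero_bilinearSlice_le (α : ℝ) (K N : ℕ) :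
    ‖∑ m ∈ Ioc 0 K, bilinearSlice α N m‖ ≤
      chebyshevConst * N * (Real.log K + chebyshevConst) :=
  (norm_sum_le_of_le _ fun _ _ => norm_bilinearSlice_le α N _).trans
    (sum_Ioc_sum_vonMangoldt_mul_le K N)

theorem norm_sum_Ioc_bilinearSlice_le (α : ℝ) {K N W : ℕ} (h : N < K * W) :
    ‖∑ m ∈ Ioc W N, bilinearSlice α N m‖ ≤
      chebyshevConst * N * (Real.log K + chebyshevConst) := by
  refine (norm_sum_le_of_le _ fun _ _ => norm_bilinearSlice_le α N _).trans
    (le_trans ?_ (sum_Ioc_sum_vonMangoldt_mul_le K N))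
  -- `m n ≤ N < K W` and `W < m` force `n < K`, so exchanging the factors gives a short outer sum.
  rw [sum_comm' (s' := fun n => {m ∈ Ioc W N | m * n ≤ N}) (t' := Ioc 0 K)]
  · refine sum_le_sum fun n hn => ?_
    simp only [mul_comm (Λ _) (Λ n)]
    refine sum_le_sum_of_subset_of_nonneg (fun m hm => ?_)
      fun _ _ _ => mul_nonneg vonMangoldt_nonneg vonMangoldt_nonneg
    rw [mem_filter, mem_Ioc] at hm
    exact mem_Ioc.2 ⟨by omega, (Nat.le_div_iff_mul_le (mem_Ioc.1 hn).1).2 hm.2⟩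
  · intro m n
    simp only [mem_Ioc, mem_filter]
    refine ⟨fun ⟨hm, hn⟩ => ?_, fun ⟨⟨hm, hmn⟩, hn⟩ => ?_⟩
    · rw [Nat.le_div_iff_mul_le (by omega), mul_comm] at hn
      refine ⟨⟨hm, hn.2⟩, hn.1, ?_⟩
      by_contra! hKn
      have := Nat.mul_le_mul hKn.le hm.1.le
      rw [mul_comm n m] at this
      omega
    · rw [Nat.le_div_iff_mul_le (by omega), mul_comm]
      exact ⟨hm, hn.1, hmn⟩

theorem sum_Ioc_mul_two_pow {E : Type*} [AddCommMonoid E] (f : ℕ → E) (M I : ℕ) :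
    ∑ m ∈ Ioc M (M * 2 ^ I), f m =
      ∑ i ∈ range I, ∑ m ∈ Ioc (M * 2 ^ i) (2 * (M * 2 ^ i)), f m := by
  induction I with
  | zero => simp
  | succ I ih =>
    rw [sum_range_succ, ← ih, sum_Ioc_consecutive _ (Nat.le_mul_of_pos_right _ (by positivity))
      (by omega), pow_succ, ← mul_assoc, mul_comm 2]

theorem exists_mul_two_pow_le_lt {a N : ℕ} (ha : 0 < a) (haN : a ≤ N) :
    ∃ J : ℕ, a * 2 ^ J ≤ N ∧ N < a * 2 ^ (J + 1) ∧ (J : ℝ) ≤ 2 * Real.log N := by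
  have hq : N / a ≠ 0 := (Nat.div_pos haN ha).ne'
  have hle : a * 2 ^ Nat.log 2 (N / a) ≤ N := by
    rw [mul_comm]
    exact (Nat.le_div_iff_mul_le ha).1 (Nat.pow_log_le_self 2 hq)
  refine ⟨Nat.log 2 (N / a), hle, ?_, ?_⟩
  · rw [mul_comm]
    exact (Nat.div_lt_iff_lt_mul ha).1 (Nat.lt_pow_succ_log_self one_lt_two _)
  · have hlog := log_natCast_le_log_natCast ((Nat.le_mul_of_pos_left _ ha).trans hle)
    push_cast at hlog
    rw [Real.log_pow] at hlog
    nlinarith [Real.log_two_gt_d9, (Nat.cast_nonneg (Nat.log 2 (N / a)) : (0 : ℝ) ≤ _)]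

theorem eventually_norm_sum_Ioc_zero_bilinearSlice_le {α ε : ℝ} (hα : Irrational α)
    (hε : 0 < ε) :
    ∀ᶠ N : ℕ in atTop, ‖∑ m ∈ Ioc 0 N, bilinearSlice α N m‖ ≤ ε * (N * Real.log N) := by
  obtain ⟨K, hdyadic, hK⟩ := ((eventually_norm_sum_bilinearSlice_le hα
    (show 0 < ε / 4 by positivity)).and (eventually_gt_atTop 0)).exists
  set c := chebyshevConst * (Real.log K + chebyshevConst) +
    chebyshevConst * (Real.log (2 * K : ℕ) + chebyshevConst) with hc
  filter_upwards [tendsto_log_natCast_atTop.eventually_ge_atTop (4 * c / ε),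
    tendsto_log_natCast_atTop.eventually_ge_atTop 1, eventually_ge_atTop (2 * K * K)]
    with N hNc hN1 hNK
  obtain ⟨J, hJ, hJ', hJlog⟩ := exists_mul_two_pow_le_lt (by positivity) hNK
  set W := K * 2 ^ (J + 1) with hW
  have hKW : K ≤ W := Nat.le_mul_of_pos_right _ (by positivity)
  have hWN : W ≤ N := by
    calc W = 2 * 1 * K * 2 ^ J := by rw [hW]; ring
      _ ≤ 2 * K * K * 2 ^ J := by gcongr; omega
      _ ≤ N := hJ
  have hmiddle : ‖∑ m ∈ Ioc K W, bilinearSlice α N m‖ ≤ (J + 1) * (ε / 4 * N) := by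
    have hblock : ∀ i ∈ range (J + 1),
        ‖∑ m ∈ Ioc (K * 2 ^ i) (2 * (K * 2 ^ i)), bilinearSlice α N m‖ ≤ ε / 4 * N := by
      refine fun i hi => hdyadic _ N (Nat.le_mul_of_pos_right _ (by positivity)) ?_
      calc _ = 2 * K * K * 2 ^ i := by ring
        _ ≤ 2 * K * K * 2 ^ J := by gcongr; exacts [one_le_two, mem_range_succ_iff.1 hi]
        _ ≤ N := hJ
    rw [hW, sum_Ioc_mul_two_pow]
    exact (norm_sum_le_of_le _ hblock).trans_eq (by simp)
  have htail := norm_sum_Ioc_bilinearSlice_le α (hJ'.trans_eq (mul_assoc (2 * K) K _))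
  rw [← sum_Ioc_consecutive _ K.zero_le (hKW.trans hWN), ← sum_Ioc_consecutive _ hKW hWN]
  calc _ ≤ chebyshevConst * N * (Real.log K + chebyshevConst) + ((J + 1) * (ε / 4 * N) +
          chebyshevConst * N * (Real.log (2 * K : ℕ) + chebyshevConst)) :=
        norm_add_le_of_le (norm_sum_Ioc_zero_bilinearSlice_le α K N)
          (norm_add_le_of_le hmiddle htail)
    _ = c * N + (J + 1) * (ε / 4 * N) := by rw [hc]; ring
    _ ≤ Real.log N * ε / 4 * N + (2 * Real.log N + Real.log N) * (ε / 4 * N) := by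
        gcongr
        linarith [(div_le_iff₀ hε).1 hNc]
    _ = ε * (N * Real.log N) := by ring

theorem sum_vonMangoldt_mul_log_mul_fourierChar (α : ℝ) (N : ℕ) :
    ∑ n ∈ Ioc 0 N, ((Λ n * Real.log n : ℝ) : ℂ) * 𝐞 (n * α) =
      ∑ n ∈ Ioc 0 N, (selbergLambda n : ℂ) * 𝐞 (n * α) -
        ∑ m ∈ Ioc 0 N, bilinearSlice α N m := by
  simp only [bilinearSlice]
  rw [← sum_Ioc_sum_divisorsAntidiagonal
    fun m n => (Λ m : ℂ) * (Λ n * 𝐞 (n * (m * α))), ← sum_sub_distrib]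
  refine sum_congr rfl fun n _ => ?_
  have hconv : ∑ x ∈ n.divisorsAntidiagonal, (Λ x.1 : ℂ) * (Λ x.2 * 𝐞 (x.2 * (x.1 * α))) =
      (∑ x ∈ n.divisorsAntidiagonal, Λ x.1 * Λ x.2 : ℝ) * 𝐞 (n * α) := by
    push_cast
    rw [sum_mul]
    refine sum_congr rfl fun x hx => ?_
    rw [← (Nat.mem_divisorsAntidiagonal.1 hx).1]
    push_cast
    ring_nf
  rw [hconv, selbergLambda_apply]
  push_cast
  ring

theorem eventually_norm_sum_vonMangoldt_mul_log_mul_fourierChar_le {α ε : ℝ}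
    (hα : Irrational α) (hε : 0 < ε) :
    ∀ᶠ N : ℕ in atTop, ‖∑ n ∈ Ioc 0 N, ((Λ n * Real.log n : ℝ) : ℂ) * 𝐞 (n * α)‖ ≤
      ε * (N * Real.log N) := by
  filter_upwards [eventually_norm_sum_Ioc_zero_bilinearSlice_le hα (half_pos hε),
    eventually_norm_sum_selbergLambda_mul_fourierChar_le hα (half_pos hε)] with N hbil hselberg
  rw [sum_vonMangoldt_mul_log_mul_fourierChar]
  exact ((norm_sub_le _ _).trans (add_le_add hselberg hbil)).trans_eq (by ring)

theorem sum_vonMangoldt_mul_log_sub_log_le {k N : ℕ} (hk : 0 < k) :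
    ∑ n ∈ Ioc 0 N, Λ n * (Real.log N - Real.log n) ≤
      chebyshevConst * N * (Real.log N / k + Real.log k) := by
  have hc := chebyshevConst_pos
  have := Real.log_natCast_nonneg N
  have hlogk := Real.log_natCast_nonneg k
  have hsmall : ∑ n ∈ Ioc 0 (N / k), Λ n * (Real.log N - Real.log n) ≤
      chebyshevConst * (N / k) * Real.log N := by
    calc _ ≤ ∑ n ∈ Ioc 0 (N / k), Λ n * Real.log N := by
          refine sum_le_sum fun n _ => mul_le_mul_of_nonneg_left ?_ vonMangoldt_nonneg
          exact sub_le_self _ (Real.log_natCast_nonneg n)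
      _ ≤ chebyshevConst * (N / k : ℕ) * Real.log N := by
          rw [← sum_mul]
          gcongr
          exact sum_vonMangoldt_le _
      _ ≤ _ := by
          gcongr
          exact Nat.cast_div_le
  have hlarge : ∑ n ∈ Ioc (N / k) N, Λ n * (Real.log N - Real.log n) ≤
      chebyshevConst * N * Real.log k := by
    calc _ ≤ ∑ n ∈ Ioc (N / k) N, Λ n * Real.log k := by
          refine sum_le_sum fun n hn => mul_le_mul_of_nonneg_left ?_ vonMangoldt_nonneg
          have hNn : N ≤ k * n :=
            (Nat.lt_mul_of_div_lt (mem_Ioc.1 hn).1 hk).le.trans_eq (mul_comm _ _)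
          have hn0 : n ≠ 0 := fun h => by simp [h] at hn
          have hlog := log_natCast_le_log_natCast hNn
          rw [Nat.cast_mul, Real.log_mul (Nat.cast_ne_zero.2 hk.ne')
            (Nat.cast_ne_zero.2 hn0)] at hlog
          linarith
      _ ≤ ∑ n ∈ Ioc 0 N, Λ n * Real.log k :=
          sum_le_sum_of_subset_of_nonneg (Ioc_subset_Ioc_left (Nat.zero_le _))
            fun n _ _ => mul_nonneg vonMangoldt_nonneg hlogk
      _ ≤ _ := by
          rw [← sum_mul]
          gcongr
          exact sum_vonMangoldt_le N
  rw [← sum_Ioc_consecutive _ (Nat.zero_le _) (Nat.div_le_self N k)]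
  exact (add_le_add hsmall hlarge).trans_eq (by ring)

theorem eventually_sum_vonMangoldt_mul_log_sub_log_le {ε : ℝ} (hε : 0 < ε) :
    ∀ᶠ N : ℕ in atTop,
      ∑ n ∈ Ioc 0 N, Λ n * (Real.log N - Real.log n) ≤ ε * (N * Real.log N) := by
  have hc := chebyshevConst_pos
  obtain ⟨k, hk⟩ := exists_nat_gt (2 * chebyshevConst / ε)
  have hk0 : (0 : ℝ) < k := lt_trans (by positivity) hk
  filter_upwards [tendsto_log_natCast_atTop.eventually_ge_atTop
    (2 * chebyshevConst * Real.log k / ε)] with N hlog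
  have hlogN := Real.log_natCast_nonneg N
  calc _ ≤ chebyshevConst * N * (Real.log N / k + Real.log k) :=
        sum_vonMangoldt_mul_log_sub_log_le (by exact_mod_cast hk0)
    _ = N * (2 * chebyshevConst * Real.log N / k / 2 + 2 * chebyshevConst * Real.log k / 2) := by
        ring
    _ ≤ N * (ε * Real.log N / 2 + Real.log N * ε / 2) := by
        gcongr ?_ * (?_ / 2 + ?_ / 2)
        · rw [div_le_iff₀ hk0, mul_right_comm ε]
          exact mul_le_mul_of_nonneg_right ((div_lt_iff₀' hε).1 hk).le hlogN
        · exact (div_le_iff₀ hε).1 hlog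
    _ = ε * (N * Real.log N) := by ring

theorem log_mul_norm_sum_mul_fourierChar_le (α : ℝ) (N : ℕ) :
    Real.log N * ‖∑ n ∈ Ioc 0 N, (Λ n : ℂ) * 𝐞 (n * α)‖ ≤
      ∑ n ∈ Ioc 0 N, Λ n * (Real.log N - Real.log n) +
        ‖∑ n ∈ Ioc 0 N, ((Λ n * Real.log n : ℝ) : ℂ) * 𝐞 (n * α)‖ := by
  have hsplit : (Real.log N : ℂ) * ∑ n ∈ Ioc 0 N, (Λ n : ℂ) * 𝐞 (n * α) =
      ∑ n ∈ Ioc 0 N, ((Λ n * (Real.log N - Real.log n) : ℝ) : ℂ) * 𝐞 (n * α) +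
        ∑ n ∈ Ioc 0 N, ((Λ n * Real.log n : ℝ) : ℂ) * 𝐞 (n * α) := by
    rw [mul_sum, ← sum_add_distrib]
    refine sum_congr rfl fun n _ => ?_
    push_cast
    ring
  calc _ = ‖(Real.log N : ℂ) * ∑ n ∈ Ioc 0 N, (Λ n : ℂ) * 𝐞 (n * α)‖ := by
        rw [norm_mul, Complex.norm_of_nonneg (Real.log_natCast_nonneg N)]
    _ ≤ _ := by
        rw [hsplit]
        refine norm_add_le_of_le (norm_sum_le_of_le _ fun n hn => ?_) le_rfl
        have hlog := sub_nonneg.2 (log_natCast_le_log_natCast (mem_Ioc.1 hn).2)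
        exact (norm_ofReal_mul_fourierChar (mul_nonneg vonMangoldt_nonneg hlog) _).le

theorem tendsto_sum_vonMangoldt_mul_fourierChar_div_of_irrational {α : ℝ} (hα : Irrational α) :
    Tendsto (fun N : ℕ => (∑ n ∈ Ioc 0 N, (Λ n : ℂ) * 𝐞 (n * α)) / N) atTop (nhds 0) := by
  refine Metric.tendsto_nhds.2 fun ε hε => ?_
  filter_upwards [eventually_norm_sum_vonMangoldt_mul_log_mul_fourierChar_le hα
      (show 0 < ε / 4 by positivity),
    eventually_sum_vonMangoldt_mul_log_sub_log_le (show 0 < ε / 4 by positivity),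
    tendsto_log_natCast_atTop.eventually_gt_atTop 0, eventually_gt_atTop 0]
    with N hweighted herror hlog hN
  have hN' : (0 : ℝ) < N := by exact_mod_cast hN
  have hnorm : ‖∑ n ∈ Ioc 0 N, (Λ n : ℂ) * 𝐞 (n * α)‖ ≤ ε / 2 * N := by
    refine le_of_mul_le_mul_left ?_ hlog
    linarith [log_mul_norm_sum_mul_fourierChar_le α N]
  rw [dist_zero_right, norm_div, Complex.norm_natCast, div_lt_iff₀ hN']
  exact hnorm.trans_lt (mul_lt_mul_of_pos_right (half_lt_self hε) hN')

end IrrationalPhase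

section PrimeExponentialSums

open ArithmeticFunction Topology
open scoped FourierTransform

theorem tendsto_psi_sub_theta_div :
    Tendsto (fun N : ℕ => (Chebyshev.psi N - Chebyshev.theta N) / N) atTop (𝓝 0) := by
  obtain ⟨C, hC⟩ := Chebyshev.psi_sub_theta_le_mul_sqrt
  have hsqrt : Tendsto (fun N : ℕ => C * (√(N : ℝ))⁻¹) atTop (𝓝 0) := by
    simpa using ((Real.tendsto_sqrt_atTop.comp
      tendsto_natCast_atTop_atTop).inv_tendsto_atTop).const_mul C
  refine squeeze_zero (fun N => div_nonneg (sub_nonneg.2 (Chebyshev.theta_le_psi N))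
    N.cast_nonneg) (fun N => ?_) hsqrt
  calc _ ≤ C * √(N : ℝ) / N := by
        gcongr
        exact hC N
    _ = _ := by rw [mul_div_assoc, Real.sqrt_div_self', one_div]

theorem norm_sum_vonMangoldt_smul_sub_sum_log_smul_le {E : Type*} [NormedAddCommGroup E]
    [NormedSpace ℝ E] {f : ℕ → E} (hf : ∀ n, ‖f n‖ ≤ 1) (N : ℕ) :
    ‖∑ n ∈ Ioc 0 N, Λ n • f n - ∑ p ∈ N.primesLE, Real.log p • f p‖ ≤
      Chebyshev.psi N - Chebyshev.theta N := by
  have hsubset : N.primesLE ⊆ Ioc 0 N := fun p hp =>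
    mem_Ioc.2 ⟨(Nat.prime_of_mem_primesLE hp).pos, Nat.le_of_mem_primesLE hp⟩
  have hlog : ∀ p ∈ N.primesLE, Real.log p = Λ p := fun p hp =>
    (vonMangoldt_apply_prime (Nat.prime_of_mem_primesLE hp)).symm
  rw [sum_congr rfl fun p hp => congrArg (· • f p) (hlog p hp), ← sum_sdiff_eq_sub hsubset,
    Chebyshev.theta_eq_sum_primesLE_log, sum_congr rfl hlog, Chebyshev.psi, Nat.floor_natCast,
    ← sum_sdiff_eq_sub hsubset]
  refine norm_sum_le_of_le _ fun n _ => ?_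
  rw [norm_smul, Real.norm_of_nonneg vonMangoldt_nonneg]
  exact mul_le_of_le_one_right vonMangoldt_nonneg (hf n)

theorem tendsto_inv_smul_sum_log_smul {E : Type*} [NormedAddCommGroup E]
    [NormedSpace ℝ E] {f : ℕ → E} (hf : ∀ n, ‖f n‖ ≤ 1) {y : E}
    (h : Tendsto (fun N : ℕ => (N : ℝ)⁻¹ • ∑ n ∈ Ioc 0 N, Λ n • f n) atTop (𝓝 y)) :
    Tendsto (fun N : ℕ => (N : ℝ)⁻¹ • ∑ p ∈ N.primesLE, Real.log p • f p) atTop (𝓝 y) := by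
  have hdiff : Tendsto (fun N : ℕ => (N : ℝ)⁻¹ •
      (∑ n ∈ Ioc 0 N, Λ n • f n - ∑ p ∈ N.primesLE, Real.log p • f p)) atTop (𝓝 0) := by
    refine squeeze_zero_norm (fun N => ?_) tendsto_psi_sub_theta_div
    rw [norm_smul, norm_inv, Real.norm_natCast, div_eq_inv_mul]
    gcongr
    exact norm_sum_vonMangoldt_smul_sub_sum_log_smul_le hf N
  simpa only [smul_sub, sub_sub_cancel, sub_zero] using h.sub hdiff

theorem tendsto_theta_div : Tendsto (fun N : ℕ => Chebyshev.theta N / N) atTop (𝓝 1) := by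
  have hpnt := tendsto_sum_residueClass_div (q := 1) isUnit_one
  have hΛ : vonMangoldt.residueClass (1 : ZMod 1) = Λ := by
    simp [vonMangoldt.residueClass, Subsingleton.elim _ (1 : ZMod 1)]
  simp only [hΛ, Nat.totient_one, Nat.cast_one, inv_one] at hpnt
  have htheta := tendsto_inv_smul_sum_log_smul (f := fun _ => (1 : ℝ)) (by simp)
    (by simpa [div_eq_inv_mul] using hpnt)
  simpa [Chebyshev.theta_eq_sum_primesLE_log, div_eq_inv_mul] using htheta

theorem tendsto_sum_log_residueClass_div_of_isUnit {q : ℕ} [NeZero q] {b : ZMod q}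
    (hb : IsUnit b) :
    Tendsto (fun N : ℕ => (∑ p ∈ N.primesLE with ((p : ℕ) : ZMod q) = b, Real.log p) / N) atTop
      (𝓝 ((q.totient : ℝ)⁻¹)) := by
  have hprimes := tendsto_inv_smul_sum_log_smul
    (f := fun n => if (n : ZMod q) = b then (1 : ℝ) else 0) (fun n => by split_ifs <;> simp)
    (y := (q.totient : ℝ)⁻¹) (by
      simpa [div_eq_inv_mul, vonMangoldt.residueClass, Set.indicator_apply] using
        tendsto_sum_residueClass_div hb)
  simpa [div_eq_inv_mul, sum_filter] using hprimes

theorem sum_log_residueClass_le_of_not_isUnit {q : ℕ} [NeZero q] {b : ZMod q}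
    (hb : ¬IsUnit b) (N : ℕ) :
    ∑ p ∈ N.primesLE with ((p : ℕ) : ZMod q) = b, Real.log p ≤ Chebyshev.theta q := by
  rw [Chebyshev.theta_eq_sum_primesLE_log]
  refine sum_le_sum_of_subset_of_nonneg (fun p hp => ?_)
    fun p _ _ => Real.log_natCast_nonneg p
  obtain ⟨hpN, rfl⟩ := mem_filter.1 hp
  have hprime := Nat.prime_of_mem_primesLE hpN
  rw [ZMod.isUnit_iff_coprime, hprime.coprime_iff_not_dvd, not_not] at hb
  exact Nat.mem_primesLE.2 ⟨Nat.le_of_dvd (NeZero.pos q) hb, hprime⟩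

theorem exists_tendsto_sum_log_residueClass_div {q : ℕ} [NeZero q] (b : ZMod q) :
    ∃ c : ℝ, Tendsto (fun N : ℕ => (∑ p ∈ N.primesLE with ((p : ℕ) : ZMod q) = b, Real.log p) / N)
      atTop (𝓝 c) := by
  by_cases hb : IsUnit b
  · exact ⟨_, tendsto_sum_log_residueClass_div_of_isUnit hb⟩
  · refine ⟨0, squeeze_zero (fun N => ?_) (fun N => ?_)
      (tendsto_const_div_atTop_nhds_zero_nat (Chebyshev.theta q))⟩
    · exact div_nonneg (sum_nonneg fun p _ => Real.log_natCast_nonneg p) N.cast_nonneg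
    · gcongr
      exact sum_log_residueClass_le_of_not_isUnit hb N

theorem fourierChar_natCast_mul_ratCast (n : ℕ) (r : ℚ) [NeZero r.den] :
    𝐞 (n * (r : ℝ)) = ZMod.toCircle ((n * r.num : ℤ) : ZMod r.den) := by
  refine Circle.ext ?_
  rw [toCircle_intCast_eq_fourierChar, Rat.cast_def]
  push_cast
  ring_nf

theorem exists_tendsto_sum_log_mul_fourierChar_div_of_ratCast (r : ℚ) :
    ∃ P : ℂ, Tendsto (fun N : ℕ => (∑ p ∈ N.primesLE, (Real.log p : ℂ) * 𝐞 (p * (r : ℝ))) / N)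
      atTop (𝓝 P) := by
  have : NeZero r.den := ⟨r.den_nz⟩
  choose c hc using exists_tendsto_sum_log_residueClass_div (q := r.den)
  refine ⟨∑ b : ZMod r.den, (c b : ℂ) * ZMod.toCircle (b * (r.num : ZMod r.den)), ?_⟩
  refine (tendsto_finsetSum univ fun b _ => ((Complex.continuous_ofReal.tendsto _).comp
    (hc b)).mul_const _).congr fun N => ?_
  simp only [Function.comp_apply, Complex.ofReal_div, Complex.ofReal_natCast, Complex.ofReal_sum,
    div_mul_eq_mul_div, ← sum_div, sum_mul]
  rw [← sum_fiberwise N.primesLE (fun p => (p : ZMod r.den))]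
  refine congrArg (· / (N : ℂ)) (sum_congr rfl fun b _ => sum_congr rfl fun p hp => ?_)
  rw [fourierChar_natCast_mul_ratCast, ← (mem_filter.1 hp).2]
  push_cast
  rfl

theorem tendsto_sum_log_mul_fourierChar_div_of_irrational {α : ℝ} (hα : Irrational α) :
    Tendsto (fun N : ℕ => (∑ p ∈ N.primesLE, (Real.log p : ℂ) * 𝐞 (p * α)) / N) atTop
      (𝓝 0) := by
  have hprimes := tendsto_inv_smul_sum_log_smul (f := fun n => (𝐞 (n * α) : ℂ))
    (fun n => (Circle.norm_coe _).le) (y := 0) (by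
      simpa [div_eq_inv_mul] using
        tendsto_sum_vonMangoldt_mul_fourierChar_div_of_irrational hα)
  simpa [div_eq_inv_mul] using hprimes

theorem exists_tendsto_sum_log_mul_fourierChar_div (α : ℝ) :
    ∃ P : ℂ, Tendsto (fun N : ℕ => (∑ p ∈ N.primesLE, (Real.log p : ℂ) * 𝐞 (p * α)) / N)
      atTop (𝓝 P) := by
  by_cases hα : Irrational α
  · exact ⟨0, tendsto_sum_log_mul_fourierChar_div_of_irrational hα⟩
  · obtain ⟨r, rfl⟩ := exists_rat_of_not_irrational hα
    exact exists_tendsto_sum_log_mul_fourierChar_div_of_ratCast r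

end PrimeExponentialSums

section PrimeAverages

open Topology Polynomial
open scoped FourierTransform

theorem sum_range_primeCounting_nth {E : Type*} [AddCommMonoid E] (f : ℕ → E) (N : ℕ) :
    ∑ j ∈ range N.primeCounting, f (Nat.nth Nat.Prime j) = ∑ p ∈ N.primesLE, f p := by
  refine sum_nbij' (Nat.nth Nat.Prime) (Nat.count Nat.Prime) (fun j hj => ?_) (fun p hp => ?_)
    (fun j _ => Nat.primeCounting'_nth_eq j)
    (fun p hp => Nat.nth_count (Nat.prime_of_mem_primesLE hp)) fun _ _ => rfl
  · exact Nat.mem_primesLE.2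
      ⟨Nat.lt_succ_iff.1 (Nat.nth_lt_of_lt_count (mem_range.1 hj)), Nat.prime_nth_prime j⟩
  · exact mem_range.2 (Nat.count_strict_mono (Nat.prime_of_mem_primesLE hp)
      (Nat.lt_succ_iff.2 (Nat.le_of_mem_primesLE hp)))

theorem exists_tendsto_inv_smul_sum_log_smul_pow_apply {H : Type*} [NormedAddCommGroup H]
    [InnerProductSpace ℝ H] [CompleteSpace H] {T : H →L[ℝ] H} (hT : ‖T‖ ≤ 1) (x : H) :
    ∃ z, Tendsto (fun N : ℕ => (N : ℝ)⁻¹ • ∑ p ∈ N.primesLE, Real.log p • (T ^ p) x)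
      atTop (𝓝 z) := by
  set P : ℕ → ℝ[X] := fun N => (N : ℝ)⁻¹ • ∑ p ∈ N.primesLE, Real.log p • X ^ p with hP
  have haeval (N : ℕ) (z : Circle) : aeval (z : ℂ) (P N) =
      (∑ p ∈ N.primesLE, (Real.log p : ℂ) * z ^ p) / N := by
    simp [hP, div_eq_inv_mul]
  have hbound (N : ℕ) (z : Circle) : ‖aeval (z : ℂ) (P N)‖ ≤ Real.log 4 := by
    rw [haeval, norm_div, Complex.norm_natCast]
    refine div_le_of_le_mul₀ N.cast_nonneg (Real.log_nonneg (by norm_num)) ?_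
    refine le_trans (norm_sum_le_of_le _ fun p _ => ?_)
      ((Chebyshev.theta_eq_sum_primesLE_log N).symm.trans_le
        (Chebyshev.theta_le_log4_mul_x N.cast_nonneg))
    rw [norm_mul, norm_pow, Circle.norm_coe, one_pow, mul_one,
      Complex.norm_of_nonneg (Real.log_natCast_nonneg p)]
  have hlim (z : Circle) : ∃ c : ℂ, Tendsto (fun N => aeval (z : ℂ) (P N)) atTop (𝓝 c) := by
    obtain ⟨t, rfl⟩ := Circle.exp_surjective z
    have hexp : Circle.exp t = 𝐞 (t / (2 * Real.pi)) := by
      rw [Real.fourierChar_apply', mul_div_cancel₀ _ Real.two_pi_pos.ne']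
    simpa only [haeval, hexp, ← fourierChar_natCast_mul] using
      exists_tendsto_sum_log_mul_fourierChar_div (t / (2 * Real.pi))
  choose c hc using hlim
  obtain ⟨z, hz⟩ := exists_tendsto_aeval_apply hT x hbound hc
  exact ⟨z, by simpa [hP] using hz⟩

theorem tendsto_primeCounting_mul_log_sub_theta_div :
    Tendsto (fun N : ℕ => (N.primeCounting * Real.log N - Chebyshev.theta N) / N) atTop
      (𝓝 0) := by
  have hbigO := Chebyshev.primeCounting_sub_theta_div_log_isBigO.mul
    (Asymptotics.isBigO_refl (fun t : ℝ => Real.log t / t) atTop)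
  have hzero : Tendsto (fun t : ℝ => t / Real.log t ^ 2 * (Real.log t / t)) atTop (𝓝 0) := by
    refine Real.tendsto_log_atTop.inv_tendsto_atTop.congr' ?_
    filter_upwards [eventually_gt_atTop 1] with t ht
    have := Real.log_pos ht
    simp only [Pi.inv_apply]
    field_simp
  refine ((hbigO.trans_tendsto hzero).comp tendsto_natCast_atTop_atTop).congr' ?_
  filter_upwards [eventually_gt_atTop 1] with N hN
  have : 0 < Real.log N := Real.log_pos (by exact_mod_cast hN)
  simp only [Function.comp_apply, Nat.floor_natCast]
  field_simp

theorem tendsto_primeCounting_mul_log_div :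
    Tendsto (fun N : ℕ => N.primeCounting * Real.log N / N) atTop (𝓝 1) := by
  simpa [← add_div] using tendsto_primeCounting_mul_log_sub_theta_div.add tendsto_theta_div

variable {E : Type*} [NormedAddCommGroup E] [NormedSpace ℝ E] {f : ℕ → E} {C : ℝ} {z : E}

theorem norm_log_smul_sum_sub_sum_log_smul_le (hf : ∀ n, ‖f n‖ ≤ C) (N : ℕ) :
    ‖Real.log N • ∑ p ∈ N.primesLE, f p - ∑ p ∈ N.primesLE, Real.log p • f p‖ ≤
      (N.primeCounting * Real.log N - Chebyshev.theta N) * C := by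
  have hmass : N.primeCounting * Real.log N - Chebyshev.theta N =
      ∑ p ∈ N.primesLE, (Real.log N - Real.log p) := by
    rw [sum_sub_distrib, sum_const, nsmul_eq_mul, Nat.primesLE_card_eq_primeCounting,
      Chebyshev.theta_eq_sum_primesLE_log]
  rw [hmass, smul_sum, ← sum_sub_distrib, sum_mul]
  refine norm_sum_le_of_le _ fun p hp => ?_
  have hlog := sub_nonneg.2 (log_natCast_le_log_natCast (Nat.le_of_mem_primesLE hp))
  rw [← sub_smul, norm_smul, Real.norm_of_nonneg hlog]
  exact mul_le_mul_of_nonneg_left (hf p) hlog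

theorem tendsto_inv_primeCounting_smul_sum (hf : ∀ n, ‖f n‖ ≤ C)
    (h : Tendsto (fun N : ℕ => (N : ℝ)⁻¹ • ∑ p ∈ N.primesLE, Real.log p • f p) atTop (𝓝 z)) :
    Tendsto (fun N : ℕ => (N.primeCounting : ℝ)⁻¹ • ∑ p ∈ N.primesLE, f p) atTop (𝓝 z) := by
  have hdiff : Tendsto (fun N : ℕ => (N : ℝ)⁻¹ •
      (Real.log N • ∑ p ∈ N.primesLE, f p - ∑ p ∈ N.primesLE, Real.log p • f p))
      atTop (𝓝 0) := by
    refine squeeze_zero_norm (fun N => ?_) (by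
      simpa using tendsto_primeCounting_mul_log_sub_theta_div.mul_const C)
    rw [norm_smul, norm_inv, Real.norm_natCast, div_mul_eq_mul_div, div_eq_inv_mul]
    gcongr
    exact norm_log_smul_sum_sub_sum_log_smul_le hf N
  have hquot := (tendsto_primeCounting_mul_log_div.inv₀ one_ne_zero).smul (hdiff.add h)
  rw [inv_one, one_smul, zero_add] at hquot
  refine hquot.congr' ?_
  filter_upwards [eventually_gt_atTop 1] with N hN
  have : 0 < Real.log N := Real.log_pos (by exact_mod_cast hN)
  rw [← smul_add, sub_add_cancel, smul_smul, smul_smul]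
  congr 1
  field_simp

theorem tendsto_inv_smul_sum_nth_prime (hf : ∀ n, ‖f n‖ ≤ C)
    (h : Tendsto (fun N : ℕ => (N : ℝ)⁻¹ • ∑ p ∈ N.primesLE, Real.log p • f p) atTop (𝓝 z)) :
    Tendsto (fun n : ℕ => (n : ℝ)⁻¹ • ∑ j ∈ range n, f (Nat.nth Nat.Prime j)) atTop (𝓝 z) := by
  have hnth : Tendsto (fun n => Nat.nth Nat.Prime n - 1) atTop atTop :=
    tendsto_atTop_mono (fun n => by have := Nat.add_two_le_nth_prime n; grind) tendsto_id
  refine ((tendsto_inv_primeCounting_smul_sum hf h).comp hnth).congr fun n => ?_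
  rw [Function.comp_apply, ← sum_range_primeCounting_nth, Nat.primeCounting_sub_one,
    Nat.primeCounting'_nth_eq]

theorem norm_pow_apply_le {T : E →L[ℝ] E} (hT : ‖T‖ ≤ 1) (x : E) (n : ℕ) :
    ‖(T ^ n) x‖ ≤ ‖x‖ := by
  induction n with
  | zero => simp
  | succ n ih =>
    rw [pow_succ', mul_apply_eq_comp]
    simpa using T.le_of_opNorm_le_of_le hT ih

end PrimeAverages

/-- Let `T` be a contraction on a real Hilbert space `H`. Then for every
`x ∈ H`, both `(1/n) ∑_{j=1}^n T^{p_j} x` and `(1/N) ∑_{j=1}^{π(N)} (log p_j) T^{p_j} x`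
converge in norm. -/
theorem stmt14 {H : Type*} [NormedAddCommGroup H] [InnerProductSpace ℝ H] [CompleteSpace H]
    (T : H →L[ℝ] H) (hT : ‖T‖ ≤ 1) (x : H) :
    (∃ y : H, Tendsto (fun n : ℕ =>
        (n : ℝ)⁻¹ • ∑ j ∈ range n, (T ^ (Nat.nth Nat.Prime j)) x) atTop (nhds y)) ∧
    (∃ z : H, Tendsto (fun N : ℕ =>
        (N : ℝ)⁻¹ • ∑ j ∈ range (Nat.primeCounting N),
          Real.log (Nat.nth Nat.Prime j) • (T ^ (Nat.nth Nat.Prime j)) x) atTop (nhds z)) := by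
  obtain ⟨z, hz⟩ := exists_tendsto_inv_smul_sum_log_smul_pow_apply hT x
  have horbit : ∀ n, ‖(T ^ n) x‖ ≤ ‖x‖ := norm_pow_apply_le hT x
  refine ⟨⟨z, tendsto_inv_smul_sum_nth_prime (f := fun n => (T ^ n) x) horbit hz⟩,
    ⟨z, hz.congr fun N => ?_⟩⟩
  rw [sum_range_primeCounting_nth fun p => Real.log p • (T ^ p) x]
end

section
/- Let (a_n)_{n≥1} be a complex sequence such that sup_n (1/n)∑_{k=1}^n |a_k| φ(|a_k|) < ∞ for some strictly increasing function φ: ℝ⁺ → ℝ⁺ with φ(x) → ∞. Then limsup_{N→∞} (1/N)∑_{n=1}^N |a_n − Λ'(n)| ≥ 1/2. -/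
open Filter Finset

/-- The modified von Mangoldt function `Λ'(n) = log n` if `n` is prime, `0` otherwise. -/
noncomputable def LambdaPrime (n : ℕ) : ℝ := if n.Prime then Real.log n else 0

/-!
A sequence that is uniformly integrable on average has vanishing mean along a set of density zero,
so on such a set it cannot absorb the mass of another sequence `b` living there: the means of
`‖a n - b n‖` are asymptotically at least those of `‖b n‖`. Take `b = Λ'`, which lives on the
primes and has means `θ(N) / N`, and use Chebyshev's lower bound `θ(N) ≥ (log 2 - o(1)) N`,
noting that `log 2 > 1 / 2`.
-/

open scoped NNReal Topology

section CesaroMean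

/-- The arithmetic mean of `f 1, …, f N`, with the value `0` at `N = 0`; it is the averaging
operator behind density and uniform integrability below. -/
noncomputable def cesaroMean (f : ℕ → ℝ) (N : ℕ) : ℝ := (N : ℝ)⁻¹ * ∑ n ∈ Icc 1 N, f n

lemma cesaroMean_mono {f g : ℕ → ℝ} (h : f ≤ g) : cesaroMean f ≤ cesaroMean g := fun N ↦
  mul_le_mul_of_nonneg_left (sum_le_sum fun n _ ↦ h n) (by positivity)

lemma cesaroMean_nonneg {f : ℕ → ℝ} (h : 0 ≤ f) : 0 ≤ cesaroMean f := fun N ↦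
  mul_nonneg (by positivity) (sum_nonneg fun n _ ↦ h n)

lemma cesaroMean_add (f g : ℕ → ℝ) : cesaroMean (f + g) = cesaroMean f + cesaroMean g := by
  ext N
  simp only [cesaroMean, Pi.add_apply, sum_add_distrib, mul_add]

lemma cesaroMean_const_smul (c : ℝ) (f : ℕ → ℝ) : cesaroMean (c • f) = c • cesaroMean f := by
  ext N
  simp only [cesaroMean, Pi.smul_apply, smul_eq_mul, ← mul_sum, mul_left_comm]

lemma cesaroMean_one {N : ℕ} (hN : N ≠ 0) : cesaroMean 1 N = 1 := by
  simp [cesaroMean, hN]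

/-- `S ⊆ ℕ` has natural density `d`: the proportion of elements of `S` among `1, …, N` tends
to `d`. It is used with `d = 0`, to express that the primes are sparse. -/
def HasNaturalDensity (S : Set ℕ) (d : ℝ) : Prop :=
  Tendsto (cesaroMean (S.indicator 1)) atTop (𝓝 d)

end CesaroMean

section UniformIntegrability

variable {E : Type*} [SeminormedAddCommGroup E] {a b : ℕ → E}

/-- Uniform integrability of `a` with respect to the uniform measures on `{1, …, N}`: the part of
the mean of `‖a n‖` coming from large values is small, uniformly in all large `N`. It is what the
growth condition on `∑ ‖a n‖ φ(‖a n‖)` provides. -/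
def CesaroUniformlyIntegrable (a : ℕ → E) : Prop :=
  ∀ ε > 0, ∃ K : ℝ≥0, ∀ᶠ N in atTop, cesaroMean ({n | K ≤ ‖a n‖}.indicator (‖a ·‖)) N ≤ ε

theorem cesaroUniformlyIntegrable_of_tendsto_atTop {φ : ℝ → ℝ} (hφ_nonneg : ∀ t, 0 ≤ t → 0 ≤ φ t)
    (hφ_top : Tendsto φ atTop atTop)
    (ha : IsBoundedUnder (· ≤ ·) atTop (cesaroMean fun n ↦ ‖a n‖ * φ ‖a n‖)) :
    CesaroUniformlyIntegrable a := by
  intro ε hε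
  obtain ⟨s, hs⟩ := ha.eventually_le
  set M : ℝ := (|s| + 1) / ε
  have hM : 0 < M := by positivity
  obtain ⟨K, hK⟩ : ∃ K : ℝ≥0, ∀ t : ℝ, K ≤ t → M ≤ φ t :=
    let ⟨K, hK⟩ := eventually_atTop.1 (hφ_top.eventually_ge_atTop M)
    ⟨K.toNNReal, fun t ht ↦ hK t ((Real.le_coe_toNNReal K).trans ht)⟩
  refine ⟨K, ?_⟩
  have h_tail : M • {n | K ≤ ‖a n‖}.indicator (‖a ·‖) ≤ fun n ↦ ‖a n‖ * φ ‖a n‖ := by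
    intro n
    by_cases hn : K ≤ ‖a n‖
    · simpa [hn, mul_comm M] using mul_le_mul_of_nonneg_left (hK _ hn) (norm_nonneg (a n))
    · simpa [hn] using mul_nonneg (norm_nonneg (a n)) (hφ_nonneg _ (norm_nonneg (a n)))
  have h_mean := cesaroMean_mono h_tail
  rw [cesaroMean_const_smul] at h_mean
  filter_upwards [hs] with N hN
  refine le_of_mul_le_mul_left ?_ hM
  calc M * cesaroMean _ N ≤ s := (h_mean N).trans hN
    _ ≤ |s| + 1 := by linarith [le_abs_self s]
    _ = M * ε := (div_mul_cancel₀ _ hε.ne').symm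

lemma indicator_norm_le_smul_add (a : ℕ → E) (S : Set ℕ) (K : ℝ≥0) :
    S.indicator (‖a ·‖) ≤ (K : ℝ) • S.indicator 1 + {n | K ≤ ‖a n‖}.indicator (‖a ·‖) := by
  intro n
  by_cases hS : n ∈ S <;> by_cases hK : K ≤ ‖a n‖ <;> simp [hS, hK, le_of_not_ge]

lemma cesaroMean_indicator_norm_le (a : ℕ → E) (S : Set ℕ) (K : ℝ≥0) (N : ℕ) :
    cesaroMean (S.indicator (‖a ·‖)) N ≤
      K * cesaroMean (S.indicator 1) N + cesaroMean ({n | K ≤ ‖a n‖}.indicator (‖a ·‖)) N := by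
  have h_mean := cesaroMean_mono (indicator_norm_le_smul_add a S K)
  rw [cesaroMean_add, cesaroMean_const_smul] at h_mean
  exact h_mean N

theorem CesaroUniformlyIntegrable.isBoundedUnder_cesaroMean_norm
    (ha : CesaroUniformlyIntegrable a) :
    IsBoundedUnder (· ≤ ·) atTop (cesaroMean (‖a ·‖)) := by
  obtain ⟨K, hK⟩ := ha 1 one_pos
  refine isBoundedUnder_of_eventually_le (a := K + 1) ?_
  filter_upwards [hK, eventually_ne_atTop 0] with N hN hN0
  have h := cesaroMean_indicator_norm_le a Set.univ K N
  simp only [Set.indicator_univ, cesaroMean_one hN0, mul_one] at h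
  linarith

theorem CesaroUniformlyIntegrable.tendsto_cesaroMean_indicator_norm
    (ha : CesaroUniformlyIntegrable a) {S : Set ℕ} (hS : HasNaturalDensity S 0) :
    Tendsto (cesaroMean (S.indicator (‖a ·‖))) atTop (𝓝 0) := by
  have h_nonneg : 0 ≤ cesaroMean (S.indicator (‖a ·‖)) :=
    cesaroMean_nonneg (Set.indicator_nonneg fun n _ ↦ norm_nonneg (a n))
  refine tendsto_order.2 ⟨fun c hc ↦ .of_forall fun N ↦ hc.trans_le (h_nonneg N), fun ε hε ↦ ?_⟩
  obtain ⟨K, hK⟩ := ha (ε / 2) (half_pos hε)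
  have h_small : Tendsto (fun N ↦ K * cesaroMean (S.indicator 1) N) atTop (𝓝 0) := by
    simpa using hS.const_mul (K : ℝ)
  filter_upwards [hK, h_small.eventually_lt_const (half_pos hε)] with N h_tail h_sparse
  linarith [cesaroMean_indicator_norm_le a S K N]

lemma norm_le_norm_sub_add_indicator_support (a b : ℕ → E) :
    (‖b ·‖) ≤ (fun n ↦ ‖a n - b n‖) + b.support.indicator (‖a ·‖) := by
  intro n
  by_cases hn : b n = 0
  · simp [hn]
  · simpa [hn, norm_sub_rev (a n), add_comm] using norm_le_norm_add_norm_sub (a n) (b n)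

theorem CesaroUniformlyIntegrable.eventually_cesaroMean_norm_lt
    (ha : CesaroUniformlyIntegrable a) (hb : HasNaturalDensity b.support 0) {ε : ℝ} (hε : 0 < ε) :
    ∀ᶠ N in atTop, cesaroMean (‖b ·‖) N < cesaroMean (fun n ↦ ‖a n - b n‖) N + ε := by
  have h_mean := cesaroMean_mono (norm_le_norm_sub_add_indicator_support a b)
  rw [cesaroMean_add] at h_mean
  filter_upwards [(ha.tendsto_cesaroMean_indicator_norm hb).eventually_lt_const hε] with N hN
  exact (h_mean N).trans_lt (add_lt_add_right hN _)

lemma isBoundedUnder_cesaroMean_norm_sub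
    (ha : IsBoundedUnder (· ≤ ·) atTop (cesaroMean (‖a ·‖)))
    (hb : IsBoundedUnder (· ≤ ·) atTop (cesaroMean (‖b ·‖))) :
    IsBoundedUnder (· ≤ ·) atTop (cesaroMean fun n ↦ ‖a n - b n‖) := by
  have h_mean := cesaroMean_mono fun n ↦ norm_sub_le (a n) (b n)
  exact (isBoundedUnder_le_add ha hb).mono_le
    (.of_forall fun N ↦ (h_mean N).trans_eq (congrFun (cesaroMean_add (‖a ·‖) (‖b ·‖)) N))

end UniformIntegrability

section Primes

lemma cesaroMean_indicator_prime (N : ℕ) :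
    cesaroMean ({p | p.Prime}.indicator 1) N = N.primeCounting / N := by
  simp [cesaroMean, Set.indicator_apply, ← Nat.primesLE_card_eq_primeCounting,
    Nat.primesLE_eq_filter_Icc_one, div_eq_inv_mul]

theorem hasNaturalDensity_prime : HasNaturalDensity {p | p.Prime} 0 := by
  have h_bound : Tendsto (fun N : ℕ ↦ (Real.log 4 + 1) / Real.log N) atTop (𝓝 0) :=
    (Real.tendsto_log_atTop.comp tendsto_natCast_atTop_atTop).const_div_atTop _
  have h_chebyshev := tendsto_natCast_atTop_atTop.eventually
    (Chebyshev.eventually_primeCounting_le one_pos)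
  refine squeeze_zero' (.of_forall fun N ↦ ?_) ?_ h_bound
  · rw [cesaroMean_indicator_prime]
    positivity
  · filter_upwards [h_chebyshev, eventually_gt_atTop 0] with N hN hN0
    rw [cesaroMean_indicator_prime, div_le_iff₀ (Nat.cast_pos.2 hN0), div_mul_eq_mul_div]
    simpa only [Nat.floor_natCast] using hN

theorem eventually_lt_theta_div {c : ℝ} (hc : c < Real.log 2) :
    ∀ᶠ N : ℕ in atTop, c < Chebyshev.theta N / N := by
  have h_log : Tendsto (fun N : ℕ ↦ Real.log (N + 1) / N) atTop (𝓝 0) := by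
    simpa [Function.comp_def] using
      (Real.tendsto_pow_log_div_mul_add_atTop 1 (-1) 1 one_ne_zero).comp
        (tendsto_atTop_add_const_right _ 1 tendsto_natCast_atTop_atTop)
  have h_log_sqrt : Tendsto (fun N : ℕ ↦ Real.log N / √N) atTop (𝓝 0) := by
    simpa only [Function.comp_def, Real.sqrt_eq_rpow] using
      (isLittleO_log_rpow_atTop one_half_pos).tendsto_div_nhds_zero.comp
        tendsto_natCast_atTop_atTop
  have h_lower : Tendsto
      (fun N : ℕ ↦ Real.log 2 - Real.log (N + 1) / N - 2 * (Real.log N / √N)) atTop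
      (𝓝 (Real.log 2)) := by
    simpa using (h_log.const_sub (Real.log 2)).sub (h_log_sqrt.const_mul 2)
  filter_upwards [h_lower.eventually_const_lt hc, eventually_gt_atTop 0] with N hcN hN
  have hN' : (0 : ℝ) < N := Nat.cast_pos.2 hN
  refine hcN.trans_le ?_
  calc Real.log 2 - Real.log (N + 1) / N - 2 * (Real.log N / √N)
      = (N * Real.log 2 - Real.log (N + 1) - 2 * √N * Real.log N) / N := by
        rw [sub_div, sub_div, mul_div_cancel_left₀ _ hN'.ne', mul_right_comm, mul_div_assoc _ √_,
          Real.sqrt_div_self']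
        ring
    _ ≤ Chebyshev.theta N / N := by gcongr; exact Chebyshev.theta_ge N

lemma cesaroMean_lambdaPrime (N : ℕ) : cesaroMean LambdaPrime N = Chebyshev.theta N / N := by
  rw [Chebyshev.theta, Nat.floor_natCast, sum_filter, div_eq_inv_mul]
  rfl

lemma support_lambdaPrime : LambdaPrime.support = {p | p.Prime} := by
  ext n
  simp only [LambdaPrime, Function.mem_support, Set.mem_ofPred_eq, ne_eq, ite_eq_right_iff,
    not_forall, exists_prop, and_iff_left_iff_imp]
  exact fun hn ↦ (Real.log_pos (Nat.one_lt_cast.2 hn.one_lt)).ne'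

lemma lambdaPrime_nonneg (n : ℕ) : 0 ≤ LambdaPrime n :=
  ite_nonneg (Real.log_natCast_nonneg n) le_rfl

variable {𝕜 : Type*} [RCLike 𝕜] {a : ℕ → 𝕜}

lemma cesaroMean_norm_lambdaPrime (N : ℕ) :
    cesaroMean (fun n ↦ ‖(LambdaPrime n : 𝕜)‖) N = Chebyshev.theta N / N := by
  simp only [RCLike.norm_of_nonneg (lambdaPrime_nonneg _), cesaroMean_lambdaPrime]

theorem CesaroUniformlyIntegrable.isBoundedUnder_cesaroMean_norm_sub_lambdaPrime
    (ha : CesaroUniformlyIntegrable a) :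
    IsBoundedUnder (· ≤ ·) atTop (cesaroMean fun n ↦ ‖a n - (LambdaPrime n : 𝕜)‖) := by
  refine isBoundedUnder_cesaroMean_norm_sub ha.isBoundedUnder_cesaroMean_norm
    (isBoundedUnder_of ⟨Real.log 4, fun N ↦ ?_⟩)
  rw [cesaroMean_norm_lambdaPrime]
  exact div_le_of_le_mul₀ N.cast_nonneg (Real.log_nonneg (by norm_num))
    (Chebyshev.theta_le_log4_mul_x N.cast_nonneg)

theorem stmt16_general (ha : CesaroUniformlyIntegrable a) {c : ℝ} (hc : c < Real.log 2) :
    ∀ᶠ N in atTop, c < cesaroMean (fun n ↦ ‖a n - (LambdaPrime n : 𝕜)‖) N := by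
  have h_support : HasNaturalDensity (fun n ↦ (LambdaPrime n : 𝕜)).support 0 := by
    simpa only [Function.support, ne_eq, RCLike.ofReal_eq_zero, ← support_lambdaPrime]
      using hasNaturalDensity_prime
  obtain ⟨d, hcd, hd⟩ := exists_between hc
  filter_upwards [ha.eventually_cesaroMean_norm_lt h_support (sub_pos.2 hcd),
    eventually_lt_theta_div hd] with N h_compare h_theta
  rw [cesaroMean_norm_lambdaPrime] at h_compare
  linarith

end Primes

/-- Let `(a_n)` be a complex sequence with
`sup_n (1/n) ∑_{k=1}^n |a_k| φ(|a_k|) < ∞` for some strictly increasing `φ : ℝ⁺ → ℝ⁺` with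
`φ(x) → ∞`. Then `limsup_N (1/N) ∑_{n=1}^N |a_n − Λ'(n)| ≥ 1/2`. -/
theorem stmt16 (a : ℕ → ℂ) (φ : ℝ → ℝ) (hφ_pos : ∀ t, 0 ≤ t → 0 ≤ φ t)
    (hφ_mono : StrictMonoOn φ (Set.Ici (0 : ℝ)))
    (hφ_top : Tendsto φ atTop atTop)
    (ha : ∃ s : ℝ, ∀ n : ℕ, (n : ℝ)⁻¹ * ∑ k ∈ Icc 1 n, ‖a k‖ * φ ‖a k‖ ≤ s) :
    (1 : ℝ) / 2 ≤
      Filter.limsup (fun N : ℕ => (N : ℝ)⁻¹ * ∑ n ∈ Icc 1 N, ‖a n - (LambdaPrime n : ℂ)‖)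
        atTop := by
  have h_ui := cesaroUniformlyIntegrable_of_tendsto_atTop hφ_pos hφ_top (isBoundedUnder_of ha)
  have h_half : (1 : ℝ) / 2 < Real.log 2 := by linarith [Real.log_two_gt_d9]
  exact le_limsup_of_frequently_le ((stmt16_general h_ui h_half).mono fun _ ↦ le_of_lt).frequently
    h_ui.isBoundedUnder_cesaroMean_norm_sub_lambdaPrime
end

section
/- Let 1 ≤ r < ∞ and let (f_n)_{n≥1} be a sequence in a normed space X. Suppose there exist L > 0 and δ ∈ (0,1) such that for every strictly increasing sequence (n_j) of positive integers and every K ∈ ℕ one has ∑_{j=1}^K ‖f_{n_{j+1}} − f_{n_j}‖^r ≤ L·K^δ. Then (f_n) is a Cauchy sequence in X. -/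
open Filter Finset

open scoped Asymptotics

/-!
If `u` is not Cauchy, some subsequence makes only jumps of size at least a fixed `ε > 0`. The sum of
the first `K` of its jumps, each raised to the power `r`, is then at least `K * ε ^ r`, so it grows
linearly in `K`; a bound `L * K ^ δ` with `δ < 1` excludes this.
-/

theorem exists_strictMono_le_dist_of_not_cauchySeq {X : Type*} [PseudoMetricSpace X] {u : ℕ → X}
    (hu : ¬ CauchySeq u) (a : ℕ) :
    ∃ ε > 0, ∃ n : ℕ → ℕ, StrictMono n ∧ n 0 = a ∧ ∀ j, ε ≤ dist (u (n (j + 1))) (u (n j)) := by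
  simp only [Metric.cauchySeq_iff', not_forall, not_exists, not_lt] at hu
  obtain ⟨ε, hε, hfar⟩ := hu
  choose next le_next far_next using hfar
  have lt_next (N : ℕ) : N < next N := (le_next N).lt_of_ne fun heq => by
    have := far_next N
    rw [← heq, dist_self] at this
    exact this.not_gt hε
  refine ⟨ε, hε, fun j => next^[j] a, strictMono_nat_of_lt_succ fun j => ?_, rfl, fun j => ?_⟩
  · simpa only [Function.iterate_succ_apply'] using lt_next (next^[j] a)
  · simpa only [Function.iterate_succ_apply'] using far_next (next^[j] a)

theorem not_isLittleO_sum_range_of_le {s : ℕ → ℝ} {c : ℝ} (hc : 0 < c) (hs : ∀ j, c ≤ s j) :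
    ¬ (fun K => ∑ j ∈ range K, s j) =o[atTop] fun K => (K : ℝ) := by
  have hlinear : (fun K : ℕ => (K : ℝ)) =O[atTop] fun K => ∑ j ∈ range K, s j := by
    refine .of_bound c⁻¹ (.of_forall fun K => ?_)
    have hsum : K * c ≤ ∑ j ∈ range K, s j := by
      simpa using card_nsmul_le_sum (range K) s c fun j _ => hs j
    rw [Real.norm_natCast, inv_mul_eq_div, le_div_iff₀ hc]
    exact hsum.trans (le_abs_self _)
  exact hlinear.not_isLittleO (frequently_atTop.mpr fun N => ⟨N + 1, by simp, by positivity⟩)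

theorem isLittleO_rpow_rpow_atTop_of_lt {a b : ℝ} (hab : a < b) :
    (fun x : ℝ => x ^ a) =o[atTop] fun x => x ^ b := by
  refine Asymptotics.isLittleO_of_tendsto' ?_ ?_
  · filter_upwards [eventually_gt_atTop 0] with x hx hxb
    exact absurd hxb (Real.rpow_pos_of_pos hx b).ne'
  · refine (tendsto_rpow_neg_atTop (sub_pos.mpr hab)).congr' ?_
    filter_upwards [eventually_gt_atTop 0] with x hx
    rw [neg_sub, Real.rpow_sub hx]

theorem isLittleO_natCast_of_le_mul_rpow {s : ℕ → ℝ} {L δ : ℝ} (hδ : δ < 1) (hs : ∀ K, 0 ≤ s K)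
    (hle : ∀ K, s K ≤ L * (K : ℝ) ^ δ) : s =o[atTop] fun K => (K : ℝ) := by
  have hbound : s =O[atTop] fun K : ℕ => (K : ℝ) ^ δ := by
    refine .of_bound L (.of_forall fun K => ?_)
    rw [Real.norm_of_nonneg (hs K), Real.norm_of_nonneg (by positivity)]
    exact hle K
  have hrpow : (fun x : ℝ => x ^ δ) =o[atTop] fun x => x := by
    simpa only [Real.rpow_one] using isLittleO_rpow_rpow_atTop_of_lt hδ
  exact hbound.trans_isLittleO (hrpow.comp_tendsto tendsto_natCast_atTop_atTop)

theorem stmt18_general {X : Type*} [PseudoMetricSpace X] {r : ℝ} (hr : 0 < r) {u : ℕ → X}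
    (h : ∀ n : ℕ → ℕ, StrictMono n → (∀ j, 0 < n j) →
      (fun K => ∑ j ∈ range K, dist (u (n (j + 1))) (u (n j)) ^ r) =o[atTop] fun K => (K : ℝ)) :
    CauchySeq u := by
  by_contra hu
  obtain ⟨ε, hε, n, hn, hn₀, hjump⟩ := exists_strictMono_le_dist_of_not_cauchySeq hu 1
  have hpos (j : ℕ) : 0 < n j := (hn₀ ▸ zero_lt_one).trans_le (hn.monotone j.zero_le)
  have hjump_rpow (j : ℕ) : ε ^ r ≤ dist (u (n (j + 1))) (u (n j)) ^ r :=
    Real.rpow_le_rpow hε.le (hjump j) hr.le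
  exact not_isLittleO_sum_range_of_le (Real.rpow_pos_of_pos hε r) hjump_rpow (h n hn hpos)

/-- Let `1 ≤ r < ∞` and let `(f_n)` be a sequence in a normed space `X`.
If there exist `L > 0` and `δ ∈ (0,1)` such that for every strictly increasing sequence
`(n_j)` of positive integers and every `K`, `∑_{j=1}^K ‖f_{n_{j+1}} − f_{n_j}‖^r ≤ L K^δ`,
then `(f_n)` is Cauchy. -/
theorem stmt18 {𝕜 : Type*} [RCLike 𝕜] {X : Type*} [NormedAddCommGroup X] [NormedSpace 𝕜 X]
    (r : ℝ) (hr : 1 ≤ r) (f : ℕ → X) (L : ℝ) (hL : 0 < L) (δ : ℝ) (hδ : δ ∈ Set.Ioo (0:ℝ) 1)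
    (h : ∀ n : ℕ → ℕ, StrictMono n → (∀ j, 0 < n j) →
      ∀ K : ℕ, ∑ j ∈ range K, ‖f (n (j + 1)) - f (n j)‖ ^ r ≤ L * (K : ℝ) ^ δ) :
    CauchySeq f :=
  stmt18_general (zero_lt_one.trans_le hr) fun n hn hpos =>
    isLittleO_natCast_of_le_mul_rpow hδ.2 (fun K => by positivity)
      (by simpa only [dist_eq_norm] using h n hn hpos)
end
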